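/- Let A and B be free groups and G = A ∗_U B an amalgamated product where U is a maximal cyclic subgroup of both A and B. If r ∈ G is not conjugate to any element of A and not conjugate to any element of B, then the canonical maps A → G/⟨⟨r⟩⟩ and B → G/⟨⟨r⟩⟩ are injective. -/

import Mathlib

/-- `G` together with `iA`, `iB` is the amalgamated product `A ∗_{⟨p⟩=⟨q⟩} B`:
the maps are injective, `p` and `q` are identified, and `G` satisfies the universal
property of the pushout. -/
def IsAmalgam {A B G : Type} [Group A] [Group B] [Group G]
    (iA : A →* G) (iB : B →* G) (p : A) (q : B) : Prop :=
  Function.Injective iA ∧ Function.Injective iB ∧ iA p = iB q ∧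
  ∀ (K : Type) [Group K] (fA : A →* K) (fB : B →* K), fA p = fB q →
    ∃! f : G →* K, f.comp iA = fA ∧ f.comp iB = fB

/-- A subgroup is maximal cyclic if it is infinite cyclic and not properly contained
in any cyclic subgroup. -/
def IsMaximalCyclic {H : Type} [Group H] (U : Subgroup H) : Prop :=
  (∃ g : H, U = Subgroup.zpowers g) ∧ (U : Set H).Infinite ∧
  ∀ g : H, U ≤ Subgroup.zpowers g → U = Subgroup.zpowers g

/-!
A shortest word for a conjugate of `r` is a closed walk in the tree with two vertices `A` and `B`,
without backtracking inside the amalgamated subgroup. More generally, let `r` be such a closed walk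
in a tree of free groups amalgamated along isolated cyclic subgroups, and let `w` be a leaf of the
subtree which it visits; then the subgroup generated by the remaining vertex groups embeds into the
quotient by `r`. The proof is by induction on the length of the walk and, for fixed length,
downwards on the number of visited vertices. Suppose some nonzero character of the vertex group
`B w` vanishes on the edge group and on the product of the letters of the walk at `w`. Unfolding the
tree along this character yields a closed walk visiting more vertices, and the group is recovered
from the unfolded one as an HNN extension, as in Magnus' proof of the Freiheitssatz. Otherwise the
relation `r = 1` and the amalgamation form a nonsingular system of two equations over the remaining
group, and such systems are solvable over groups all of whose nontrivial subgroups map nontrivially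
to `ℚ`, by linear algebra in wreath products. The amalgam `G` is such a group, because a shortest
word with a fixed point in a coset space gives a nonzero cocycle on a stabilizer.
-/

namespace Freiheitssatz

universe u v w

section PartialHom

variable {G : Type u} {P : Type v} [Group G] [Group P] {L M : Subgroup G} {f g : G → P} {x y : G}

/-- `f` restricts to a group homomorphism on the subgroup `L`. Partially defined homomorphisms are
encoded as total functions whose values outside `L` are irrelevant, because one and the same map is
constantly restricted to smaller subgroups. -/
def HomOn (L : Subgroup G) (f : G → P) : Prop :=
  ∀ x ∈ L, ∀ y ∈ L, f (x * y) = f x * f y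

/-- The partial homomorphism `f` has trivial kernel on the subgroup `L`. -/
def TrivialKerOn (L : Subgroup G) (f : G → P) : Prop :=
  ∀ x ∈ L, f x = 1 → x = 1

theorem HomOn.mono (hf : HomOn L f) (hM : M ≤ L) : HomOn M f :=
  fun x hx y hy => hf x (hM hx) y (hM hy)

theorem TrivialKerOn.mono (hf : TrivialKerOn L f) (hM : M ≤ L) : TrivialKerOn M f :=
  fun x hx => hf x (hM hx)

theorem HomOn.map_one (hf : HomOn L f) : f 1 = 1 := by
  simpa using hf 1 L.one_mem 1 L.one_mem

theorem HomOn.map_inv (hf : HomOn L f) (hx : x ∈ L) : f x⁻¹ = (f x)⁻¹ := by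
  rw [eq_inv_iff_mul_eq_one, ← hf _ (L.inv_mem hx) _ hx, inv_mul_cancel, hf.map_one]

/-- The restriction of a partial homomorphism to its domain, as a bundled homomorphism. -/
def HomOn.toMonoidHom (hf : HomOn L f) : L →* P :=
  MonoidHom.mk' (fun x => f x) fun x y => hf x x.2 y y.2

@[simp]
theorem HomOn.toMonoidHom_apply (hf : HomOn L f) (x : L) : hf.toMonoidHom x = f x :=
  rfl

theorem HomOn.map_list_prod (hf : HomOn L f) (l : List G) (hl : ∀ x ∈ l, x ∈ L) :
    f l.prod = (l.map f).prod := by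
  lift l to List L using hl
  simpa [List.map_map, Function.comp_def] using _root_.map_list_prod hf.toMonoidHom l

theorem HomOn.injOn (hf : HomOn L f) (hk : TrivialKerOn L f) : Set.InjOn f L := by
  intro x hx y hy hxy
  rw [← mul_inv_eq_one]
  refine hk _ (L.mul_mem hx (L.inv_mem hy)) ?_
  rw [hf x hx _ (L.inv_mem hy), hf.map_inv hy, hxy, mul_inv_cancel]

theorem HomOn.comp {Q : Type*} [Group Q] (hf : HomOn L f) (i : P →* Q) :
    HomOn L fun x => i (f x) := fun x hx y hy => by
  simp only [hf x hx y hy, map_mul]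

theorem HomOn.eqOn_closure {W : Set G} (hf : HomOn (Subgroup.closure W) f)
    (hg : HomOn (Subgroup.closure W) g) (h : Set.EqOn f g W) :
    Set.EqOn f g (Subgroup.closure W) := by
  intro x hx
  induction hx using Subgroup.closure_induction with
  | mem x hx => exact h hx
  | one => rw [hf.map_one, hg.map_one]
  | mul x y hx hy hfx hfy => rw [hf x hx y hy, hg x hx y hy, hfx, hfy]
  | inv x hx hfx => rw [hf.map_inv hx, hg.map_inv hx, hfx]

open Classical in
/-- The partial homomorphism with domain `L` given by `φ : L →* P`; its junk value is `1`. -/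
noncomputable def extendByOne (φ : L →* P) : G → P :=
  fun x => if h : x ∈ L then φ ⟨x, h⟩ else 1

theorem extendByOne_apply (φ : L →* P) (hx : x ∈ L) : extendByOne φ x = φ ⟨x, hx⟩ :=
  dif_pos hx

theorem homOn_extendByOne (φ : L →* P) : HomOn L (extendByOne φ) := by
  intro x hx y hy
  rw [extendByOne_apply φ hx, extendByOne_apply φ hy, extendByOne_apply φ (L.mul_mem hx hy),
    ← map_mul]
  rfl

theorem extendByOne_comp {Q : Type*} [Group Q] (f : P →* Q) (φ : L →* P) (x : G) :
    extendByOne (f.comp φ) x = f (extendByOne φ x) := by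
  unfold extendByOne
  split_ifs
  · rfl
  · exact (map_one f).symm

end PartialHom

section RatIndicable

variable {H : Type u} {K : Type v} [Group H] [Group K]

/-- Every nontrivial subgroup has a nontrivial homomorphism to `ℚ`. For finitely generated
subgroups this is indicability, so the notion is a strengthening of local indicability. -/
def RatIndicable (H : Type u) [Group H] : Prop :=
  ∀ S : Subgroup H, S ≠ ⊥ → ∃ φ : S →* Multiplicative ℚ, φ ≠ 1

theorem RatIndicable.exists_hom_ne_one (hK : RatIndicable K) {f : H →* K} (hf : f ≠ 1) :
    ∃ φ : H →* Multiplicative ℚ, φ ≠ 1 := by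
  obtain ⟨φ, hφ⟩ := hK f.range (MonoidHom.range_eq_bot_iff.not.2 hf)
  refine ⟨φ.comp f.rangeRestrict, fun h => hφ ?_⟩
  rwa [← MonoidHom.one_comp f.rangeRestrict,
    MonoidHom.cancel_right f.rangeRestrict_surjective] at h

theorem RatIndicable.of_separating
    (h : ∀ x : H, x ≠ 1 → ∃ (K : Type v) (_ : Group K) (f : H →* K), RatIndicable K ∧ f x ≠ 1) :
    RatIndicable H := by
  intro S hS
  obtain ⟨⟨x, hx⟩, hx1⟩ := Subgroup.ne_bot_iff_exists_ne_one.1 hS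
  obtain ⟨K, _, f, hK, hf⟩ := h x fun e => hx1 (Subtype.ext e)
  exact hK.exists_hom_ne_one (f := f.comp S.subtype) fun e => hf (DFunLike.congr_fun e ⟨x, hx⟩)

theorem RatIndicable.of_injective (hK : RatIndicable K) (f : H →* K)
    (hf : Function.Injective f) : RatIndicable H :=
  .of_separating fun _ hx => ⟨K, _, f, hK, (map_ne_one_iff f hf).2 hx⟩

theorem ratIndicable_multiplicative_rat : RatIndicable (Multiplicative ℚ) := by
  refine fun S hS => ⟨S.subtype, fun h => hS ((Subgroup.eq_bot_iff_forall S).2 fun x hx => ?_)⟩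
  exact DFunLike.congr_fun h ⟨x, hx⟩

theorem RatIndicable.prod {H K : Type u} [Group H] [Group K] (hH : RatIndicable H)
    (hK : RatIndicable K) : RatIndicable (H × K) := by
  refine .of_separating fun x hx => ?_
  by_cases h : x.1 = 1
  · exact ⟨K, _, .snd H K, hK, fun h' => hx (Prod.ext h h')⟩
  · exact ⟨H, _, .fst H K, hH, h⟩

theorem ratIndicable_of_isFreeGroup [IsFreeGroup H] : RatIndicable H := by
  intro S hS
  let e := IsFreeGroup.toFreeGroup S
  obtain ⟨s⟩ : Nonempty (IsFreeGroup.Generators S) := by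
    by_contra hE
    rw [not_nonempty_iff] at hE
    have := e.toEquiv.subsingleton
    exact hS (Subgroup.eq_bot_of_subsingleton S)
  refine ⟨(FreeGroup.lift fun _ => Multiplicative.ofAdd (1 : ℚ)).comp e.toMonoidHom, fun h => ?_⟩
  simpa using DFunLike.congr_fun h (e.symm (FreeGroup.of s))

theorem RatIndicable.zpow_ne_one (hH : RatIndicable H) {x : H} (hx : x ≠ 1) {n : ℤ}
    (hn : n ≠ 0) : x ^ n ≠ 1 := by
  intro h
  obtain ⟨φ, hφ⟩ := hH (Subgroup.zpowers x) (Subgroup.zpowers_ne_bot.2 hx)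
  let x' : Subgroup.zpowers x := ⟨x, Subgroup.mem_zpowers x⟩
  have hφx : φ x' = 1 := by
    rw [← IsMulTorsionFree.zpow_eq_one_iff_left hn, ← map_zpow,
      show x' ^ n = 1 from Subtype.ext h, map_one]
  refine hφ (MonoidHom.ext ?_)
  rintro ⟨_, k, rfl⟩
  rw [show (⟨x ^ k, _⟩ : Subgroup.zpowers x) = x' ^ k from rfl, map_zpow, hφx, one_zpow,
    MonoidHom.one_apply]

end RatIndicable

section Wreath

variable {Γ : Type u} {X : Type v} {M : Type w} [Group Γ] [MulAction Γ X] [Group M]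

/-- The unrestricted permutational wreath product: functions on the `Γ`-set `X` with values in `M`,
extended by `Γ` acting through translation of the argument. -/
abbrev WreathProduct (M : Type w) (X : Type v) (Γ : Type u) [Group M] [Group Γ] [MulAction Γ X] :
    Type _ :=
  (X → M) ⋊[mulAutArrow] Γ

theorem RatIndicable.wreathProduct (hΓ : RatIndicable Γ) (hM : RatIndicable M) :
    RatIndicable (WreathProduct M X Γ) := by
  intro S hS
  obtain ⟨⟨a, ha⟩, ha1⟩ := Subgroup.ne_bot_iff_exists_ne_one.1 hS
  by_cases hright : ∀ b ∈ S, b.right = 1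
  · obtain ⟨x, hx⟩ : ∃ x, a.left x ≠ 1 := by
      by_contra! h
      exact ha1 (Subtype.ext (SemidirectProduct.ext (funext h) (hright a ha)))
    refine hM.exists_hom_ne_one (f := MonoidHom.mk' (fun b : S => b.1.left x) ?_)
      fun h => hx (DFunLike.congr_fun h ⟨a, ha⟩)
    rintro ⟨b, hb⟩ ⟨c, hc⟩
    simp [hright b hb]
  · push Not at hright
    obtain ⟨b, hb, hb1⟩ := hright
    exact hΓ.exists_hom_ne_one (f := SemidirectProduct.rightHom.comp S.subtype)
      fun h => hb1 (DFunLike.congr_fun h (⟨b, hb⟩ : S))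

/-- The cocycle is built from the section `τ` of `p`, normalised by `τ 1 = 1` so that the
coordinate at `1` restricts to `η`. -/
theorem exists_hom_wreathProduct_of_ker {H : Type v} [Group H] (p : H →* Γ) (η : p.ker →* M) :
    ∃ f : H →* WreathProduct M Γ Γ, (∀ h, (f h).right = p h) ∧
      ∀ h : p.ker, (f h).left 1 = η h := by
  classical
  let τ : Γ → H := Function.update (Function.invFun p) 1 1
  have hτ : ∀ γ ∈ p.range, p (τ γ) = γ := by
    intro γ hγ
    by_cases h1 : γ = 1
    · simp [τ, h1]
    · simpa [τ, h1] using Function.invFun_eq hγ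
  have hmul (h : H) (γ : Γ) : (p h)⁻¹ * γ ∈ p.range ↔ γ ∈ p.range :=
    p.range.mul_mem_cancel_left (p.range.inv_mem ⟨h, rfl⟩)
  have hker (h : H) (γ : Γ) (hγ : γ ∈ p.range) : (τ γ)⁻¹ * h * τ ((p h)⁻¹ * γ) ∈ p.ker := by
    rw [MonoidHom.mem_ker, map_mul, map_mul, map_inv, hτ _ hγ, hτ _ ((hmul h γ).2 hγ)]
    group
  let d (h : H) (γ : Γ) : M := if hγ : γ ∈ p.range then η ⟨_, hker h γ hγ⟩ else 1
  have hd (h k : H) (γ : Γ) : d (h * k) γ = d h γ * d k ((p h)⁻¹ * γ) := by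
    by_cases hγ : γ ∈ p.range
    · simp only [d, hγ, (hmul h γ).2 hγ, dif_pos, ← map_mul]
      congr 1
      exact Subtype.ext (by simp [mul_assoc])
    · simp only [d, hγ, (hmul h γ).not.2 hγ, dif_neg, not_false_eq_true, mul_one]
  refine ⟨MonoidHom.mk' (fun h => ⟨d h, p h⟩) fun h k =>
    SemidirectProduct.ext (funext (hd h k)) (map_mul p h k), fun _ => rfl, ?_⟩
  rintro ⟨h, hh⟩
  have h1 : τ 1 = 1 := Function.update_self ..
  have hh' : p h = 1 := hh
  change d h 1 = _
  simp only [d, p.range.one_mem, dif_pos]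
  congr 1
  exact Subtype.ext (by simp [h1, hh'])

end Wreath

section IndicableResidual

variable {P : Type u} [Group P] {K : Set P}

/-- The smallest normal subgroup containing `K` whose quotient is rationally indicable, encoded as
the elements killed by every homomorphism to a rationally indicable group that kills `K`. -/
def indicableResidual (K : Set P) : Subgroup P where
  carrier := {x | ∀ (E : Type u) (_ : Group E) (f : P →* E), RatIndicable E →
    (∀ k ∈ K, f k = 1) → f x = 1}
  one_mem' _ _ f _ _ := map_one f
  mul_mem' ha hb E _ f hE hf := by rw [map_mul, ha E _ f hE hf, hb E _ f hE hf, one_mul]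
  inv_mem' ha E _ f hE hf := by rw [map_inv, ha E _ f hE hf, inv_one]

instance : (indicableResidual K).Normal where
  conj_mem n hn g E _ f hE hf := by simp [hn E _ f hE hf]

theorem subset_indicableResidual : K ⊆ indicableResidual K :=
  fun k hk _ _ _ _ hf => hf k hk

theorem ratIndicable_quotient_indicableResidual (K : Set P) :
    RatIndicable (P ⧸ indicableResidual K) := by
  refine RatIndicable.of_separating.{u, u} fun x hx => ?_
  obtain ⟨x, rfl⟩ := QuotientGroup.mk_surjective x
  by_contra! h
  refine hx ((QuotientGroup.eq_one_iff x).2 fun E _ f hE hf => ?_)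
  exact h E _ (QuotientGroup.lift _ f fun y hy => hy E _ f hE hf) hE

end IndicableResidual

section InvariantSystem

variable {Γ : Type u} {X : Type v} {Y : Type w} [Group Γ] [MulAction Γ Y]

/-- The rational functions on a `Γ`-set that are invariant under the subgroup `Δ`. -/
def invariantFunctions (Δ : Subgroup Γ) (X : Type v) [MulAction Γ X] : Submodule ℚ (X → ℚ) where
  carrier := {c | ∀ δ ∈ Δ, ∀ x, c (δ • x) = c x}
  add_mem' hc hd δ hδ x := by simp only [Pi.add_apply, hc δ hδ, hd δ hδ]
  zero_mem' _ _ _ := rfl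
  smul_mem' a c hc δ hδ x := by simp only [Pi.smul_apply, hc δ hδ]

/-- The right-hand sides `c` for which the equations `T d = c` indexed by `F` have a common
`Δ`-invariant solution `d`. -/
def solvableRHS (T : (Y → ℚ) →ₗ[ℚ] (X → ℚ)) (Δ : Subgroup Γ) (F : Set X) :
    Submodule ℚ (X → ℚ) where
  carrier := {c | ∃ d ∈ invariantFunctions Δ Y, F.EqOn (T d) c}
  add_mem' := by
    rintro c c' ⟨d, hd, h⟩ ⟨d', hd', h'⟩
    refine ⟨d + d', add_mem hd hd', fun x hx => ?_⟩
    simp only [map_add, Pi.add_apply, h hx, h' hx]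
  zero_mem' := ⟨0, zero_mem _, fun x _ => by rw [map_zero]⟩
  smul_mem' := by
    rintro a c ⟨d, hd, h⟩
    refine ⟨a • d, Submodule.smul_mem _ a hd, fun x hx => ?_⟩
    simp only [map_smul, Pi.smul_apply, h hx]

theorem solvableRHS_congr {T : (Y → ℚ) →ₗ[ℚ] (X → ℚ)} {Δ : Subgroup Γ} {F : Set X} {c c' : X → ℚ}
    (hc : c ∈ solvableRHS T Δ F) (h : F.EqOn c c') : c' ∈ solvableRHS T Δ F :=
  let ⟨d, hd, hdc⟩ := hc
  ⟨d, hd, hdc.trans h⟩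

variable [MulAction Γ X]

theorem exists_height {M : Type*} [AddGroup M] [IsCancelSMul Γ X] (φ : Γ →* Multiplicative M) :
    ∃ h : X → M, ∀ (g : Γ) x, h (g • x) = (φ g).toAdd + h x := by
  have hrep (x : X) : ∃ g : Γ, g • (⟦x⟧ : MulAction.orbitRel.Quotient Γ X).out = x :=
    (MulAction.orbitRel Γ X).symm (Quotient.mk_out x)
  choose a ha using hrep
  refine ⟨fun x => (φ (a x)).toAdd, fun g x => ?_⟩
  have hq : (⟦g • x⟧ : MulAction.orbitRel.Quotient Γ X) = ⟦x⟧ := Quotient.sound ⟨g, rfl⟩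
  have h := ha (g • x)
  rw [hq] at h
  simp only [IsCancelSMul.right_cancel _ (g * a x) _ (h.trans (by rw [mul_smul, ha])), map_mul,
    toAdd_mul]

theorem exists_invariant_eqOn (Δ : Subgroup Γ) {A : Set X} {c : X → ℚ}
    (hc : ∀ x ∈ A, ∀ δ ∈ Δ, δ • x ∈ A → c (δ • x) = c x) :
    ∃ c' ∈ invariantFunctions Δ X, A.EqOn c' c := by
  classical
  let c' (x : X) : ℚ := if e : ∃ δ ∈ Δ, δ • x ∈ A then c (e.choose • x) else 0
  have hc' (x : X) (δ : Γ) (hδ : δ ∈ Δ) (hx : δ • x ∈ A) : c' x = c (δ • x) := by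
    have e : ∃ δ ∈ Δ, δ • x ∈ A := ⟨δ, hδ, hx⟩
    have h := hc (δ • x) hx (e.choose * δ⁻¹) (Δ.mul_mem e.choose_spec.1 (Δ.inv_mem hδ))
    simp only [mul_smul, inv_smul_smul] at h
    simp only [c', dif_pos e, h e.choose_spec.2]
  refine ⟨c', fun δ hδ x => ?_, fun x hx => by simpa using hc' x 1 Δ.one_mem (by simpa using hx)⟩
  by_cases e : ∃ s ∈ Δ, s • δ • x ∈ A
  · obtain ⟨s, hs, hx⟩ := e
    rw [hc' _ s hs hx, hc' x (s * δ) (Δ.mul_mem hs hδ) (by rwa [mul_smul]), mul_smul]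
  · have e' : ¬ ∃ s ∈ Δ, s • x ∈ A := fun ⟨s, hs, hx⟩ =>
      e ⟨s * δ⁻¹, Δ.mul_mem hs (Δ.inv_mem hδ), by rwa [mul_smul, inv_smul_smul]⟩
    simp only [c', dif_neg e, dif_neg e']

section Height

variable {T : (Y → ℚ) →ₗ[ℚ] (X → ℚ)} {S : Subgroup Γ} {φ : S →* Multiplicative ℚ}
  {hX : X → ℚ} {hY : Y → ℚ} {F : Set X}

/-- If `d` solves `T d = c`, then `T (d * hY ^ n)` is `c * hX ^ n` up to terms of lower degree in
`hX` with `S`-invariant coefficients: expand `hY = hX x + (hY - hX x)` binomially. -/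
theorem mul_pow_mem_solvableRHS (hT : ∀ (g : Γ) d x, T (fun y => d (g • y)) x = T d (g • x))
    (hhX : ∀ (s : S) x, hX ((s : Γ) • x) = (φ s).toAdd + hX x)
    (hhY : ∀ (s : S) y, hY ((s : Γ) • y) = (φ s).toAdd + hY y)
    (hS : invariantFunctions S X ≤ solvableRHS T S F) (n : ℕ) {c : X → ℚ}
    (hc : c ∈ invariantFunctions S X) :
    (fun x => c x * hX x ^ n) ∈ solvableRHS T (φ.ker.map S.subtype) F := by
  induction n using Nat.strong_induction_on generalizing c with
  | _ n ih =>
  obtain ⟨d, hd, hdc⟩ := hS hc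
  let b (m : ℕ) (x : X) : ℚ := T (fun y => d y * (hY y - hX x) ^ m) x * n.choose m
  have hb (m : ℕ) : b m ∈ invariantFunctions S X := by
    intro s hs x
    simp only [b, ← hT, hd s hs, hhX ⟨s, hs⟩, hhY ⟨s, hs⟩, add_sub_add_left_eq_sub]
  have hexpand (x : X) : T (fun y => d y * hY y ^ n) x =
      (∑ m ∈ Finset.range n, b (m + 1) x * hX x ^ (n - (m + 1))) + T d x * hX x ^ n := by
    have h : (fun y => d y * hY y ^ n) = ∑ m ∈ Finset.range (n + 1),
        ((n.choose m : ℚ) * hX x ^ (n - m)) • fun y => d y * (hY y - hX x) ^ m := by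
      funext y
      rw [← sub_add_cancel (hY y) (hX x), add_pow, Finset.mul_sum, Finset.sum_apply]
      refine Finset.sum_congr rfl fun m _ => ?_
      simp only [Pi.smul_apply, smul_eq_mul]
      ring
    rw [h, map_sum, Finset.sum_apply, Finset.sum_range_succ']
    simp only [map_smul, Pi.smul_apply, smul_eq_mul, pow_zero, mul_one, Nat.choose_zero_right, b]
    simp only [Nat.cast_one, one_mul, tsub_zero]
    refine congrArg₂ _ (Finset.sum_congr rfl fun m _ => by ring) (mul_comm _ _)
  have hlower : ∑ m ∈ Finset.range n, (fun x => b (m + 1) x * hX x ^ (n - (m + 1))) ∈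
      solvableRHS T (φ.ker.map S.subtype) F :=
    sum_mem fun m hm => ih _ (by have := Finset.mem_range.1 hm; omega) (hb (m + 1))
  have htop : T (fun y => d y * hY y ^ n) ∈ solvableRHS T (φ.ker.map S.subtype) F := by
    refine ⟨_, ?_, fun _ _ => rfl⟩
    rintro _ ⟨s, hs, rfl⟩ y
    have hs1 : φ s = 1 := hs
    simp [hhY, hd s s.2, hs1]
  refine solvableRHS_congr (sub_mem htop hlower) fun x hx => ?_
  simp only [Pi.sub_apply, Finset.sum_apply, hexpand, hdc hx, add_sub_cancel_left]

theorem mul_eval_mem_solvableRHS (hT : ∀ (g : Γ) d x, T (fun y => d (g • y)) x = T d (g • x))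
    (hhX : ∀ (s : S) x, hX ((s : Γ) • x) = (φ s).toAdd + hX x)
    (hhY : ∀ (s : S) y, hY ((s : Γ) • y) = (φ s).toAdd + hY y)
    (hS : invariantFunctions S X ≤ solvableRHS T S F) (p : Polynomial ℚ) {c : X → ℚ}
    (hc : c ∈ invariantFunctions S X) :
    (fun x => c x * p.eval (hX x)) ∈ solvableRHS T (φ.ker.map S.subtype) F := by
  have h := Submodule.sum_mem _ fun n (_ : n ∈ Finset.range (p.natDegree + 1)) =>
    Submodule.smul_mem _ (p.coeff n) (mul_pow_mem_solvableRHS hT hhX hhY hS n hc)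
  convert h using 1
  funext x
  rw [Polynomial.eval_eq_sum_range, Finset.mul_sum, Finset.sum_apply]
  refine Finset.sum_congr rfl fun n _ => ?_
  simp only [Pi.smul_apply, smul_eq_mul]
  ring

/-- Split a function by the values of the height on `F`; each piece is a `φ.ker`-invariant function
that extends to an `S`-invariant one, and Lagrange polynomials in the height reassemble them. -/
theorem invariantFunctions_ker_le_solvableRHS [IsCancelSMul Γ X] [IsCancelSMul Γ Y]
    (hT : ∀ (g : Γ) d x, T (fun y => d (g • y)) x = T d (g • x)) (φ : S →* Multiplicative ℚ)
    (hF : F.Finite) (hS : invariantFunctions S X ≤ solvableRHS T S F) :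
    invariantFunctions (φ.ker.map S.subtype) X ≤ solvableRHS T (φ.ker.map S.subtype) F := by
  intro c hc
  obtain ⟨hX, hhX⟩ := exists_height (X := X) φ
  obtain ⟨hY, hhY⟩ := exists_height (X := Y) φ
  have hlevel (i : ℚ) : ∃ c' ∈ invariantFunctions S X, Set.EqOn c' c {x | hX x = i} := by
    refine exists_invariant_eqOn S fun x hx s hs hsx => hc s ⟨⟨s, hs⟩, ?_, rfl⟩ x
    have h : hX (s • x) = hX x := Eq.trans hsx (Eq.symm hx)
    rwa [show s • x = (⟨s, hs⟩ : S) • x from rfl, hhX, add_eq_right, toAdd_eq_zero] at h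
  choose c' hc' hcc' using hlevel
  let I : Finset ℚ := hF.toFinset.image hX
  have h := Submodule.sum_mem _ fun i (_ : i ∈ I) => 
    mul_eval_mem_solvableRHS hT hhX hhY hS (Lagrange.basis I id i) (hc' i)
  refine solvableRHS_congr h fun x hx => ?_
  have hxI : hX x ∈ I := Finset.mem_image_of_mem _ (hF.mem_toFinset.2 hx)
  rw [Finset.sum_apply, Finset.sum_eq_single_of_mem _ hxI fun i _ hi => ?_]
  · have h1 := Lagrange.eval_basis_self (v := id) Function.injective_id.injOn hxI
    simp only [id] at h1
    rw [h1, mul_one, hcc' _ rfl]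
  · have h0 := Lagrange.eval_basis_of_ne (v := id) hi hxI
    simp only [id] at h0
    rw [h0, mul_zero]

end Height

/-- Replace `Δ` by the kernel of a character of the subgroup generated by those elements of `Δ` that
move some point of `F` into `F`; this destroys one such coincidence at a time. -/
theorem mem_solvableRHS_bot [IsCancelSMul Γ X] [IsCancelSMul Γ Y] (hΓ : RatIndicable Γ)
    {T : (Y → ℚ) →ₗ[ℚ] (X → ℚ)} (hT : ∀ (g : Γ) d x, T (fun y => d (g • y)) x = T d (g • x))
    {F : Set X} (hF : F.Finite) (Δ : Subgroup Γ)
    (hΔ : invariantFunctions Δ X ≤ solvableRHS T Δ F) (c : X → ℚ) :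
    c ∈ solvableRHS T (⊥ : Subgroup Γ) F := by
  induction hn : {z ∈ F ×ˢ F | ∃ δ ∈ Δ, z.2 = δ • z.1}.ncard using Nat.strong_induction_on
    generalizing Δ with
  | _ n ih =>
  let W : Set Γ := {δ | δ ∈ Δ ∧ ∃ x ∈ F, δ • x ∈ F}
  let S := Subgroup.closure W
  have hSΔ : S ≤ Δ := (Subgroup.closure_le _).2 fun δ hδ => hδ.1
  have hS : invariantFunctions S X ≤ solvableRHS T S F := by
    intro c hc
    obtain ⟨c', hc', hcc'⟩ := exists_invariant_eqOn Δ (A := F) fun x hx δ hδ hδx =>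
      hc δ (Subgroup.subset_closure ⟨hδ, x, hx, hδx⟩) x
    obtain ⟨d, hd, hdc'⟩ := hΔ hc'
    exact ⟨d, fun δ hδ => hd δ (hSΔ hδ), hdc'.trans hcc'⟩
  by_cases hbot : S = ⊥
  · rw [hbot] at hS
    exact hS fun δ hδ x => by rw [Subgroup.mem_bot.1 hδ, one_smul]
  obtain ⟨φ, hφ⟩ := hΓ S hbot
  let S' := φ.ker.map S.subtype
  have hS'S : S' ≤ S := Subgroup.map_subtype_le _
  obtain ⟨δ, ⟨hδ, x, hx, hδx⟩, hδS'⟩ : ∃ δ ∈ W, δ ∉ S' := by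
    by_contra! h
    refine hφ (MonoidHom.ext fun s => ?_)
    obtain ⟨s', hs', hss'⟩ := (Subgroup.closure_le S').2 h s.2
    rwa [← show s' = s from Subtype.ext hss']
  refine ih _ ?_ S' (invariantFunctions_ker_le_solvableRHS hT φ hF hS) rfl
  rw [← hn]
  refine Set.ncard_lt_ncard ⟨fun z hz => ?_, fun h => ?_⟩ ((hF.prod hF).subset (Set.sep_subset _ _))
  · exact ⟨hz.1, hz.2.imp fun s hs => ⟨hSΔ (hS'S hs.1), hs.2⟩⟩
  · obtain ⟨-, s, hs, hsx⟩ := @h (x, δ • x) ⟨⟨hx, hδx⟩, δ, hδ, rfl⟩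
    exact hδS' (IsCancelSMul.right_cancel _ _ _ hsx ▸ hs)

end InvariantSystem

section LinearSystem

variable {𝕜 : Type u} {X : Type v} {Y : Type w} [Field 𝕜] {τ : X → Y →₀ 𝕜}

theorem exists_linearCombination_eq_of_linearIndependent (hτ : LinearIndependent 𝕜 τ) (c : X → 𝕜) :
    ∃ d : Y → 𝕜, ∀ x, Finsupp.linearCombination 𝕜 d (τ x) = c x := by
  obtain ⟨f, hf⟩ := LinearMap.exists_extend ((Module.Basis.span hτ).constr 𝕜 c)
  have hfd : f = Finsupp.linearCombination 𝕜 fun y => f (Finsupp.single y 1) := by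
    ext; simp
  refine ⟨fun y => f (Finsupp.single y 1), fun x => ?_⟩
  rw [← hfd]
  calc f (τ x) = (f ∘ₗ Submodule.subtype _) (Module.Basis.span hτ x) := by
        rw [Module.Basis.span_apply]; rfl
    _ = c x := by rw [hf, Module.Basis.constr_basis]

theorem linearIndependent_of_finite_solvable
    (h : ∀ F : Finset X, ∀ c : X → 𝕜, ∃ d : Y → 𝕜,
      ∀ x ∈ F, Finsupp.linearCombination 𝕜 d (τ x) = c x) :
    LinearIndependent 𝕜 τ := by
  classical
  rw [linearIndependent_iff']
  intro F a ha i hi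
  obtain ⟨d, hd⟩ := h F (Pi.single i 1)
  have h0 := congrArg (Finsupp.linearCombination 𝕜 d) ha
  rw [map_sum, map_zero] at h0
  rw [Finset.sum_congr rfl fun x hx => by rw [map_smul, hd x hx]] at h0
  simpa [Pi.single_apply, hi] using h0

end LinearSystem

theorem exists_linearCombination_eq_of_ratIndicable {Γ : Type u} {X : Type v} {Y : Type w}
    [Group Γ] [MulAction Γ X] [MulAction Γ Y] [IsCancelSMul Γ X] [IsCancelSMul Γ Y]
    (hΓ : RatIndicable Γ) {τ : X → Y →₀ ℚ} (hτ : ∀ (g : Γ) x, τ (g • x) = (τ x).mapDomain (g • ·))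
    (h : ∀ c ∈ invariantFunctions (⊤ : Subgroup Γ) X, ∃ d ∈ invariantFunctions (⊤ : Subgroup Γ) Y,
      ∀ x, Finsupp.linearCombination ℚ d (τ x) = c x) (c : X → ℚ) :
    ∃ d : Y → ℚ, ∀ x, Finsupp.linearCombination ℚ d (τ x) = c x := by
  let T : (Y → ℚ) →ₗ[ℚ] (X → ℚ) :=
    LinearMap.pi fun x => LinearMap.applyₗ (τ x) ∘ₗ Finsupp.bilinearCombination ℚ ℚ
  have hT (g : Γ) (d : Y → ℚ) (x : X) : T (fun y => d (g • y)) x = T d (g • x) := by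
    simp only [T, LinearMap.pi_apply, LinearMap.comp_apply, LinearMap.applyₗ_apply_apply,
      Finsupp.bilinearCombination_apply, hτ, Finsupp.linearCombination_mapDomain]
    rfl
  refine exists_linearCombination_eq_of_linearIndependent
    (linearIndependent_of_finite_solvable fun F c => ?_) c
  obtain ⟨d, -, hd⟩ := mem_solvableRHS_bot hΓ hT F.finite_toSet ⊤
    (fun c hc => let ⟨d, hd, hdc⟩ := h c hc; ⟨d, hd, fun x _ => hdc x⟩) c
  exact ⟨d, fun x hx => hd hx⟩

section Cocycle

variable {C : Type u} {Γ : Type v} {M : Type w} [Group C] [Group Γ] [Group M] {q : C →* Γ}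

/-- `u` is a `1`-cocycle on `C` with values in the functions `Γ → M`, on which `C` acts through `q`
by translation. -/
def IsCocycle (q : C →* Γ) (u : C → Γ → M) : Prop :=
  ∀ x y γ, u (x * y) γ = u x γ * u y ((q x)⁻¹ * γ)

/-- The lift of `q` to the wreath product whose first component is the cocycle `u`. -/
def IsCocycle.toHom {u : C → Γ → M} (hu : IsCocycle q u) : C →* WreathProduct M Γ Γ :=
  MonoidHom.mk' (fun x => ⟨u x, q x⟩) fun x y =>
    SemidirectProduct.ext (funext (hu x y)) (map_mul q x y)

theorem isCocycle_left (f : C →* WreathProduct M Γ Γ) (hf : ∀ x, (f x).right = q x) :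
    IsCocycle q fun x => (f x).left := by
  intro x y γ
  simp only [map_mul, SemidirectProduct.mul_left, Pi.mul_apply, hf]
  rfl

theorem IsCocycle.map {N : Type*} [Group N] {u : C → Γ → M} (hu : IsCocycle q u) (f : M →* N) :
    IsCocycle q fun x γ => f (u x γ) := by
  intro x y γ
  simp only [hu x y γ, map_mul]

theorem IsCocycle.translate {u : C → Γ → M} (hu : IsCocycle q u) (g : Γ) :
    IsCocycle q fun x γ => u x (γ * g) := by
  intro x y γ
  simp only [hu x y, mul_assoc]

theorem isCocycle_const (f : C →* M) : IsCocycle q fun x _ => f x :=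
  fun x y _ => map_mul f x y

theorem IsCocycle.mul {N : Type*} [CommGroup N] {u v : C → Γ → N} (hu : IsCocycle q u)
    (hv : IsCocycle q v) : IsCocycle q (u * v) := by
  intro x y γ
  simp only [Pi.mul_apply, hu x y, hv x y, mul_mul_mul_comm]

end Cocycle

section NonsingularSystem

open Monoid.Coprod

variable {H X : Type u} {J : Type v} {Γ : Type w} [Group H] [Group Γ]

theorem IsCocycle.ext_coprod {M : Type*} [Group M] {q : Monoid.Coprod H (FreeGroup X) →* Γ}
    {u v : Monoid.Coprod H (FreeGroup X) → Γ → M} (hu : IsCocycle q u) (hv : IsCocycle q v)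
    (hinl : ∀ h, u (inl h) = v (inl h)) (hinr : ∀ x, u (inr (.of x)) = v (inr (.of x))) :
    u = v := by
  have h : hu.toHom = hv.toHom := by
    refine hom_ext (MonoidHom.ext fun h => ?_) (FreeGroup.ext_hom _ _ fun x => ?_)
    · exact SemidirectProduct.ext (hinl h) rfl
    · exact SemidirectProduct.ext (hinr x) rfl
  funext x
  exact congrArg SemidirectProduct.left (DFunLike.congr_fun h x)

section FoxDerivative

variable [Fintype J] (q : Monoid.Coprod H (FreeGroup X) →* Γ)
  (e : J → Monoid.Coprod H (FreeGroup X) →* Multiplicative ℚ)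

/-- The Fox derivative over `q`, in the directions dual to the characters `e j`: the cocycle that
vanishes on `H` and sends a free generator `x` to `∑ j, e j x • [j]`, translated over `Γ`. -/
noncomputable def foxHom : Monoid.Coprod H (FreeGroup X) →*
    WreathProduct (Multiplicative (((_ : J) × Γ) →₀ ℚ)) Γ Γ :=
  lift (SemidirectProduct.inr.comp (q.comp inl)) (FreeGroup.lift fun x =>
    ⟨fun γ => .ofAdd (∑ j, .single ⟨j, γ⁻¹⟩ (e j (inr (.of x))).toAdd), q (inr (.of x))⟩)

/-- The coefficient vector over `J × Γ` of the Fox derivative of `x` at `γ`. -/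
noncomputable def foxDerivative (x : Monoid.Coprod H (FreeGroup X)) (γ : Γ) :
    Multiplicative (((_ : J) × Γ) →₀ ℚ) :=
  (foxHom q e x).left γ

theorem foxHom_right (x : Monoid.Coprod H (FreeGroup X)) : (foxHom q e x).right = q x := by
  have h : SemidirectProduct.rightHom.comp (foxHom q e) = q := by
    refine hom_ext (MonoidHom.ext fun h => ?_) (FreeGroup.ext_hom _ _ fun x => ?_) <;>
      simp [foxHom]
  exact DFunLike.congr_fun h x

theorem isCocycle_foxDerivative : IsCocycle q (foxDerivative q e) :=
  isCocycle_left _ (foxHom_right q e)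

@[simp]
theorem foxDerivative_inl (h : H) : foxDerivative q e (inl h) = 1 := by
  funext γ
  simp [foxDerivative, foxHom]

@[simp]
theorem foxDerivative_inr_of (x : X) (γ : Γ) : foxDerivative q e (inr (.of x)) γ =
    .ofAdd (∑ j, .single ⟨j, γ⁻¹⟩ (e j (inr (.of x))).toAdd) := by
  simp [foxDerivative, foxHom]

theorem mapDomain_foxDerivative (g : Γ) (x : Monoid.Coprod H (FreeGroup X)) (γ : Γ) :
    (foxDerivative q e x γ).toAdd.mapDomain (g • ·) = (foxDerivative q e x (γ * g⁻¹)).toAdd := by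
  let f : (((_ : J) × Γ) →₀ ℚ) →+ (((_ : J) × Γ) →₀ ℚ) := Finsupp.mapDomain.addMonoidHom (g • ·)
  have h := ((isCocycle_foxDerivative q e).map (AddMonoidHom.toMultiplicative f)).ext_coprod
    ((isCocycle_foxDerivative q e).translate g⁻¹) (fun h => ?_) (fun x => ?_)
  · exact congrArg Multiplicative.toAdd (congrFun₂ h x γ)
  · simp
  · funext γ
    simp [f, Finsupp.mapDomain_single, Sigma.smul_mk]

theorem linearCombination_foxDerivative (he : ∀ j h, e j (inl h) = 1) (k : J → ℚ)
    (x : Monoid.Coprod H (FreeGroup X)) (γ : Γ) :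
    Finsupp.linearCombination ℚ (fun y => k y.1) (foxDerivative q e x γ).toAdd =
      ∑ j, k j * (e j x).toAdd := by
  let f : (((_ : J) × Γ) →₀ ℚ) →+ ℚ := (Finsupp.linearCombination ℚ fun y => k y.1).toAddMonoidHom
  let m (j : J) : Multiplicative ℚ →* Multiplicative ℚ :=
    AddMonoidHom.toMultiplicative (AddMonoidHom.mulLeft (k j))
  have h := ((isCocycle_foxDerivative q e).map (AddMonoidHom.toMultiplicative f)).ext_coprod
    (isCocycle_const (∏ j, (m j).comp (e j))) (fun h => ?_) (fun x => ?_)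
  · have := congrArg Multiplicative.toAdd (congrFun₂ h x γ)
    simpa [f, m] using this
  · funext γ
    simp [he]
  · funext γ
    simp [f, m, mul_comm]

instance : IsCancelSMul Γ ((_ : J) × Γ) where
  right_cancel' _ _ x hx := mul_right_cancel (b := x.2) (eq_of_heq (Sigma.mk.inj hx).2)

variable {q e} {s : J → Monoid.Coprod H (FreeGroup X)}

theorem exists_linearCombination_foxDerivative_eq [DecidableEq J] (hΓ : RatIndicable Γ)
    (he : ∀ j h, e j (inl h) = 1) (hes : ∀ i j, e j (s i) = .ofAdd (if i = j then 1 else 0))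
    (c : J → Γ → ℚ) : ∃ d : ((_ : J) × Γ) → ℚ,
      ∀ i γ, Finsupp.linearCombination ℚ d (foxDerivative q e (s i) γ).toAdd = c i γ := by
  have hs (c : ((_ : J) × Γ) → ℚ) (hc : c ∈ invariantFunctions (⊤ : Subgroup Γ) _) (y) :
      Finsupp.linearCombination ℚ c (foxDerivative q e (s y.1) y.2⁻¹).toAdd = c y := by
    have hc1 (y : (_ : J) × Γ) : c y = c ⟨y.1, 1⟩ := by
      simpa only [Sigma.smul_mk, smul_eq_mul, mul_one] using hc y.2 trivial ⟨y.1, 1⟩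
    rw [funext hc1, linearCombination_foxDerivative q e he (fun j => c ⟨j, 1⟩)]
    simp [hes]
  obtain ⟨d, hd⟩ := exists_linearCombination_eq_of_ratIndicable hΓ
    (fun g y => by rw [mapDomain_foxDerivative, ← mul_inv_rev]; rfl)
    (fun c hc => ⟨c, hc, hs c hc⟩) fun y => c y.1 y.2⁻¹
  exact ⟨d, fun i γ => by simpa using hd ⟨i, γ⁻¹⟩⟩

end FoxDerivative

variable {q : Monoid.Coprod H (FreeGroup X) →* Γ} {s : J → Monoid.Coprod H (FreeGroup X)}
  {e : J → Monoid.Coprod H (FreeGroup X) →* Multiplicative ℚ} [Finite J] [DecidableEq J]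

/-- Changing the images of the free generators by an unknown function `d` changes the first
component of the image of `s i` by a linear functional of `d`, the Fox derivative of `s i`. -/
theorem exists_extension_wreathProduct (hΓ : RatIndicable Γ)
    (he : ∀ j h, e j (inl h) = 1) (hes : ∀ i j, e j (s i) = .ofAdd (if i = j then 1 else 0))
    (hq : ∀ i, q (s i) = 1) (f : H →* WreathProduct (Multiplicative ℚ) Γ Γ)
    (hf : ∀ h, (f h).right = q (inl h)) :
    ∃ F : Monoid.Coprod H (FreeGroup X) →* WreathProduct (Multiplicative ℚ) Γ Γ,
      (∀ i, F (s i) = 1) ∧ ∀ h, F (inl h) = f h := by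
  cases nonempty_fintype J
  let F₀ := lift f (FreeGroup.lift fun x => .inr (q (inr (.of x))))
  have hF₀ : SemidirectProduct.rightHom.comp F₀ = q := by
    refine hom_ext (MonoidHom.ext fun h => ?_) (FreeGroup.ext_hom _ _ fun x => ?_) <;>
      simp [F₀, hf]
  obtain ⟨d, hd⟩ := exists_linearCombination_foxDerivative_eq (q := q) hΓ he hes
    fun i γ => -((F₀ (s i)).left γ).toAdd
  let φ : (((_ : J) × Γ) →₀ ℚ) →+ ℚ := (Finsupp.linearCombination ℚ d).toAddMonoidHom
  have hu := (isCocycle_left F₀ (DFunLike.congr_fun hF₀)).mul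
    ((isCocycle_foxDerivative q e).map (AddMonoidHom.toMultiplicative φ))
  refine ⟨hu.toHom, fun i => SemidirectProduct.ext (funext fun γ => ?_) (hq i),
    fun h => SemidirectProduct.ext (funext fun γ => ?_) (hf h).symm⟩
  · change (F₀ (s i)).left γ * .ofAdd (Finsupp.linearCombination ℚ d _) = 1
    rw [hd, ofAdd_neg, ofAdd_toAdd, mul_inv_cancel]
  · change (F₀ (inl h)).left γ * AddMonoidHom.toMultiplicative φ (foxDerivative q e (inl h) γ) = _
    simp [F₀]

theorem exists_injective_killing_of_nonsingular (hH : RatIndicable H)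
    (he : ∀ j h, e j (inl h) = 1) (hes : ∀ i j, e j (s i) = .ofAdd (if i = j then 1 else 0)) :
    ∃ (P : Type u) (_ : Group P) (f : Monoid.Coprod H (FreeGroup X) →* P),
      (∀ i, f (s i) = 1) ∧ Function.Injective (f.comp inl) := by
  let q := QuotientGroup.mk' (indicableResidual (Set.range s))
  have hq (i : J) : q (s i) = 1 :=
    (QuotientGroup.eq_one_iff _).2 (subset_indicableResidual ⟨i, rfl⟩)
  refine ⟨_, inferInstance, q, hq, ?_⟩
  rw [← MonoidHom.ker_eq_bot_iff]
  by_contra hne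
  obtain ⟨η, hη⟩ := hH _ hne
  obtain ⟨f, hfq, hfη⟩ := exists_hom_wreathProduct_of_ker _ η
  have hΓ := ratIndicable_quotient_indicableResidual (Set.range s)
  obtain ⟨F, hFs, hFf⟩ := exists_extension_wreathProduct hΓ he hes hq f hfq
  refine hη (MonoidHom.ext fun h => ?_)
  have hF : F (inl h) = 1 := (QuotientGroup.eq_one_iff _).1 h.2 _ _ F
    (hΓ.wreathProduct ratIndicable_multiplicative_rat) (by rintro _ ⟨i, rfl⟩; exact hFs i)
  rw [← hfη, ← hFf, hF]
  rfl

end NonsingularSystem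

section Alternating

variable {G : Type u} [Group G] {Z : Bool → Subgroup G}

/-- The words whose letters lie alternately in `Z b` but not in `Z !b`, and in `Z !b` but not in
`Z b`, starting with the former. -/
def IsAlternating (Z : Bool → Subgroup G) : Bool → List G → Prop
  | _, [] => True
  | b, x :: l => x ∈ Z b ∧ x ∉ Z (!b) ∧ IsAlternating Z (!b) l

/-- The normal form property of an amalgam `Z true ∗ Z false` over `Z true ⊓ Z false`. -/
def HasNormalForms (Z : Bool → Subgroup G) : Prop :=
  ∀ b l, IsAlternating Z b l → l ≠ [] → l.prod ≠ 1

/-- The elements of a product of alternating words over `Z`; the elements of both subgroups, which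
are not represented by any nonempty alternating word, are included. -/
def alternatingProducts (Z : Bool → Subgroup G) : Set G :=
  {y | (∀ b, y ∈ Z b) ∨ ∃ b l, l ≠ [] ∧ IsAlternating Z b l ∧ l.prod = y}

theorem IsAlternating.mem_sup {b : Bool} {l : List G} (h : IsAlternating Z b l) :
    ∀ x ∈ l, x ∈ Z true ⊔ Z false := by
  have hZ (b : Bool) : Z b ≤ Z true ⊔ Z false := by
    cases b
    exacts [le_sup_right, le_sup_left]
  induction l generalizing b with
  | nil => simp
  | cons a l ih => exact List.forall_mem_cons.2 ⟨hZ b h.1, ih h.2.2⟩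

theorem forall_mem_of_mem_of_mem_not {z : G} {b : Bool} (h : z ∈ Z b) (h' : z ∈ Z !b) :
    ∀ b, z ∈ Z b :=
  b.forall_bool'.2 ⟨h, h'⟩

theorem mul_mem_alternatingProducts_of_forall_mem {z y : G} (hz : ∀ b, z ∈ Z b)
    (hy : y ∈ alternatingProducts Z) : z * y ∈ alternatingProducts Z := by
  obtain hy | ⟨b, _ | ⟨x, l⟩, hl, h, rfl⟩ := hy
  · exact .inl fun b => (Z b).mul_mem (hz b) (hy b)
  · exact absurd rfl hl
  · refine .inr ⟨b, (z * x) :: l, by simp, ⟨(Z b).mul_mem (hz b) h.1, ?_, h.2.2⟩, ?_⟩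
    · rw [(Z !b).mul_mem_cancel_left (hz !b)]
      exact h.2.1
    · rw [List.prod_cons, List.prod_cons, mul_assoc]

theorem mul_prod_mem_alternatingProducts {z : G} {b : Bool} (hz : z ∈ Z b) {l : List G}
    (hl : IsAlternating Z b l) : z * l.prod ∈ alternatingProducts Z := by
  by_cases hz' : z ∈ Z !b
  · refine mul_mem_alternatingProducts_of_forall_mem (forall_mem_of_mem_of_mem_not hz hz') ?_
    obtain rfl | hne := eq_or_ne l []
    · exact .inl fun b => by simp
    · exact .inr ⟨b, l, hne, hl, rfl⟩
  obtain _ | ⟨x, l⟩ := l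
  · exact .inr ⟨b, [z], by simp, ⟨hz, hz', trivial⟩, by simp⟩
  have hzx : z * x ∈ Z b := (Z b).mul_mem hz hl.1
  rw [List.prod_cons, ← mul_assoc]
  by_cases h : z * x ∈ Z !b
  · refine mul_mem_alternatingProducts_of_forall_mem (forall_mem_of_mem_of_mem_not hzx h) ?_
    obtain rfl | hne := eq_or_ne l []
    · exact .inl fun b => by simp
    · exact .inr ⟨!b, l, hne, hl.2.2, rfl⟩
  · exact .inr ⟨b, (z * x) :: l, by simp, ⟨hzx, h, hl.2.2⟩, by simp⟩

theorem mul_mem_alternatingProducts {z y : G} {b : Bool} (hz : z ∈ Z b)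
    (hy : y ∈ alternatingProducts Z) : z * y ∈ alternatingProducts Z := by
  by_cases hz' : z ∈ Z !b
  · exact mul_mem_alternatingProducts_of_forall_mem (forall_mem_of_mem_of_mem_not hz hz') hy
  obtain hy | ⟨b', l, -, h, rfl⟩ := hy
  · refine .inr ⟨b, [z * y], by simp, ⟨(Z b).mul_mem hz (hy b), ?_, trivial⟩, by simp⟩
    rwa [(Z !b).mul_mem_cancel_right (hy !b)]
  obtain rfl | hb := eq_or_ne b' b
  · exact mul_prod_mem_alternatingProducts hz h
  · obtain rfl := Bool.eq_not_of_ne hb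
    exact .inr ⟨b, z :: l, by simp, ⟨hz, hz', h⟩, by simp⟩

theorem sup_subset_alternatingProducts {y : G} (hy : y ∈ Z true ⊔ Z false) :
    y ∈ alternatingProducts Z := by
  rw [Subgroup.sup_eq_closure] at hy
  induction hy using Subgroup.closure_induction_left with
  | one => exact .inl fun b => (Z b).one_mem
  | mul_left x hx y _ ih =>
    exact hx.elim (fun hx => mul_mem_alternatingProducts hx ih)
      fun hx => mul_mem_alternatingProducts hx ih
  | inv_mul_cancel x hx y _ ih =>
    exact hx.elim (fun hx => mul_mem_alternatingProducts (inv_mem hx) ih)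
      fun hx => mul_mem_alternatingProducts (inv_mem hx) ih

end Alternating

section Pushout

variable {Q : Type u} [Group Q]

open Monoid in
theorem exists_reduced_word_of_isAlternating {G : Bool → Type v} [∀ b, Group (G b)]
    {φ : ∀ b, Q →* G b} {b : Bool} {l : List (PushoutI φ)}
    (hl : IsAlternating (fun b => (PushoutI.of (φ := φ) b).range) b l) :
    ∃ w : CoprodI.Word G, PushoutI.Reduced φ w ∧ PushoutI.ofCoprodI w.prod = l.prod ∧
      w.fstIdx ≠ some (!b) ∧ (l ≠ [] → w ≠ .empty) := by
  induction l generalizing b with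
  | nil =>
    exact ⟨.empty, by simp [PushoutI.Reduced, CoprodI.Word.empty], by simp,
      by simp [CoprodI.Word.fstIdx, CoprodI.Word.empty], by simp⟩
  | cons x l ih =>
    obtain ⟨⟨m, rfl⟩, hm, hl⟩ := hl
    obtain ⟨w, hw, hprod, hfst, -⟩ := ih hl
    rw [Bool.not_not] at hfst
    have hmφ : m ∉ (φ b).range := by
      rintro ⟨q, rfl⟩
      exact hm ⟨φ (!b) q, by rw [PushoutI.of_apply_eq_base, PushoutI.of_apply_eq_base]⟩
    have hm1 : m ≠ 1 := fun h => hmφ (h ▸ one_mem _)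
    refine ⟨.cons m w hfst hm1, List.forall_mem_cons.2 ⟨hmφ, hw⟩, ?_, ?_, fun _ h => ?_⟩
    · rw [CoprodI.Word.prod_cons, map_mul, hprod, PushoutI.ofCoprodI_of, List.prod_cons]
    · simp [CoprodI.Word.fstIdx_cons]
    · simpa [CoprodI.Word.cons, CoprodI.Word.empty] using congrArg CoprodI.Word.toList h

theorem hasNormalForms_pushoutI {G : Bool → Type v} [∀ b, Group (G b)] (φ : ∀ b, Q →* G b)
    (hφ : ∀ b, Function.Injective (φ b)) :
    HasNormalForms fun b => (Monoid.PushoutI.of (φ := φ) b).range := by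
  intro b l hl hne h1
  obtain ⟨w, hw, hprod, -, hempty⟩ := exists_reduced_word_of_isAlternating hl
  refine hempty hne (hw.eq_empty_of_mem_range hφ ?_)
  rw [hprod, h1]
  exact one_mem _

/-- The two-element family of types `X` (at `true`) and `Y` (at `false`). -/
def BoolFamily (X Y : Type v) (b : Bool) : Type v :=
  bif b then X else Y

instance {X Y : Type v} [hX : Group X] [hY : Group Y] : ∀ b, Group (BoolFamily X Y b)
  | false => hY
  | true => hX

variable {X Y : Type v} [Group X] [Group Y]

/-- The two-element family of homomorphisms `f` (at `true`) and `g` (at `false`). -/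
def boolFamilyHom (f : Q →* X) (g : Q →* Y) : ∀ b, Q →* BoolFamily X Y b
  | false => g
  | true => f

theorem exists_pushout {f : Q →* X} {g : Q →* Y} (hf : Function.Injective f)
    (hg : Function.Injective g) :
    ∃ (P : Type (max u v)) (_ : Group P) (i : X →* P) (j : Y →* P), Function.Injective i ∧
      Function.Injective j ∧ (∀ q, i (f q) = j (g q)) ∧
      (∀ x y, i x = j y → ∃ q, f q = x ∧ g q = y) ∧
      HasNormalForms fun b => if b then i.range else j.range := by
  let φ := boolFamilyHom f g
  have hφ : ∀ b, Function.Injective (φ b) := Bool.forall_bool.2 ⟨hg, hf⟩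
  let i : X →* Monoid.PushoutI φ := Monoid.PushoutI.of (φ := φ) true
  let j : Y →* Monoid.PushoutI φ := Monoid.PushoutI.of (φ := φ) false
  have hi : Function.Injective i := Monoid.PushoutI.of_injective hφ true
  have hj : Function.Injective j := Monoid.PushoutI.of_injective hφ false
  have hij (q : Q) : i (f q) = j (g q) :=
    (Monoid.PushoutI.of_apply_eq_base φ true q).trans
      (Monoid.PushoutI.of_apply_eq_base φ false q).symm
  refine ⟨Monoid.PushoutI φ, inferInstance, i, j, hi, hj, hij, fun x y h => ?_, ?_⟩
  · have hinf := Monoid.PushoutI.inf_of_range_eq_base_range (φ := φ) hφ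
      (i := true) (j := false) (by simp)
    obtain ⟨q, hq⟩ := hinf.le ⟨⟨x, rfl⟩, ⟨y, h.symm⟩⟩
    have hx : f q = x := hi ((Monoid.PushoutI.of_apply_eq_base φ true q).trans hq)
    exact ⟨q, hx, hj (by rw [← hij, hx, h])⟩
  · convert hasNormalForms_pushoutI φ hφ using 2 with b
    cases b <;> rfl

end Pushout

section ExtendsPartialHoms

variable {G P : Type u} [Group G] [Group P] {L N T Q R : Subgroup G}

/-- Homomorphisms on `L` and on `N` that agree on `Q` extend to a homomorphism on `T`. It is the
existence half of the universal property of an amalgam `T = L ∗_Q N` of subgroups. -/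
def ExtendsPartialHoms (L N T Q : Subgroup G) : Prop :=
  ∀ (P : Type u) [Group P] (f g : G → P), HomOn L f → HomOn N g → Set.EqOn f g Q →
    ∃ F : G → P, HomOn T F ∧ Set.EqOn F f L ∧ Set.EqOn F g N

/-- `F`, defined on `T`, extends `f` on `L` up to an embedding of its codomain, is injective on
`N`, and stays injective on `R ⊔ N` whenever `Q ≤ R ≤ L` and `f` is injective on `R`. -/
structure IsAmalgamExtension (L N T Q : Subgroup G) (f : G → P) {P' : Type u} [Group P']
    (F : G → P') : Prop where
  homOn : HomOn T F
  eq_one_iff : ∀ x ∈ L, F x = 1 ↔ f x = 1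
  trivialKerOn : TrivialKerOn N F
  trivialKerOn_sup : ∀ R ≤ L, Q ≤ R → TrivialKerOn R f → TrivialKerOn (R ⊔ N) F

theorem IsAlternating.map {G P : Type*} [Group G] [Group P] {Z : Bool → Subgroup G}
    {Z' : Bool → Subgroup P} {F : G → P} (hmem : ∀ b, ∀ x ∈ Z b, F x ∈ Z' b)
    (hnot : ∀ b, ∀ x ∈ Z b, F x ∈ Z' (!b) → x ∈ Z !b) {b : Bool} {l : List G}
    (hl : IsAlternating Z b l) : IsAlternating Z' b (l.map F) := by
  induction l generalizing b with
  | nil => trivial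
  | cons a l ih => exact ⟨hmem b a hl.1, fun h => hl.2.1 (hnot b a hl.1 h), ih hl.2.2⟩

theorem trivialKerOn_sup_of_hasNormalForms {Z : Bool → Subgroup G} {Z' : Bool → Subgroup P}
    (hZ' : HasNormalForms Z') {F : G → P} (hF : HomOn (Z true ⊔ Z false) F)
    (hk : TrivialKerOn (Z true) F) (hmem : ∀ b, ∀ x ∈ Z b, F x ∈ Z' b)
    (hnot : ∀ b, ∀ x ∈ Z b, F x ∈ Z' (!b) → x ∈ Z !b) :
    TrivialKerOn (Z true ⊔ Z false) F := by
  intro x hx h1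
  obtain hb | ⟨b, l, hne, hl, rfl⟩ := sup_subset_alternatingProducts hx
  · exact hk x (hb true) h1
  · rw [hF.map_list_prod l hl.mem_sup] at h1
    exact absurd h1 (hZ' b _ (hl.map hmem hnot) (by simpa using hne))

theorem ExtendsPartialHoms.exists_isAmalgamExtension (h : ExtendsPartialHoms L N T Q)
    (hLT : L ≤ T) (hNT : N ≤ T) (hQL : Q ≤ L) (hQN : Q ≤ N) {f : G → P} (hf : HomOn L f)
    (hfQ : TrivialKerOn Q f) :
    ∃ (P' : Type u) (_ : Group P') (F : G → P'), IsAmalgamExtension L N T Q f F := by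
  have hfQ' : Function.Injective (hf.mono hQL).toMonoidHom := fun x y hxy =>
    Subtype.ext ((hf.mono hQL).injOn hfQ x.2 y.2 hxy)
  obtain ⟨P', _, i, j, hi, hj, hij, hpb, hnf⟩ :=
    exists_pushout hfQ' (Subgroup.inclusion_injective hQN)
  obtain ⟨F, hF, hFL, hFN⟩ := h P' (fun x => i (f x)) (extendByOne j) (hf.comp i)
    (homOn_extendByOne j) fun x hx => by
      rw [extendByOne_apply j (hQN hx)]
      exact hij ⟨x, hx⟩
  have hFN' (x : G) (hx : x ∈ N) : F x = j ⟨x, hx⟩ := by rw [hFN hx, extendByOne_apply j hx]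
  have hL (x : G) (hx : x ∈ L) : F x = 1 ↔ f x = 1 := by rw [hFL hx, map_eq_one_iff i hi]
  refine ⟨P', inferInstance, F, hF, hL, fun x hx h1 => ?_, fun R hRL hQR hR => ?_⟩
  · rw [hFN' x hx, map_eq_one_iff j hj] at h1
    exact congrArg Subtype.val h1
  refine trivialKerOn_sup_of_hasNormalForms (Z := fun b => if b then R else N) hnf
    (hF.mono (sup_le (hRL.trans hLT) hNT)) (fun x hx h1 => hR x hx ((hL x (hRL hx)).1 h1)) ?_ ?_
  · refine Bool.forall_bool.2 ⟨fun x hx => ⟨⟨x, hx⟩, (hFN' x hx).symm⟩,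
      fun x hx => ⟨f x, (hFL (hRL hx)).symm⟩⟩
  · refine Bool.forall_bool.2 ⟨?_, ?_⟩
    · rintro x hx ⟨p, hp⟩
      rw [hFN' x hx] at hp
      obtain ⟨q, -, hq⟩ := hpb _ _ hp
      obtain rfl : (q : G) = x := congrArg Subtype.val hq
      exact hQR q.2
    · rintro x hx ⟨n, hn⟩
      rw [hFL (hRL hx)] at hn
      obtain ⟨q, hq, -⟩ := hpb _ _ hn.symm
      exact hQN ((hf.mono hRL).injOn hR (hQR q.2) hx hq ▸ q.2)

end ExtendsPartialHoms

section RangeProd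

variable {M : Type*} [Monoid M]

/-- The ordered product `g 0 * g 1 * ⋯ * g (n - 1)`. -/
def rangeProd (g : ℕ → M) (n : ℕ) : M :=
  ((List.range n).map g).prod

@[simp]
theorem rangeProd_zero (g : ℕ → M) : rangeProd g 0 = 1 :=
  rfl

theorem rangeProd_succ (g : ℕ → M) (n : ℕ) : rangeProd g (n + 1) = rangeProd g n * g n :=
  List.prod_range_succ g n

theorem rangeProd_add (g : ℕ → M) (m n : ℕ) :
    rangeProd g (m + n) = rangeProd g m * rangeProd (fun k => g (m + k)) n := by
  simp [rangeProd, List.range_add, Function.comp_def]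

theorem rangeProd_getD (l : List M) :
    rangeProd (fun k => l.getD (k % l.length) 1) l.length = l.prod := by
  refine congrArg List.prod (List.ext_getElem (by simp) fun k hk hk' => ?_)
  simp [Nat.mod_eq_of_lt hk', hk']

theorem rangeProd_mem {G : Type u} [Group G] {L : Subgroup G} {g : ℕ → G} {n : ℕ}
    (h : ∀ k < n, g k ∈ L) : rangeProd g n ∈ L :=
  L.list_prod_mem (by simpa using h)

theorem map_rangeProd {M' : Type*} [Monoid M'] (f : M →* M') (g : ℕ → M) (n : ℕ) :
    f (rangeProd g n) = rangeProd (fun k => f (g k)) n := by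
  simp [rangeProd, map_list_prod, Function.comp_def]

theorem HomOn.map_rangeProd {G : Type u} {P : Type w} [Group G] [Group P] {L : Subgroup G}
    {f : G → P} (hf : HomOn L f) {g : ℕ → G} {n : ℕ} (h : ∀ k < n, g k ∈ L) :
    f (rangeProd g n) = rangeProd (fun k => f (g k)) n := by
  rw [rangeProd, hf.map_list_prod _ (by simpa using h), List.map_map]
  rfl

end RangeProd

section Height

variable {ι : Type v} {T : SimpleGraph ι} {d : ι → ℕ} {r : ι}

/-- `d` is a height function on the forest `T` with root `r`: adjacent vertices differ in height by
one, and every vertex has at most one lower neighbour. -/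
structure IsHeight (T : SimpleGraph ι) (r : ι) (d : ι → ℕ) : Prop where
  root : d r = 0
  adj : ∀ {a b}, T.Adj a b → d a = d b + 1 ∨ d b = d a + 1
  unique : ∀ {a b b'}, T.Adj a b → T.Adj a b' → d b < d a → d b' < d a → b = b'

theorem IsHeight.isAcyclic (hd : IsHeight T r d) : T.IsAcyclic := by
  classical
  intro v c hc
  obtain ⟨m, hm, hmax⟩ := c.support.toFinset.exists_max_image d ⟨v, by simp⟩
  rw [List.mem_toFinset] at hm
  have hc' := (SimpleGraph.Walk.isCycle_rotate hm).2 hc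
  have hlower (k : ℕ) (hadj : T.Adj m ((c.rotate m hm).getVert k)) :
      d ((c.rotate m hm).getVert k) < d m := by
    have := hmax ((c.rotate m hm).getVert k) (by simp [← c.mem_support_rotate_iff m hm])
    have := hd.adj hadj
    omega
  have hsnd := (c.rotate m hm).adj_snd hc'.not_nil
  have hpen := ((c.rotate m hm).adj_penultimate hc'.not_nil).symm
  exact hc'.snd_ne_penultimate (hd.unique hsnd hpen (hlower _ hsnd) (hlower _ hpen))

theorem eq_of_dist_lt (hT : T.IsAcyclic) {u a b b' : ι} (hu : T.Reachable u a)
    (hb : T.Adj a b) (hb' : T.Adj a b') (hlt : T.dist u b < T.dist u a)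
    (hlt' : T.dist u b' < T.dist u a) : b = b' := by
  classical
  obtain ⟨p, hp, -⟩ := hu.exists_path_of_dist
  suffices ∀ {c}, T.Adj a c → T.dist u c < T.dist u a → c = p.penultimate from
    (this hb hlt).trans (this hb' hlt').symm
  intro c hc hlt
  refine hT.eq_penultimate_of_adj_end hp hc ?_
  obtain ⟨q, hq, hqd⟩ := (hu.trans hc.reachable).exists_path_of_dist
  refine hT.mem_support_of_ne_mem_support_of_adj_of_isPath hp hq hc fun ha => ?_
  have := (SimpleGraph.dist_le (q.takeUntil a ha)).trans (q.length_takeUntil_le_length ha)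
  omega

theorem exists_isHeight (hT : T.IsAcyclic) (r : ι) : ∃ d, IsHeight T r d := by
  classical
  let root (a : ι) : ι := if T.Reachable r a then r else (T.connectedComponentMk a).out
  have hroot (a : ι) : T.Reachable (root a) a := by
    unfold root
    split_ifs with h
    · exact h
    · exact SimpleGraph.ConnectedComponent.exact (Quot.out_eq _)
  have hroot_adj {a b : ι} (hab : T.Adj a b) : root a = root b := by
    have hr : T.Reachable r a ↔ T.Reachable r b :=
      ⟨fun h => h.trans hab.reachable, fun h => h.trans hab.symm.reachable⟩
    simp only [root, hr, SimpleGraph.ConnectedComponent.sound hab.reachable]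
  refine ⟨fun a => T.dist (root a) a, ?_, fun {a b} hab => ?_, fun {a b b'} hab hab' hlt hlt' => ?_⟩
  · simp [root]
  · rw [← hroot_adj hab]
    exact hT.dist_eq_dist_add_one_of_adj_of_reachable _ hab (hroot a)
  · rw [← hroot_adj hab] at hlt
    rw [← hroot_adj hab'] at hlt'
    exact eq_of_dist_lt hT (hroot a) hab hab' hlt hlt'

end Height

section TreeAmalgam

variable {ι : Type v} {G : Type u} [Group G] {T T' : SimpleGraph ι} {B B' : ι → Subgroup G}
  {S : Set ι} {d : ι → ℕ} {r : ι}

/-- A forest `T` of free subgroups `B i` of `G` whose edge groups `B i ⊓ B j` are nontrivial, cyclic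
and isolated in `B i` and `B j`. The subgroup generated by the `B i` is their amalgam over each
component of `T`; this is expressed by the normal form property `prod_notMem` of closed words
without backtracking. -/
structure IsTreeAmalgam (T : SimpleGraph ι) (B : ι → Subgroup G) : Prop where
  isAcyclic : T.IsAcyclic
  prod_notMem : ∀ (n : ℕ) (v : ℕ → ι) (g : ℕ → G), 1 ≤ n → (∀ k < n, T.Adj (v k) (v (k + 1))) →
    (∀ k < n, g k ∈ B (v k)) → (∀ k, k + 2 ≤ n → v k = v (k + 2) → g (k + 1) ∉ B (v k)) →
    v n = v 0 → rangeProd g n ∉ B (v 0)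
  isFreeGroup : ∀ i, IsFreeGroup (B i)
  exists_inf_eq_zpowers : ∀ {i j}, T.Adj i j → ∃ u, u ≠ 1 ∧ B i ⊓ B j = Subgroup.zpowers u
  isolated : ∀ {i j}, T.Adj i j → ∀ b ∈ B i, ∀ n : ℤ, n ≠ 0 → b ^ n ∈ B j → b ∈ B j

theorem isFreeGroup_of_le {L N : Subgroup G} (h : L ≤ N) (hN : IsFreeGroup N) : IsFreeGroup L :=
  have := hN
  .ofMulEquiv (Subgroup.subgroupOfEquivOfLe h)

theorem IsTreeAmalgam.mono (h : IsTreeAmalgam T B) (hT : T' ≤ T) (hB : ∀ i, B' i ≤ B i)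
    (hinf : ∀ i j, T'.Adj i j → B i ⊓ B j ≤ B' i) : IsTreeAmalgam T' B' where
  isAcyclic := h.isAcyclic.anti hT
  prod_notMem n v g hn hv hg hred hclosed hmem :=
    h.prod_notMem n v g hn (fun k hk => hT (hv k hk)) (fun k hk => hB _ (hg k hk))
      (fun k hk hvk hgk => hred k hk hvk
        (hinf _ _ (hv k (by omega)) ⟨hgk, hB _ (hg (k + 1) (by omega))⟩)) hclosed (hB _ hmem)
  isFreeGroup i := isFreeGroup_of_le (hB i) (h.isFreeGroup i)
  exists_inf_eq_zpowers {i j} hij := by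
    obtain ⟨u, hu, he⟩ := h.exists_inf_eq_zpowers (hT hij)
    refine ⟨u, hu, (le_antisymm (inf_le_inf (hB i) (hB j)) (le_inf (hinf i j hij) ?_)).trans he⟩
    exact inf_comm (B i) (B j) ▸ hinf j i hij.symm
  isolated {i j} hij b hb n hn hbn :=
    hinf j i hij.symm ⟨h.isolated (hT hij) b (hB _ hb) n hn (hB _ hbn), hB _ hb⟩

/-- The subgroup generated by the vertex groups of the vertices in `S`. -/
def vertexClosure (B : ι → Subgroup G) (S : Set ι) : Subgroup G :=
  Subgroup.closure (⋃ v ∈ S, (B v : Set G))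

theorem le_vertexClosure (B : ι → Subgroup G) {v : ι} (hv : v ∈ S) : B v ≤ vertexClosure B S :=
  fun _ hx => Subgroup.subset_closure (Set.mem_biUnion hv hx)

theorem vertexClosure_mono (B : ι → Subgroup G) {S' : Set ι} (h : S ⊆ S') :
    vertexClosure B S ≤ vertexClosure B S' :=
  Subgroup.closure_mono (Set.biUnion_subset_biUnion_left h)

theorem vertexClosure_le {L : Subgroup G} (h : ∀ v ∈ S, B v ≤ L) : vertexClosure B S ≤ L :=
  (Subgroup.closure_le _).2 (Set.iUnion₂_subset h)

/-- `S` contains `r`, and with each other vertex also a lower neighbour of it. If `d` is a height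
function with root `r`, then `S` spans a subtree of `T`. -/
def IsRootedSubtree (T : SimpleGraph ι) (d : ι → ℕ) (r : ι) (S : Set ι) : Prop :=
  r ∈ S ∧ ∀ c ∈ S, c ≠ r → ∃ b ∈ S, T.Adj c b ∧ d b < d c

/-- A word in the vertex groups of `S` along a path in `T`. -/
def IsWord (T : SimpleGraph ι) (B : ι → Subgroup G) (S : Set ι) (l : List (ι × G)) : Prop :=
  (l.map Prod.fst).IsChain T.Adj ∧ ∀ p ∈ l, p.1 ∈ S ∧ p.2 ∈ B p.1

theorem IsTreeAmalgam.exists_backtracking (h : IsTreeAmalgam T B) {l : List (ι × G)}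
    (hl : IsWord T B S l) (hlen : 1 < l.length)
    (hclosed : (l.map Prod.fst).head? = (l.map Prod.fst).getLast?)
    (h1 : (l.map Prod.snd).prod = 1) :
    ∃ l₁ a x b y z l₂, l = l₁ ++ (a, x) :: (b, y) :: (a, z) :: l₂ ∧ y ∈ B a := by
  by_contra! hred
  obtain ⟨n, hn⟩ : ∃ n, l.length = n + 1 := ⟨l.length - 1, by omega⟩
  let p (k : ℕ) : ι × G := l.getD k (l[0])
  have hp (k : ℕ) (hk : k < l.length) : p k = l[k] := List.getD_eq_getElem l _ hk
  have hmem (k : ℕ) (hk : k < l.length) : (p k).2 ∈ B (p k).1 := by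
    rw [hp k hk]
    exact (hl.2 _ (List.getElem_mem hk)).2
  have hclosed' : (p n).1 = (p 0).1 := by
    rw [hp n (by omega), hp 0 (by omega)]
    simpa [List.head?_eq_getElem?, List.getLast?_eq_getElem?, hn] using hclosed.symm
  have hprod : rangeProd (fun k => (p k).2) n * (p n).2 = 1 := by
    rw [← rangeProd_succ, ← hn, ← h1, rangeProd]
    congr 1
    exact List.ext_getElem (by simp) fun k hk _ => by simp [hp k (by simpa using hk)]
  refine h.prod_notMem n (fun k => (p k).1) (fun k => (p k).2) (by omega) (fun k hk => ?_)
    (fun k hk => hmem k (by omega)) (fun k hk hvk => ?_) hclosed' ?_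
  · rw [hp k (by omega), hp (k + 1) (by omega)]
    have hchain := List.isChain_iff_getElem.1 hl.1 k (by rw [List.length_map]; omega)
    rwa [List.getElem_map, List.getElem_map] at hchain
  · refine hred (l.take k) _ (p k).2 (p (k + 1)).1 _ (p (k + 2)).2 (l.drop (k + 3)) ?_
    have hz : ((p k).1, (p (k + 2)).2) = p (k + 2) := Prod.ext hvk rfl
    rw [hz, Prod.mk.eta, Prod.mk.eta, hp k (by omega), hp (k + 1) (by omega),
      hp (k + 2) (by omega), List.getElem_cons_drop, List.getElem_cons_drop,
      List.getElem_cons_drop, List.take_append_drop]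
  · rw [eq_inv_of_mul_eq_one_left hprod, ← hclosed']
    exact inv_mem (hmem n (by omega))

end TreeAmalgam

section Gluing

variable {ι : Type v} {G : Type u} {P : Type w} [Group G] [Group P] {T : SimpleGraph ι}
  {B : ι → Subgroup G} {S : Set ι} {d : ι → ℕ} {r : ι} {f : ι → G → P}

theorem IsWord.contract {l₁ l₂ : List (ι × G)} {a b : ι} {x y z : G}
    (hl : IsWord T B S (l₁ ++ (a, x) :: (b, y) :: (a, z) :: l₂)) (hy : y ∈ B a) :
    IsWord T B S (l₁ ++ (a, x * y * z) :: l₂) := by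
  obtain ⟨hchain, hmem⟩ := hl
  simp only [IsWord, List.map_append, List.map_cons, List.forall_mem_append,
    List.forall_mem_cons] at hchain hmem ⊢
  obtain ⟨hl₁, hx, -, hz, hl₂⟩ := hmem
  refine ⟨?_, hl₁, ⟨hx.1, mul_mem (mul_mem hx.2 hy) hz.2⟩, hl₂⟩
  rw [List.isChain_split] at hchain ⊢
  exact ⟨hchain.1, hchain.2.tail.tail⟩

theorem IsTreeAmalgam.map_prod_eq_one (h : IsTreeAmalgam T B) (hf : ∀ v ∈ S, HomOn (B v) (f v))
    (hag : ∀ a ∈ S, ∀ b ∈ S, T.Adj a b → Set.EqOn (f a) (f b) (B a ⊓ B b : Subgroup G))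
    {l : List (ι × G)} (hl : IsWord T B S l)
    (hclosed : (l.map Prod.fst).head? = (l.map Prod.fst).getLast?)
    (h1 : (l.map Prod.snd).prod = 1) : (l.map fun p => f p.1 p.2).prod = 1 := by
  induction hn : l.length using Nat.strong_induction_on generalizing l with | _ n ih
  by_cases! hlen : l.length ≤ 1
  · obtain _ | ⟨p, _ | ⟨q, l⟩⟩ := l
    · rfl
    · have hp : p.2 = 1 := by simpa using h1
      simpa [hp] using (hf _ (hl.2 p (by simp)).1).map_one
    · simp at hlen
  obtain ⟨l₁, a, x, b, y, z, l₂, rfl, hy⟩ := h.exists_backtracking hl hlen hclosed h1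
  have hcontract := ih _ (by simp [← hn]) (hl.contract hy)
    (by simpa [List.getLast?_cons] using hclosed) (by simpa [mul_assoc] using h1) rfl
  have hadj : T.Adj a b := by
    have hchain := hl.1
    simp only [List.map_append, List.map_cons] at hchain
    exact (List.isChain_split.1 hchain).2.rel
  have hmem := hl.2
  simp only [List.forall_mem_append, List.forall_mem_cons] at hmem
  obtain ⟨-, hx, hb, hz, -⟩ := hmem
  have hfa : f a (x * y * z) = f a x * f b y * f a z := by
    rw [hf a hx.1 _ (mul_mem hx.2 hy) _ hz.2, hf a hx.1 _ hx.2 _ hy,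
      hag a hx.1 b hb.1 hadj ⟨hy, hb.2⟩]
  rw [List.map_append, List.map_cons, List.prod_append, List.prod_cons, hfa] at hcontract
  simpa [mul_assoc] using hcontract

theorem exists_homOn_of_graph {K : Subgroup (G × P)} (hK : ∀ p, ((1 : G), p) ∈ K → p = 1) :
    ∃ F : G → P, HomOn (K.map (MonoidHom.fst G P)) F ∧ ∀ z ∈ K, F z.1 = z.2 := by
  let π : K →* G := (MonoidHom.fst G P).comp K.subtype
  have hπ : Function.Injective π := by
    refine (injective_iff_map_eq_one π).2 fun z hz => Subtype.ext (Prod.ext hz (hK _ ?_))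
    exact (show z.1.1 = 1 from hz) ▸ z.2
  let φ : π.range →* P :=
    ((MonoidHom.snd G P).comp K.subtype).comp (MonoidHom.ofInjective hπ).symm.toMonoidHom
  refine ⟨extendByOne φ, (homOn_extendByOne φ).mono ?_, fun z hz => ?_⟩
  · rintro _ ⟨z, hz, rfl⟩
    exact ⟨⟨z, hz⟩, rfl⟩
  · have hπz : z.1 ∈ π.range := ⟨⟨z, hz⟩, rfl⟩
    rw [extendByOne_apply φ hπz]
    exact congrArg (fun z : K => z.1.2) ((MonoidHom.ofInjective hπ).symm_apply_apply ⟨z, hz⟩)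

/-- The pairs consisting of the value in `G` and the image under `f` of a word leading from `w` to
`r`. -/
def wordPairs (T : SimpleGraph ι) (B : ι → Subgroup G) (S : Set ι) (r : ι) (f : ι → G → P)
    (w : ι) : Set (G × P) :=
  {z | ∃ l, IsWord T B S l ∧ (l.map Prod.fst).head? = some w ∧
    (l.map Prod.fst).getLast? = some r ∧
      z = ((l.map Prod.snd).prod, (l.map fun p => f p.1 p.2).prod)}

theorem mul_mem_wordPairs (hf : ∀ v ∈ S, HomOn (B v) (f v)) {w : ι} {b : G} (hb : b ∈ B w)
    {z : G × P} (hz : z ∈ wordPairs T B S r f w) : (b, f w b) * z ∈ wordPairs T B S r f w := by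
  obtain ⟨_ | ⟨⟨w, x⟩, l⟩, hl, hw, hr, rfl⟩ := hz
  · simp at hw
  obtain rfl : w = _ := by simpa using hw
  have hx := hl.2 (w, x) (by simp)
  refine ⟨(w, b * x) :: l, ⟨hl.1, ?_⟩, by simp, by simpa [List.getLast?_cons] using hr, ?_⟩
  · exact List.forall_mem_cons.2
      ⟨⟨hx.1, mul_mem hb hx.2⟩, fun p hp => hl.2 p (List.mem_cons_of_mem _ hp)⟩
  · simp [hf w hx.1 b hb x hx.2, mul_assoc]

theorem wordPairs_subset_of_adj (hf : ∀ v ∈ S, HomOn (B v) (f v)) {w w' : ι} (h : T.Adj w' w)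
    (hw' : w' ∈ S) : wordPairs T B S r f w ⊆ wordPairs T B S r f w' := by
  rintro _ ⟨_ | ⟨p, l⟩, hl, hw, hr, rfl⟩
  · simp at hw
  obtain rfl : p.1 = w := by simpa using hw
  refine ⟨(w', 1) :: p :: l, ⟨?_, ?_⟩, by simp, by simpa [List.getLast?_cons] using hr, ?_⟩
  · exact List.isChain_cons_cons.2 ⟨h, hl.1⟩
  · exact List.forall_mem_cons.2 ⟨⟨hw', one_mem _⟩, hl.2⟩
  · simp [(hf w' hw').map_one]

theorem wordPairs_eq_root (hS : IsRootedSubtree T d r S) (hf : ∀ v ∈ S, HomOn (B v) (f v)) {w : ι}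
    (hw : w ∈ S) : wordPairs T B S r f w = wordPairs T B S r f r := by
  induction hd : d w using Nat.strong_induction_on generalizing w with | _ n ih
  obtain rfl | hwr := eq_or_ne w r
  · rfl
  obtain ⟨b, hb, hadj, hlt⟩ := hS.2 w hw hwr
  rw [← ih (d b) (hd ▸ hlt) hb rfl]
  exact (wordPairs_subset_of_adj hf hadj.symm hb).antisymm (wordPairs_subset_of_adj hf hadj hw)

theorem IsTreeAmalgam.exists_homOn_vertexClosure (h : IsTreeAmalgam T B)
    (hS : IsRootedSubtree T d r S) (hf : ∀ v ∈ S, HomOn (B v) (f v))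
    (hag : ∀ a ∈ S, ∀ b ∈ S, T.Adj a b → Set.EqOn (f a) (f b) (B a ⊓ B b : Subgroup G)) :
    ∃ F : G → P, HomOn (vertexClosure B S) F ∧ ∀ v ∈ S, Set.EqOn F (f v) (B v) := by
  let K : Subgroup (G × P) := Subgroup.closure {z | ∃ w ∈ S, ∃ b ∈ B w, z = (b, f w b)}
  have hmul (w) (hw : w ∈ S) (b) (hb : b ∈ B w) (z) (hz : z ∈ wordPairs T B S r f r) :
      (b, f w b) * z ∈ wordPairs T B S r f r := by
    rw [← wordPairs_eq_root hS hf hw] at hz ⊢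
    exact mul_mem_wordPairs hf hb hz
  have hK (z) (hz : z ∈ K) : z ∈ wordPairs T B S r f r := by
    induction hz using Subgroup.closure_induction_left with
    | one =>
      refine ⟨[(r, 1)], ⟨.singleton _, ?_⟩, by simp, by simp, ?_⟩
      · simp [hS.1, one_mem]
      · simp [(hf r hS.1).map_one, Prod.one_eq_mk]
    | mul_left x hx y _ ih =>
      obtain ⟨w, hw, b, hb, rfl⟩ := hx
      exact hmul w hw b hb y ih
    | inv_mul_cancel x hx y _ ih =>
      obtain ⟨w, hw, b, hb, rfl⟩ := hx
      rw [Prod.inv_mk, ← (hf w hw).map_inv hb]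
      exact hmul w hw b⁻¹ (inv_mem hb) y ih
  obtain ⟨F, hF, hFK⟩ := exists_homOn_of_graph (K := K) fun p hp => by
    obtain ⟨l, hl, hhead, hlast, heq⟩ := hK _ hp
    obtain ⟨h1, rfl⟩ := Prod.mk.inj heq
    exact h.map_prod_eq_one hf hag hl (hhead.trans hlast.symm) h1.symm
  have hmem (v) (hv : v ∈ S) (x) (hx : x ∈ B v) : (x, f v x) ∈ K :=
    Subgroup.subset_closure ⟨v, hv, x, hx, rfl⟩
  exact ⟨F, hF.mono (vertexClosure_le fun v hv x hx => ⟨_, hmem v hv x hx, rfl⟩),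
    fun v hv x hx => hFK _ (hmem v hv x hx)⟩

theorem IsTreeAmalgam.exists_homOn_of_leaf (h : IsTreeAmalgam T B) (hS : IsRootedSubtree T d r S)
    {w x : ι} (hwx : ∀ y ∈ S, T.Adj w y → y = x) {φ φ' : G → P}
    (hφ : ∀ y ∈ S, y ≠ w → HomOn (B y) φ) (hφ' : HomOn (B w) φ')
    (hag : Set.EqOn φ φ' (B w ⊓ B x : Subgroup G)) :
    ∃ F : G → P, HomOn (vertexClosure B S) F ∧ (w ∈ S → Set.EqOn F φ' (B w)) ∧
      ∀ y ∈ S, y ≠ w → Set.EqOn F φ (B y) := by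
  classical
  let θ (y : ι) : G → P := if y = w then φ' else φ
  have hθw : θ w = φ' := if_pos rfl
  have hθ {y : ι} (hy : y ≠ w) : θ y = φ := if_neg hy
  suffices hglue : (∀ y ∈ S, HomOn (B y) (θ y)) ∧ ∀ a ∈ S, ∀ b ∈ S, T.Adj a b →
      Set.EqOn (θ a) (θ b) (B a ⊓ B b : Subgroup G) by
    obtain ⟨F, hF, hFθ⟩ := h.exists_homOn_vertexClosure hS hglue.1 hglue.2
    exact ⟨F, hF, fun hw => hθw ▸ hFθ w hw, fun y hy hyw => hθ hyw ▸ hFθ y hy⟩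
  refine ⟨fun y hy => ?_, fun a ha b hb hab => ?_⟩
  · obtain rfl | hyw := eq_or_ne y w
    · exact hθw ▸ hφ'
    · exact hθ hyw ▸ hφ y hy hyw
  · obtain rfl | haw := eq_or_ne a w
    · rw [hθw, hθ hab.ne', hwx b hb hab]
      exact hag.symm
    · obtain rfl | hbw := eq_or_ne b w
      · rw [hθw, hθ haw, hwx a ha hab.symm, inf_comm]
        exact hag
      · rw [hθ haw, hθ hbw]
        exact Set.eqOn_refl _ _

end Gluing

section Extension

variable {ι : Type v} {G : Type u} {P : Type u} [Group G] [Group P] {T : SimpleGraph ι}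
  {B B' : ι → Subgroup G} {S Y : Set ι} {d : ι → ℕ} {r a b w : ι} {ℛ : Set (Set ι)}
  {f : G → P}

theorem IsRootedSubtree.insert (hY : IsRootedSubtree T d r Y) (hb : b ∈ Y) (hab : T.Adj a b)
    (hlt : d b < d a) : IsRootedSubtree T d r (insert a Y) := by
  refine ⟨Set.mem_insert_of_mem _ hY.1, fun c hc hcr => ?_⟩
  obtain rfl | hc := hc
  · exact ⟨b, Set.mem_insert_of_mem _ hb, hab, hlt⟩
  · exact (hY.2 c hc hcr).imp fun _ h => ⟨Set.mem_insert_of_mem _ h.1, h.2⟩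

theorem IsHeight.eq_of_adj (hd : IsHeight T r d) (hY : IsRootedSubtree T d r Y) (ha : a ∉ Y)
    (hab : T.Adj a b) (hlt : d b < d a) {c : ι} (hc : c ∈ Y) (hac : T.Adj a c) : c = b := by
  obtain hdc | hdc := hd.adj hac
  · exact hd.unique hac hab (by omega) hlt
  · have hcr : c ≠ r := by
      rintro rfl
      have := hd.root
      omega
    obtain ⟨e, he, hce, hec⟩ := hY.2 c hc hcr
    exact absurd (hd.unique hce hac.symm hec (by omega) ▸ he) ha

open Classical in
theorem IsTreeAmalgam.extendsPartialHoms_insert (h : IsTreeAmalgam T B) (hd : IsHeight T r d)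
    (hY : IsRootedSubtree T d r Y) (ha : a ∉ Y) (hb : b ∈ Y) (hab : T.Adj a b)
    (hlt : d b < d a) : ExtendsPartialHoms.{u} (vertexClosure B Y) (B a)
      (vertexClosure B (insert a Y)) (B a ⊓ B b) := by
  intro P _ f g hf hg hfg
  have hne (c) (hc : c ∈ Y) : c ≠ a := ne_of_mem_of_not_mem hc ha
  have hag (c) (hc : c ∈ Y) (hac : T.Adj a c) : Set.EqOn g f (B a ⊓ B c : Subgroup G) := by
    rw [hd.eq_of_adj hY ha hab hlt hc hac]
    exact hfg.symm
  suffices (∀ v ∈ insert a Y, HomOn (B v) (if v = a then g else f)) ∧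
      ∀ c ∈ insert a Y, ∀ e ∈ insert a Y, T.Adj c e → Set.EqOn (if c = a then g else f)
        (if e = a then g else f) (B c ⊓ B e : Subgroup G) by
    obtain ⟨F, hF, hFv⟩ := h.exists_homOn_vertexClosure (hY.insert hb hab hlt) this.1 this.2
    refine ⟨F, hF, ?_, fun x hx => (hFv a (Set.mem_insert _ _) hx).trans (by rw [if_pos rfl])⟩
    refine (hF.mono (vertexClosure_mono B (Set.subset_insert _ _))).eqOn_closure hf fun x hx => ?_
    obtain ⟨v, hv, hx⟩ := Set.mem_iUnion₂.1 hx
    rw [hFv v (Set.mem_insert_of_mem _ hv) hx, if_neg (hne v hv)]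
  refine ⟨fun v hv => ?_, fun c hc e he hce => ?_⟩
  · obtain rfl | hv := hv
    · rwa [if_pos rfl]
    · rw [if_neg (hne v hv)]
      exact hf.mono (le_vertexClosure B hv)
  · obtain rfl | hc := hc <;> obtain rfl | he := he
    · exact fun _ _ => rfl
    · simpa only [if_pos, if_neg (hne e he)] using hag e he hce
    · rw [inf_comm]
      simpa only [if_pos, if_neg (hne c hc)] using (hag c hc hce.symm).symm
    · rw [if_neg (hne c hc), if_neg (hne e he)]
      exact Set.eqOn_refl _ _

open Classical in
theorem IsTreeAmalgam.extendsPartialHoms_of_eq_off (h : IsTreeAmalgam T B)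
    (hS : IsRootedSubtree T d r S) (hw : w ∈ S) (hB : ∀ v, v ≠ w → B' v = B v) (hle : B' w ≤ B w)
    (hinf : ∀ c, T.Adj w c → B w ⊓ B c ≤ B' w) :
    ExtendsPartialHoms.{u} (vertexClosure B' S) (B w) (vertexClosure B S) (B' w) := by
  intro P _ f g hf hg hfg
  have hle' (v) : B' v ≤ B v := by
    obtain rfl | hv := eq_or_ne v w
    exacts [hle, (hB v hv).le]
  have hag (c) (hwc : T.Adj w c) : Set.EqOn g f (B w ⊓ B c : Subgroup G) :=
    hfg.symm.mono (hinf c hwc)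
  suffices (∀ v ∈ S, HomOn (B v) (if v = w then g else f)) ∧
      ∀ c ∈ S, ∀ e ∈ S, T.Adj c e → Set.EqOn (if c = w then g else f)
        (if e = w then g else f) (B c ⊓ B e : Subgroup G) by
    obtain ⟨F, hF, hFv⟩ := h.exists_homOn_vertexClosure hS this.1 this.2
    refine ⟨F, hF, ?_, fun x hx => (hFv w hw hx).trans (by rw [if_pos rfl])⟩
    refine (hF.mono (vertexClosure_le fun v hv => (hle' v).trans
      (le_vertexClosure B hv))).eqOn_closure hf fun x hx => ?_
    obtain ⟨v, hv, hx⟩ := Set.mem_iUnion₂.1 hx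
    rw [hFv v hv (hle' v hx)]
    split_ifs with hvw
    exacts [(hfg (hvw ▸ hx)).symm, rfl]
  refine ⟨fun v hv => ?_, fun c _ e _ hce => ?_⟩
  · obtain rfl | hvw := eq_or_ne v w
    · rwa [if_pos rfl]
    · rw [if_neg hvw, ← hB v hvw]
      exact hf.mono (le_vertexClosure B' hv)
  · split_ifs with hcw hew hew
    · exact fun _ _ => rfl
    · exact hcw ▸ hag e (hcw ▸ hce)
    · rw [inf_comm]
      exact hew ▸ (hag c (hew ▸ hce.symm)).symm
    · exact fun _ _ => rfl

/-- `f` is a homomorphism on the subgroup generated by the vertex groups of `Y`, injective on each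
of these vertex groups and on the subgroup generated by the vertex groups of `R ∩ Y`, for each
`R ∈ ℛ`. -/
structure IsFaithfulOn (B : ι → Subgroup G) (ℛ : Set (Set ι)) (Y : Set ι) (f : G → P) : Prop where
  homOn : HomOn (vertexClosure B Y) f
  vertex : ∀ v ∈ Y, TrivialKerOn (B v) f
  inter : ∀ R ∈ ℛ, TrivialKerOn (vertexClosure B (R ∩ Y)) f

theorem IsTreeAmalgam.exists_isFaithfulOn_insert (h : IsTreeAmalgam T B) (hd : IsHeight T r d)
    (hY : IsRootedSubtree T d r Y) (ha : a ∉ Y) (hb : b ∈ Y) (hab : T.Adj a b)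
    (hlt : d b < d a) (hℛ : ∀ R ∈ ℛ, a ∈ R → b ∈ R) (hf : IsFaithfulOn B ℛ Y f) :
    ∃ (P' : Type u) (_ : Group P') (F : G → P'), IsFaithfulOn B ℛ (insert a Y) F ∧
      ∀ x ∈ vertexClosure B Y, F x = 1 ↔ f x = 1 := by
  obtain ⟨P', _, F, hF⟩ :=
    (h.extendsPartialHoms_insert hd hY ha hb hab hlt).exists_isAmalgamExtension
      (vertexClosure_mono B (Set.subset_insert _ _)) (le_vertexClosure B (Set.mem_insert _ _))
      (inf_le_right.trans (le_vertexClosure B hb)) inf_le_left hf.homOn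
      ((hf.vertex b hb).mono inf_le_right)
  have hker {L : Subgroup G} (hL : L ≤ vertexClosure B Y) (hk : TrivialKerOn L f) :
      TrivialKerOn L F := fun x hx h1 => hk x hx ((hF.eq_one_iff x (hL hx)).1 h1)
  refine ⟨P', _, F, ⟨hF.homOn, ?_, fun R hR => ?_⟩, hF.eq_one_iff⟩
  · rintro v (rfl | hv)
    exacts [hF.trivialKerOn, hker (le_vertexClosure B hv) (hf.vertex v hv)]
  · have hRY : vertexClosure B (R ∩ Y) ≤ vertexClosure B Y :=
      vertexClosure_mono B Set.inter_subset_right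
    by_cases haR : a ∈ R
    · refine (hF.trivialKerOn_sup _ hRY
        (inf_le_right.trans (le_vertexClosure B ⟨hℛ R hR haR, hb⟩)) (hf.inter R hR)).mono
          (vertexClosure_le ?_)
      rintro v ⟨hvR, rfl | hvY⟩
      exacts [le_sup_right, (le_vertexClosure B (S := R ∩ Y) ⟨hvR, hvY⟩).trans le_sup_left]
    · rw [Set.inter_insert_of_notMem haR]
      exact hker hRY (hf.inter R hR)

theorem IsTreeAmalgam.exists_isFaithfulOn (h : IsTreeAmalgam T B) (hd : IsHeight T r d)
    (hS : IsRootedSubtree T d r S) (hℛ : ∀ R ∈ ℛ, ∀ c ∈ R ∩ S, c ≠ r → ∃ b ∈ R ∩ S,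
      T.Adj c b ∧ d b < d c) (hY : IsRootedSubtree T d r Y) (hYS : Y ⊆ S)
    (hfin : (S \ Y).Finite) (hf : IsFaithfulOn B ℛ Y f) :
    ∃ (P' : Type u) (_ : Group P') (F : G → P'), IsFaithfulOn B ℛ S F ∧
      ∀ x ∈ vertexClosure B Y, F x = 1 ↔ f x = 1 := by
  obtain ⟨n, hn⟩ : ∃ n, (S \ Y).ncard = n := ⟨_, rfl⟩
  induction n generalizing Y P with
  | zero =>
    have hSY : S ⊆ Y := Set.sdiff_eq_empty.1 ((Set.ncard_eq_zero hfin).1 hn)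
    obtain rfl : Y = S := hYS.antisymm hSY
    exact ⟨P, _, f, hf, fun _ _ => Iff.rfl⟩
  | succ n ih =>
    obtain ⟨a, ⟨haS, haY⟩, hmin⟩ := hfin.exists_minimalFor d _ (by rw [← Set.ncard_pos hfin]; omega)
    have har : a ≠ r := fun har => haY (har ▸ hY.1)
    obtain ⟨b, hbS, hab, hlt⟩ := hS.2 a haS har
    have hbY : b ∈ Y := by
      by_contra hbY
      have := hmin ⟨hbS, hbY⟩ hlt.le
      omega
    have hbR (R) (hR : R ∈ ℛ) (haR : a ∈ R) : b ∈ R := by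
      obtain ⟨b', hb', hab', hlt'⟩ := hℛ R hR a ⟨haR, haS⟩ har
      exact hd.unique hab hab' hlt hlt' ▸ hb'.1
    obtain ⟨P₁, _, f₁, hf₁, hiff₁⟩ := h.exists_isFaithfulOn_insert hd hY haY hbY hab hlt hbR hf
    have hdiff : S \ insert a Y = (S \ Y) \ {a} := by
      rw [Set.sdiff_sdiff, Set.union_singleton]
    obtain ⟨P₂, _, f₂, hf₂, hiff₂⟩ := ih (hY.insert hbY hab hlt) (Set.insert_subset haS hYS)
      (hdiff ▸ hfin.sdiff) hf₁
      (by rw [hdiff, Set.ncard_sdiff_singleton_of_mem (Set.mem_sdiff_of_mem haS haY), hn,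
        Nat.add_sub_cancel])
    refine ⟨P₂, _, f₂, hf₂, fun x hx => ?_⟩
    rw [hiff₂ x (vertexClosure_mono B (Set.subset_insert _ _) hx), hiff₁ x hx]

end Extension

section Unfolding

open scoped Pointwise

variable {ι : Type v} {G : Type u} [Group G] {T : SimpleGraph ι} {B : ι → Subgroup G}
  {w x : ι} {z : G} {ψ : G → ℤ} {d : ι → ℕ}

/-- The projection of the unfolded graph `unfoldGraph T w` to `T`. -/
def unfoldProj (w : ι) (a : Option (ι × ℤ)) : ι :=
  a.elim w Prod.fst

/-- The graph obtained from `ℤ` disjoint copies of `T` by identifying all copies of the vertex `w`.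
The identified vertex is `none`. The vertices `some (w, i)` are isolated junk. -/
def unfoldGraph (T : SimpleGraph ι) (w : ι) : SimpleGraph (Option (ι × ℤ)) where
  Adj a b := T.Adj (unfoldProj w a) (unfoldProj w b) ∧
    (∀ p ∈ a, p.1 ≠ w) ∧ (∀ q ∈ b, q.1 ≠ w) ∧ ∀ p ∈ a, ∀ q ∈ b, p.2 = q.2
  symm := ⟨fun _ _ ⟨h, ha, hb, hab⟩ => ⟨h.symm, hb, ha, fun q hq p hp => (hab p hp q hq).symm⟩⟩
  loopless := ⟨fun _ h => h.1.ne rfl⟩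

/-- `a` lies in the `i`-th copy of `T`; the vertex `none` lies in all of them. -/
def HasLevel (a : Option (ι × ℤ)) (i : ℤ) : Prop :=
  ∀ p ∈ a, p.2 = i

theorem eq_of_unfoldProj_eq {a b c c' : Option (ι × ℤ)} {i : ℤ} (ha : (unfoldGraph T w).Adj a c)
    (hb : (unfoldGraph T w).Adj b c') (hai : HasLevel a i) (hbi : HasLevel b i)
    (hab : unfoldProj w a = unfoldProj w b) : a = b := by
  obtain _ | p := a <;> obtain _ | q := b
  · rfl
  · exact absurd hab.symm (hb.2.1 q rfl)
  · exact absurd hab (ha.2.1 p rfl)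
  · exact congrArg some (Prod.ext hab ((hai p rfl).trans (hbi q rfl).symm))

theorem exists_hasLevel_of_adj {a b : Option (ι × ℤ)} (hab : (unfoldGraph T w).Adj a b) :
    ∃ i, HasLevel a i ∧ HasLevel b i := by
  obtain _ | p := a
  · obtain _ | q := b
    · exact absurd rfl hab.1.ne
    · exact ⟨q.2, by simp [HasLevel], by simp [HasLevel]⟩
  · exact ⟨p.2, by simp [HasLevel], fun q hq => (hab.2.2.2 p rfl q hq).symm⟩

theorem IsHeight.unfold (hd : IsHeight T w d) :
    IsHeight (unfoldGraph T w) none (d ∘ unfoldProj w) where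
  root := hd.root
  adj hab := hd.adj hab.1
  unique {a b b'} hab hab' hlt hlt' := by
    obtain _ | p := a
    · simp [unfoldProj, hd.root] at hlt
    · exact eq_of_unfoldProj_eq hab.symm hab'.symm (fun q hq => (hab.2.2.2 p rfl q hq).symm)
        (fun q hq => (hab'.2.2.2 p rfl q hq).symm) (hd.unique hab.1 hab'.1 hlt hlt')

theorem exists_walk_levels {n : ℕ} {v : ℕ → Option (ι × ℤ)}
    (hv : ∀ k < n, (unfoldGraph T w).Adj (v k) (v (k + 1))) :
    ∃ l : ℕ → ℤ, (∀ k, HasLevel (v k) (l k)) ∧ ∀ k < n, HasLevel (v k) (l (k + 1)) := by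
  refine ⟨fun k => ((v k).or (v (k - 1))).elim 0 Prod.snd, fun k p hp => ?_, fun k hk p hp => ?_⟩
  · simp [Option.mem_def.1 hp]
  · have hadj := (hv k hk).2.2.2 p hp
    obtain hn | ⟨q, hq⟩ := (v (k + 1)).eq_none_or_eq_some
    · simp [hn, Option.mem_def.1 hp]
    · simp [hq, hadj q hq]

theorem rangeProd_zpow_mul_zpow (z : G) (l : ℕ → ℤ) (g : ℕ → G) (n : ℕ) :
    rangeProd (fun k => z ^ (-l k) * g k * z ^ l (k + 1)) n =
      z ^ (-l 0) * rangeProd g n * z ^ l n := by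
  induction n with
  | zero => simp
  | succ n ih =>
    rw [rangeProd_succ, rangeProd_succ, ih]
    group

theorem mem_conj_zpow_smul {i : ℤ} {L : Subgroup G} {a : G} :
    a ∈ MulAut.conj (z ^ i) • L ↔ z ^ (-i) * a * z ^ i ∈ L := by
  rw [Subgroup.mem_pointwise_smul_iff_inv_smul_mem, ← _root_.map_inv, MulAut.smul_def,
    MulAut.conj_apply, inv_inv, zpow_neg]

/-- `w` is a leaf of `T` with neighbour `x`, and `ψ` restricts to a surjective homomorphism
`B w → ℤ` which kills the edge group and maps `z` to `1`. -/
structure IsLeafCharacter (T : SimpleGraph ι) (B : ι → Subgroup G) (w x : ι) (z : G) (ψ : G → ℤ) :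
    Prop where
  eq_of_adj : ∀ {y}, T.Adj w y → y = x
  map_mul : ∀ a ∈ B w, ∀ b ∈ B w, ψ (a * b) = ψ a + ψ b
  map_eq_zero : ∀ a ∈ B w, a ∈ B x → ψ a = 0
  mem : z ∈ B w
  map_eq_one : ψ z = 1

namespace IsLeafCharacter

theorem map_one (h : IsLeafCharacter T B w x z ψ) : ψ 1 = 0 := by
  simpa using h.map_mul 1 (one_mem _) 1 (one_mem _)

theorem map_inv (h : IsLeafCharacter T B w x z ψ) {a : G} (ha : a ∈ B w) : ψ a⁻¹ = -ψ a := by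
  rw [eq_neg_iff_add_eq_zero, ← h.map_mul _ (inv_mem ha) _ ha, inv_mul_cancel, h.map_one]

theorem zpow_mem (h : IsLeafCharacter T B w x z ψ) (i : ℤ) : z ^ i ∈ B w :=
  Subgroup.zpow_mem _ h.mem i

theorem map_zpow (h : IsLeafCharacter T B w x z ψ) (i : ℤ) : ψ (z ^ i) = i := by
  induction i using Int.induction_on with
  | zero => rw [zpow_zero, h.map_one]
  | succ i ih => rw [zpow_add_one, h.map_mul _ (h.zpow_mem _) _ h.mem, ih, h.map_eq_one]
  | pred i ih =>
    rw [zpow_sub_one, h.map_mul _ (h.zpow_mem _) _ (inv_mem h.mem), ih, h.map_inv h.mem,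
      h.map_eq_one, sub_eq_add_neg]

theorem zpow_mul_zpow_mem (h : IsLeafCharacter T B w x z ψ) {a : G} (ha : a ∈ B w) (i j : ℤ) :
    z ^ i * a * z ^ j ∈ B w :=
  mul_mem (mul_mem (h.zpow_mem i) ha) (h.zpow_mem j)

theorem map_zpow_mul_zpow (h : IsLeafCharacter T B w x z ψ) {a : G} (ha : a ∈ B w) (i j : ℤ) :
    ψ (z ^ i * a * z ^ j) = i + ψ a + j := by
  rw [h.map_mul _ (mul_mem (h.zpow_mem i) ha) _ (h.zpow_mem j), h.map_mul _ (h.zpow_mem i) _ ha,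
    h.map_zpow, h.map_zpow]

/-- The kernel of the restriction of `ψ` to `B w`. -/
def ker (h : IsLeafCharacter T B w x z ψ) : Subgroup G where
  carrier := {a | a ∈ B w ∧ ψ a = 0}
  mul_mem' ha hb := ⟨mul_mem ha.1 hb.1, by rw [h.map_mul _ ha.1 _ hb.1, ha.2, hb.2, add_zero]⟩
  one_mem' := ⟨one_mem _, h.map_one⟩
  inv_mem' ha := ⟨inv_mem ha.1, by rw [h.map_inv ha.1, ha.2, neg_zero]⟩

theorem mem_ker (h : IsLeafCharacter T B w x z ψ) {a : G} : a ∈ h.ker ↔ a ∈ B w ∧ ψ a = 0 :=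
  Iff.rfl

/-- The vertex groups over the unfolded graph: the kernel of `ψ` at `none`, and the conjugate of
`B y` by `z ^ i` at the `i`-th copy of `y`. -/
def unfoldGroup (h : IsLeafCharacter T B w x z ψ) : Option (ι × ℤ) → Subgroup G
  | none => h.ker
  | some p => MulAut.conj (z ^ p.2) • B p.1

theorem zpow_mul_zpow_mem_of_mem_unfoldGroup (h : IsLeafCharacter T B w x z ψ)
    {a : Option (ι × ℤ)} {i j : ℤ} (hi : HasLevel a i) (hj : HasLevel a j) {c : G}
    (hc : c ∈ h.unfoldGroup a) : z ^ (-i) * c * z ^ j ∈ B (unfoldProj w a) := by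
  obtain _ | p := a
  · exact h.zpow_mul_zpow_mem hc.1 _ _
  · rw [← hi p rfl, ← hj p rfl]
    exact mem_conj_zpow_smul.1 hc

theorem conj_smul_inf_le_unfoldGroup (h : IsLeafCharacter T B w x z ψ) {a b : Option (ι × ℤ)}
    {i : ℤ} (hab : (unfoldGraph T w).Adj a b) (hi : HasLevel a i) :
    MulAut.conj (z ^ i) • (B (unfoldProj w a) ⊓ B (unfoldProj w b)) ≤ h.unfoldGroup a := by
  intro c hc
  obtain ⟨hca, hcb⟩ := mem_conj_zpow_smul.1 hc
  obtain _ | p := a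
  · rw [h.eq_of_adj hab.1] at hcb
    have hc' := h.zpow_mul_zpow_mem hca i (-i)
    have hψ := h.map_zpow_mul_zpow hca i (-i)
    rw [h.map_eq_zero _ hca hcb] at hψ
    rw [show z ^ i * (z ^ (-i) * c * z ^ i) * z ^ (-i) = c by group] at hc' hψ
    exact ⟨hc', by omega⟩
  · rw [← hi p rfl] at hca
    exact mem_conj_zpow_smul.2 hca

theorem unfoldGroup_inf (h : IsLeafCharacter T B w x z ψ) {a b : Option (ι × ℤ)} {i : ℤ}
    (hab : (unfoldGraph T w).Adj a b) (hai : HasLevel a i) (hbi : HasLevel b i) :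
    h.unfoldGroup a ⊓ h.unfoldGroup b =
      MulAut.conj (z ^ i) • (B (unfoldProj w a) ⊓ B (unfoldProj w b)) := by
  refine le_antisymm (fun c hc => mem_conj_zpow_smul.2 <| Subgroup.mem_inf.2
    ⟨h.zpow_mul_zpow_mem_of_mem_unfoldGroup hai hai hc.1,
      h.zpow_mul_zpow_mem_of_mem_unfoldGroup hbi hbi hc.2⟩)
    (le_inf (h.conj_smul_inf_le_unfoldGroup hab hai) ?_)
  rw [inf_comm]
  exact h.conj_smul_inf_le_unfoldGroup hab.symm hbi

/-- A turn at `none` between different levels does not backtrack in `T`, since its element has a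
nonzero value under `ψ`. -/
theorem level_eq_of_zpow_mul_zpow_mem (h : IsLeafCharacter T B w x z ψ) {a b : Option (ι × ℤ)}
    {i j : ℤ} (hab : (unfoldGraph T w).Adj a b) (hi : HasLevel b i) (hj : HasLevel b j) {c : G}
    (hc : c ∈ h.unfoldGroup b) (hca : z ^ (-i) * c * z ^ j ∈ B (unfoldProj w a)) : i = j := by
  obtain _ | p := b
  · have hψ := h.map_zpow_mul_zpow hc.1 (-i) j
    rw [h.map_eq_zero _ (h.zpow_mul_zpow_mem hc.1 _ _) (h.eq_of_adj hab.1.symm ▸ hca), hc.2] at hψ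
    omega
  · exact (hi p rfl).symm.trans (hj p rfl)

theorem prod_notMem_unfoldGroup (hT : IsTreeAmalgam T B) (h : IsLeafCharacter T B w x z ψ) (n : ℕ)
    (v : ℕ → Option (ι × ℤ)) (g : ℕ → G) (hn : 1 ≤ n)
    (hv : ∀ k < n, (unfoldGraph T w).Adj (v k) (v (k + 1)))
    (hg : ∀ k < n, g k ∈ h.unfoldGroup (v k))
    (hred : ∀ k, k + 2 ≤ n → v k = v (k + 2) → g (k + 1) ∉ h.unfoldGroup (v k))
    (hclosed : v n = v 0) : rangeProd g n ∉ h.unfoldGroup (v 0) := by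
  obtain ⟨l, hl, hl'⟩ := exists_walk_levels hv
  intro hmem
  refine hT.prod_notMem n (fun k => unfoldProj w (v k))
    (fun k => z ^ (-l k) * g k * z ^ l (k + 1)) hn (fun k hk => (hv k hk).1)
    (fun k hk => h.zpow_mul_zpow_mem_of_mem_unfoldGroup (hl k) (hl' k hk) (hg k hk))
    (fun k hk hproj hgk => ?_) (congrArg _ hclosed) ?_
  · have hadj := hv k (by omega)
    have hgk' := hg (k + 1) (by omega)
    have hlev := h.level_eq_of_zpow_mul_zpow_mem hadj (hl (k + 1)) (hl' (k + 1) (by omega)) hgk' hgk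
    have hlk := hl' k (by omega)
    have hlk2 : HasLevel (v (k + 2)) (l (k + 1)) := hlev ▸ hl (k + 2)
    refine hred k hk (eq_of_unfoldProj_eq hadj (hv (k + 1) (by omega)).symm hlk hlk2 hproj)
      (h.conj_smul_inf_le_unfoldGroup hadj hlk (mem_conj_zpow_smul.2 ⟨?_, ?_⟩))
    · rwa [← hlev] at hgk
    · exact h.zpow_mul_zpow_mem_of_mem_unfoldGroup (hl (k + 1)) (hl (k + 1)) hgk'
  · rw [rangeProd_zpow_mul_zpow]
    exact h.zpow_mul_zpow_mem_of_mem_unfoldGroup (hl 0) (hclosed ▸ hl n) hmem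

theorem isTreeAmalgam_unfold (hT : IsTreeAmalgam T B) (h : IsLeafCharacter T B w x z ψ) :
    IsTreeAmalgam (unfoldGraph T w) h.unfoldGroup where
  isAcyclic :=
    have ⟨_, hd⟩ := exists_isHeight hT.isAcyclic w
    hd.unfold.isAcyclic
  prod_notMem := h.prod_notMem_unfoldGroup hT
  isFreeGroup
    | none => isFreeGroup_of_le (fun _ ha => ha.1) (hT.isFreeGroup w)
    | some p =>
      have := hT.isFreeGroup p.1
      .ofMulEquiv (Subgroup.equivSMul (MulAut.conj (z ^ p.2)) (B p.1))
  exists_inf_eq_zpowers hab := by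
    obtain ⟨i, hai, hbi⟩ := exists_hasLevel_of_adj hab
    obtain ⟨u, hu, he⟩ := hT.exists_inf_eq_zpowers hab.1
    refine ⟨MulAut.conj (z ^ i) u, (map_ne_one_iff _ (MulEquiv.injective _)).2 hu, ?_⟩
    rw [h.unfoldGroup_inf hab hai hbi, he]
    exact MonoidHom.map_zpowers _ u
  isolated {a b} hab c hc n hn hcn := by
    obtain ⟨i, hai, hbi⟩ := exists_hasLevel_of_adj hab
    have hca := h.zpow_mul_zpow_mem_of_mem_unfoldGroup hai hai hc
    have hcb := h.zpow_mul_zpow_mem_of_mem_unfoldGroup hbi hbi hcn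
    have hconj : (z ^ (-i) * c * z ^ i) ^ n = z ^ (-i) * c ^ n * z ^ i := by
      simpa using conj_zpow (a := z ^ (-i)) (b := c) (i := n)
    exact h.conj_smul_inf_le_unfoldGroup hab.symm hbi (mem_conj_zpow_smul.2
      ⟨hT.isolated hab.1 _ hca n hn (hconj ▸ hcb), hca⟩)

end IsLeafCharacter

end Unfolding

section ClosedWalk

variable {ι : Type v} {G : Type u} [Group G] {T : SimpleGraph ι} {B : ι → Subgroup G} {N : ℕ}
  {v : ℕ → ι} {g : ℕ → G} {d : ι → ℕ} {r : ι}

/-- The `N`-periodic sequences `v` and `g` form a cyclically reduced closed word of length `N`: a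
closed walk in `T` with letters in the vertex groups and without backtracking. -/
structure IsClosedWalk (T : SimpleGraph ι) (B : ι → Subgroup G) (N : ℕ) (v : ℕ → ι) (g : ℕ → G) :
    Prop where
  pos : 0 < N
  periodic_vertex : v.Periodic N
  periodic_letter : g.Periodic N
  adj : ∀ k, T.Adj (v k) (v (k + 1))
  mem : ∀ k, g k ∈ B (v k)
  reduced : ∀ k, v k = v (k + 2) → g (k + 1) ∉ B (v k)

namespace IsClosedWalk

theorem exists_ge (h : IsClosedWalk T B N v g) (k m : ℕ) : ∃ k' ≥ m, v k' = v k ∧ g k' = g k :=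
  ⟨k + m * N, (Nat.le_mul_of_pos_right m h.pos).trans (Nat.le_add_left _ _),
    h.periodic_vertex.nat_mul m k, h.periodic_letter.nat_mul m k⟩

theorem exists_visit_of_leaf (h : IsClosedWalk T B N v g) {k : ℕ} {x : ι}
    (hx : ∀ y ∈ Set.range v, T.Adj (v k) y → y = x) :
    ∃ m, v m = x ∧ v (m + 1) = v k ∧ g (m + 1) = g k ∧ v (m + 2) = x := by
  obtain ⟨_ | m, hm, hvm, hgm⟩ := h.exists_ge k 1
  · omega
  have hadj := h.adj m
  have hadj' := h.adj (m + 1)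
  rw [hvm] at hadj hadj'
  exact ⟨m, hx _ ⟨m, rfl⟩ hadj.symm, hvm, hgm, hx _ ⟨m + 2, rfl⟩ hadj'⟩

theorem range_eq (h : IsClosedWalk T B N v g) : Set.range v = v '' Finset.range N :=
  Set.Subset.antisymm (Set.range_subset_iff.2 fun k =>
    ⟨k % N, by simpa using Nat.mod_lt k h.pos, h.periodic_vertex.map_mod_nat k⟩)
    (Set.image_subset_range _ _)

theorem finite_range (h : IsClosedWalk T B N v g) : (Set.range v).Finite :=
  h.range_eq ▸ (Finset.range N).finite_toSet.image v

theorem ncard_range_le (h : IsClosedWalk T B N v g) : (Set.range v).ncard ≤ N := by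
  rw [h.range_eq]
  exact (Set.ncard_image_le (Finset.finite_toSet _)).trans (by simp)

theorem isRootedSubtree_range (h : IsClosedWalk T B N v g) (hd : IsHeight T r d)
    (hr : r ∈ Set.range v) : IsRootedSubtree T d r (Set.range v) := by
  obtain ⟨i, rfl⟩ := hr
  let Lower (a b : ι) : Prop := b ∈ Set.range v ∧ T.Adj a b ∧ d b < d a
  have hdescend (k : ℕ) : Relation.ReflTransGen Lower (v (i + k)) (v i) := by
    induction k with
    | zero => exact .refl
    | succ k ih =>
      have hadj := h.adj (i + k)
      obtain hlt | hlt := hd.adj hadj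
      · obtain heq | ⟨b, ⟨-, hb, hblt⟩, hbi⟩ := ih.cases_head
        · rw [heq, hd.root] at hlt
          omega
        · exact hd.unique hb hadj hblt (Nat.lt_of_succ_le hlt.ge) ▸ hbi
      · exact .head ⟨⟨_, rfl⟩, hadj.symm, Nat.lt_of_succ_le hlt.ge⟩ ih
  refine ⟨⟨i, rfl⟩, ?_⟩
  rintro _ ⟨k, rfl⟩ hne
  obtain ⟨k', hk', hvk, -⟩ := h.exists_ge k i
  have hk := hdescend (k' - i)
  rw [Nat.add_sub_cancel' hk', hvk] at hk
  obtain heq | ⟨b, hb, -⟩ := hk.cases_head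
  · exact absurd heq hne
  · exact ⟨b, hb⟩

end IsClosedWalk

end ClosedWalk

section WalkLift

variable {ι : Type v} {G : Type u} {T : SimpleGraph ι} {v : ℕ → ι} {g : ℕ → G} {w : ι} {ψ : G → ℤ}

open Classical in
/-- The sum of the values of `ψ` at the first `k` letters of the closed walk `(v, g)`, letters at
vertices other than `w` being ignored. For `ψ : G → ℤ` this is the level of the `k`-th vertex of the
lift of the closed walk to the unfolded graph. -/
noncomputable def walkLevel {M : Type*} [AddCommMonoid M] (w : ι) (ψ : G → M) (v : ℕ → ι)
    (g : ℕ → G) (k : ℕ) : M :=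
  ∑ j ∈ Finset.range k, if v j = w then ψ (g j) else 0

theorem map_walkLevel {M M' : Type*} [AddCommMonoid M] [AddCommMonoid M'] (f : M →+ M')
    (ψ : G → M) (k : ℕ) : f (walkLevel w ψ v g k) = walkLevel w (fun b => f (ψ b)) v g k := by
  simp only [walkLevel, map_sum, apply_ite f, map_zero]

open Classical in
/-- The vertices of the lift of the closed walk `(v, g)` to the unfolded graph. -/
noncomputable def liftVertex (w : ι) (ψ : G → ℤ) (v : ℕ → ι) (g : ℕ → G) (k : ℕ) :
    Option (ι × ℤ) :=
  if v k = w then none else some (v k, walkLevel w ψ v g k)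

theorem walkLevel_succ_of_eq {k : ℕ} (hk : v k = w) :
    walkLevel w ψ v g (k + 1) = walkLevel w ψ v g k + ψ (g k) := by
  rw [walkLevel, Finset.sum_range_succ, if_pos hk, walkLevel]

theorem walkLevel_succ_of_ne {k : ℕ} (hk : v k ≠ w) :
    walkLevel w ψ v g (k + 1) = walkLevel w ψ v g k := by
  rw [walkLevel, Finset.sum_range_succ, if_neg hk, add_zero, walkLevel]

theorem liftVertex_of_ne {k : ℕ} (hk : v k ≠ w) :
    liftVertex w ψ v g k = some (v k, walkLevel w ψ v g k) :=
  if_neg hk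

theorem ne_of_mem_liftVertex {k : ℕ} {p : ι × ℤ} (hp : p ∈ liftVertex w ψ v g k) :
    v k ≠ w ∧ p = (v k, walkLevel w ψ v g k) := by
  rw [liftVertex] at hp
  split_ifs at hp with hk
  · cases hp
  · exact ⟨hk, (Option.some.inj hp).symm⟩

theorem hasLevel_liftVertex (k : ℕ) : HasLevel (liftVertex w ψ v g k) (walkLevel w ψ v g k) :=
  fun _ hp => (ne_of_mem_liftVertex hp).2 ▸ rfl

theorem hasLevel_liftVertex_succ (k : ℕ) :
    HasLevel (liftVertex w ψ v g k) (walkLevel w ψ v g (k + 1)) := fun _ hp =>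
  have ⟨hk, h⟩ := ne_of_mem_liftVertex hp
  h ▸ (walkLevel_succ_of_ne hk).symm

@[simp]
theorem unfoldProj_liftVertex (k : ℕ) : unfoldProj w (liftVertex w ψ v g k) = v k := by
  rw [liftVertex]
  split_ifs with hk
  · exact hk.symm
  · rfl

theorem periodic_walkLevel {N : ℕ} (hv : v.Periodic N) (hg : g.Periodic N)
    (hN : walkLevel w ψ v g N = 0) : (walkLevel w ψ v g).Periodic N := by
  intro k
  induction k with
  | zero => simpa [walkLevel] using hN
  | succ k ih =>
    rw [add_right_comm]
    by_cases hk : v k = w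
    · rw [walkLevel_succ_of_eq hk, walkLevel_succ_of_eq ((hv k).trans hk), ih, hg]
    · rw [walkLevel_succ_of_ne hk, walkLevel_succ_of_ne (hv k ▸ hk), ih]

theorem adj_liftVertex {k : ℕ} (h : T.Adj (v k) (v (k + 1))) :
    (unfoldGraph T w).Adj (liftVertex w ψ v g k) (liftVertex w ψ v g (k + 1)) := by
  refine ⟨by simpa using h, ?_, ?_, fun p hp q hq => ?_⟩
  · rintro p hp rfl
    exact (ne_of_mem_liftVertex hp).1 (congrArg Prod.fst (ne_of_mem_liftVertex hp).2).symm
  · rintro p hp rfl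
    exact (ne_of_mem_liftVertex hp).1 (congrArg Prod.fst (ne_of_mem_liftVertex hp).2).symm
  · exact (hasLevel_liftVertex_succ k p hp).trans (hasLevel_liftVertex (k + 1) q hq).symm

end WalkLift

section LiftLetter

variable {ι : Type v} {G : Type u} [Group G] {T : SimpleGraph ι} {B : ι → Subgroup G} {N : ℕ}
  {v : ℕ → ι} {g : ℕ → G} {w x : ι} {z : G} {ψ : G → ℤ}

/-- The letters of the lift of the closed walk `(v, g)` to the unfolded graph. -/
noncomputable def liftLetter (w : ι) (ψ : G → ℤ) (z : G) (v : ℕ → ι) (g : ℕ → G) (k : ℕ) : G :=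
  z ^ walkLevel w ψ v g k * g k * z ^ (-walkLevel w ψ v g (k + 1))

theorem rangeProd_liftLetter (n : ℕ) :
    rangeProd (liftLetter w ψ z v g) n = rangeProd g n * z ^ (-walkLevel w ψ v g n) := by
  have h := rangeProd_zpow_mul_zpow z (fun k => -walkLevel w ψ v g k) g n
  simp only [neg_neg] at h
  exact h.trans (by simp [walkLevel])

namespace IsLeafCharacter

theorem liftLetter_mem (h : IsLeafCharacter T B w x z ψ) {k : ℕ} (hg : g k ∈ B (v k)) :
    liftLetter w ψ z v g k ∈ h.unfoldGroup (liftVertex w ψ v g k) := by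
  by_cases hk : v k = w
  · rw [hk] at hg
    rw [liftVertex, if_pos hk]
    refine ⟨h.zpow_mul_zpow_mem hg _ _, ?_⟩
    rw [liftLetter, h.map_zpow_mul_zpow hg, walkLevel_succ_of_eq hk, add_neg_cancel]
  · rw [liftVertex_of_ne hk, liftLetter, walkLevel_succ_of_ne hk]
    exact mem_conj_zpow_smul.2 (by simpa [mul_assoc] using hg)

theorem isClosedWalk_lift (h : IsLeafCharacter T B w x z ψ) (hw : IsClosedWalk T B N v g)
    (hN : walkLevel w ψ v g N = 0) :
    IsClosedWalk (unfoldGraph T w) h.unfoldGroup N (liftVertex w ψ v g) (liftLetter w ψ z v g) where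
  pos := hw.pos
  periodic_vertex k := by
    rw [liftVertex, liftVertex, hw.periodic_vertex,
      periodic_walkLevel hw.periodic_vertex hw.periodic_letter hN]
  periodic_letter k := by
    have hlev := periodic_walkLevel hw.periodic_vertex hw.periodic_letter hN
    rw [liftLetter, liftLetter, hw.periodic_letter, hlev, add_right_comm, hlev]
  adj k := adj_liftVertex (hw.adj k)
  mem k := h.liftLetter_mem (hw.mem k)
  reduced k hk hmem := by
    have hlev := hasLevel_liftVertex (w := w) (ψ := ψ) (v := v) (g := g) (k + 2)
    rw [← hk] at hlev
    have hgk := h.zpow_mul_zpow_mem_of_mem_unfoldGroup (hasLevel_liftVertex_succ k) hlev hmem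
    refine hw.reduced k (by simpa using congrArg (unfoldProj w) hk) ?_
    simpa [liftLetter, mul_assoc] using hgk

theorem exists_mem_range_liftVertex (h : IsLeafCharacter T B w x z ψ)
    (hw : IsClosedWalk T B N v g) (hk : ∃ k, v k = w ∧ ψ (g k) ≠ 0) :
    ∃ i j : ℤ, i ≠ j ∧ some (x, i) ∈ Set.range (liftVertex w ψ v g) ∧
      some (x, j) ∈ Set.range (liftVertex w ψ v g) := by
  obtain ⟨k₀, hk₀, hψ⟩ := hk
  obtain ⟨m, hm0, hm1, hgm, hm2⟩ :=
    hw.exists_visit_of_leaf fun y _ hy => h.eq_of_adj (hk₀ ▸ hy)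
  rw [hk₀] at hm1
  rw [← hgm] at hψ
  have hne : v m ≠ w := hm1 ▸ (hw.adj m).ne
  have hne' : v (m + 2) ≠ w := hm1 ▸ (hw.adj (m + 1)).ne'
  refine ⟨_, _, ?_, ⟨m, hm0 ▸ liftVertex_of_ne hne⟩, ⟨m + 2, hm2 ▸ liftVertex_of_ne hne'⟩⟩
  rw [walkLevel_succ_of_eq hm1, walkLevel_succ_of_ne hne]
  omega

theorem ncard_range_lt (h : IsLeafCharacter T B w x z ψ) (hw : IsClosedWalk T B N v g)
    (hN : walkLevel w ψ v g N = 0) (hk : ∃ k, v k = w ∧ ψ (g k) ≠ 0) :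
    (Set.range v).ncard < (Set.range (liftVertex w ψ v g)).ncard := by
  obtain ⟨i, j, hij, hi, hj⟩ := h.exists_mem_range_liftVertex hw hk
  have hfin := (h.isClosedWalk_lift hw hN).finite_range
  have hsub : Set.range v ⊆ unfoldProj w '' (Set.range (liftVertex w ψ v g) \ {some (x, i)}) := by
    rintro _ ⟨k, rfl⟩
    have hproj := unfoldProj_liftVertex (w := w) (ψ := ψ) (v := v) (g := g) k
    by_cases hc : liftVertex w ψ v g k = some (x, i)
    · exact ⟨some (x, j), ⟨hj, by simpa using hij.symm⟩, by rw [← hproj, hc]; rfl⟩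
    · exact ⟨_, ⟨⟨k, rfl⟩, hc⟩, hproj⟩
  calc (Set.range v).ncard
      ≤ (unfoldProj w '' (Set.range (liftVertex w ψ v g) \ {some (x, i)})).ncard :=
        Set.ncard_le_ncard hsub (hfin.sdiff.image _)
    _ ≤ (Set.range (liftVertex w ψ v g) \ {some (x, i)}).ncard := Set.ncard_image_le hfin.sdiff
    _ < (Set.range (liftVertex w ψ v g)).ncard := Set.ncard_sdiff_singleton_lt_of_mem hi hfin

end IsLeafCharacter

end LiftLetter

section StableLetter

open scoped Pointwise

variable {G : Type u} {P : Type v} {E : Type w} [Group G] [Group P] [Group E] {L L' : Subgroup G}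
  {z : G} {f : G → E} {t : E} {y : G}

/-- Conjugation by `t` realises, on the images under `f`, conjugation by `z` on `L`. -/
def IsStableLetter (L : Subgroup G) (z : G) (f : G → E) (t : E) : Prop :=
  ∀ y ∈ L, t * f y * t⁻¹ = f (z * y * z⁻¹)

theorem exists_isStableLetter {f : G → P} (hf : HomOn L' f) (hL : L ≤ L')
    (hzL : MulAut.conj z • L ≤ L') (hk : TrivialKerOn L f)
    (hzk : TrivialKerOn (MulAut.conj z • L) f) :
    ∃ (E : Type v) (_ : Group E) (o : P →* E) (t : E), Function.Injective o ∧
      IsStableLetter L z (fun y => o (f y)) t := by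
  have hinj : Function.Injective (hf.mono hL).toMonoidHom := fun a b hab =>
    Subtype.ext ((hf.mono hL).injOn hk a.2 b.2 hab)
  have hzinj : Function.Injective (hf.mono hzL).toMonoidHom := fun a b hab =>
    Subtype.ext ((hf.mono hzL).injOn hzk a.2 b.2 hab)
  let φ : (hf.mono hL).toMonoidHom.range ≃* (hf.mono hzL).toMonoidHom.range :=
    ((MonoidHom.ofInjective hinj).symm.trans (Subgroup.equivSMul (MulAut.conj z) L)).trans
      (MonoidHom.ofInjective hzinj)
  refine ⟨HNNExtension P _ _ φ, inferInstance, HNNExtension.of, HNNExtension.t,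
    HNNExtension.of_injective φ, fun y hy => ?_⟩
  have hφ : (φ (MonoidHom.ofInjective hinj ⟨y, hy⟩) : P) = f (z * y * z⁻¹) := by
    simp only [φ, MulEquiv.trans_apply, MulEquiv.symm_apply_apply]
    rfl
  change HNNExtension.t * HNNExtension.of (f y) * HNNExtension.t⁻¹ = .of (f (z * y * z⁻¹))
  rw [← hφ, HNNExtension.equiv_eq_conj]
  rfl

/-- The value at `y` of the extension of `f` that sends `z` to `t`, read off at the conjugate of
`y` by `z ^ i`. -/
def conjValue (z : G) (f : G → E) (t : E) (i : ℤ) (y : G) : E :=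
  t ^ (-i) * f (z ^ i * y * z ^ (-i)) * t ^ i

theorem IsStableLetter.conjValue_add_one (ht : IsStableLetter L z f t) {i : ℤ}
    (hy : z ^ i * y * z ^ (-i) ∈ L) : conjValue z f t (i + 1) y = conjValue z f t i y := by
  have hconj : z ^ (i + 1) * y * z ^ (-(i + 1)) = z * (z ^ i * y * z ^ (-i)) * z⁻¹ := by group
  rw [conjValue, conjValue, hconj, ← ht _ hy]
  group

theorem IsStableLetter.conjValue_eq_of_le (ht : IsStableLetter L z f t) {i j : ℤ} (hij : i ≤ j)
    (hy : ∀ k, i ≤ k → k < j → z ^ k * y * z ^ (-k) ∈ L) :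
    conjValue z f t j y = conjValue z f t i y := by
  induction j, hij using Int.leInduction with
  | base => rfl
  | succ k hk ih =>
    rw [ht.conjValue_add_one (hy k hk (Int.lt_succ k)), ih fun l hl hlk => hy l hl (by omega)]

theorem HomOn.conjValue (hf : HomOn L f) {i : ℤ} (hL : ∀ y ∈ L', z ^ i * y * z ^ (-i) ∈ L) :
    HomOn L' (conjValue z f t i) := by
  intro a ha b hb
  have hconj : z ^ i * (a * b) * z ^ (-i) = z ^ i * a * z ^ (-i) * (z ^ i * b * z ^ (-i)) := by
    group
  rw [Freiheitssatz.conjValue, hconj, hf _ (hL a ha) _ (hL b hb), Freiheitssatz.conjValue,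
    Freiheitssatz.conjValue]
  group

end StableLetter

section Window

open scoped Pointwise

variable {ι : Type v} {G : Type u} [Group G] {T : SimpleGraph ι} {B : ι → Subgroup G}
  {w x : ι} {z : G} {ψ : G → ℤ} {d : ι → ℕ} {V : Set ι} {a b m M : ℤ}

/-- The part of the copies `a, …, b` of `V` in the unfolded graph; it contains `none`. -/
def window (V : Set ι) (w : ι) (a b : ℤ) : Set (Option (ι × ℤ)) :=
  {c | ∀ p ∈ c, p.1 ∈ V ∧ p.1 ≠ w ∧ p.2 ∈ Set.Icc a b}

theorem none_mem_window : none ∈ window V w a b := by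
  rintro _ ⟨⟩

theorem some_mem_window {p : ι × ℤ} :
    some p ∈ window V w a b ↔ p.1 ∈ V ∧ p.1 ≠ w ∧ p.2 ∈ Set.Icc a b :=
  ⟨fun h => h p rfl, fun h _ hp => Option.mem_some.1 hp ▸ h⟩

theorem window_mono {a' b' : ℤ} (ha : a' ≤ a) (hb : b ≤ b') :
    window V w a b ⊆ window V w a' b' := fun _ hc p hp =>
  have ⟨hV, hne, hI⟩ := hc p hp
  ⟨hV, hne, Set.Icc_subset_Icc ha hb hI⟩

theorem finite_window (hV : V.Finite) : (window V w a b).Finite := by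
  refine (((hV.prod (Set.finite_Icc a b)).image some).insert none).subset ?_
  rintro (_ | p) hp
  · exact .inl rfl
  · obtain ⟨hpV, -, hI⟩ := some_mem_window.1 hp
    exact .inr ⟨p, ⟨hpV, hI⟩, rfl⟩

theorem IsRootedSubtree.window (hV : IsRootedSubtree T d w V) :
    IsRootedSubtree (unfoldGraph T w) (d ∘ unfoldProj w) none (window V w a b) := by
  refine ⟨none_mem_window, ?_⟩
  rintro (_ | ⟨y, i⟩) hc hne
  · exact absurd rfl hne
  · obtain ⟨hy, hyw, hi⟩ := some_mem_window.1 hc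
    obtain ⟨y', hy', hadj, hlt⟩ := hV.2 y hy hyw
    obtain rfl | hne' := eq_or_ne y' w
    · exact ⟨none, none_mem_window, ⟨hadj, by simpa using hyw, by simp, by simp⟩, hlt⟩
    · exact ⟨some (y', i), some_mem_window.2 ⟨hy', hne', hi⟩,
        ⟨hadj, by simpa using hyw, by simpa using hne', by simp⟩, hlt⟩

namespace IsLeafCharacter

/-- The subgroup generated by the vertex groups of a window of the unfolded graph. -/
abbrev windowGroup (h : IsLeafCharacter T B w x z ψ) (V : Set ι) (a b : ℤ) : Subgroup G :=
  vertexClosure h.unfoldGroup (window V w a b)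

theorem conj_zpow_mem_ker (h : IsLeafCharacter T B w x z ψ) {c : G} (hc : c ∈ h.ker) (i : ℤ) :
    z ^ i * c * z ^ (-i) ∈ h.ker :=
  ⟨h.zpow_mul_zpow_mem hc.1 _ _, by rw [h.map_zpow_mul_zpow hc.1, hc.2]; omega⟩

theorem mul_zpow_mem_ker (h : IsLeafCharacter T B w x z ψ) {c : G} (hc : c ∈ B w) :
    c * z ^ (-ψ c) ∈ h.ker :=
  ⟨mul_mem hc (h.zpow_mem _), by rw [h.map_mul _ hc _ (h.zpow_mem _), h.map_zpow]; omega⟩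

theorem ker_le_windowGroup (h : IsLeafCharacter T B w x z ψ) : h.ker ≤ h.windowGroup V a b :=
  le_vertexClosure h.unfoldGroup none_mem_window

theorem conj_zpow_mem_windowGroup (h : IsLeafCharacter T B w x z ψ) {y : ι} (hy : y ∈ V)
    (hyw : y ≠ w) {i : ℤ} (hi : i ∈ Set.Icc a b) {c : G} (hc : c ∈ B y) :
    z ^ i * c * z ^ (-i) ∈ h.windowGroup V a b := by
  refine le_vertexClosure h.unfoldGroup (v := some (y, i)) (some_mem_window.2 ⟨hy, hyw, hi⟩)
    (mem_conj_zpow_smul.2 ?_)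
  rwa [show z ^ (-i) * (z ^ i * c * z ^ (-i)) * z ^ i = c by group]

theorem windowGroup_le (h : IsLeafCharacter T B w x z ψ) {L : Subgroup G} (hker : h.ker ≤ L)
    (hL : ∀ y ∈ V, y ≠ w → ∀ i ∈ Set.Icc a b, ∀ c ∈ B y, z ^ i * c * z ^ (-i) ∈ L) :
    h.windowGroup V a b ≤ L := by
  refine vertexClosure_le ?_
  rintro (_ | ⟨y, i⟩) hp c hc
  · exact hker hc
  · obtain ⟨hy, hyw, hi⟩ := some_mem_window.1 hp
    simpa [mul_assoc] using hL y hy hyw i hi _ (mem_conj_zpow_smul.1 hc)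

theorem conj_smul_windowGroup_le (h : IsLeafCharacter T B w x z ψ) :
    MulAut.conj z • h.windowGroup V a b ≤ h.windowGroup V (a + 1) (b + 1) := by
  refine Subgroup.pointwise_smul_subset_iff.2 (h.windowGroup_le (fun c hc => ?_)
    fun y hy hyw i hi c hc => ?_) <;> refine Subgroup.mem_inv_pointwise_smul_iff.2 ?_ <;>
    rw [MulAut.smul_def, MulAut.conj_apply]
  · simpa using h.ker_le_windowGroup (h.conj_zpow_mem_ker hc 1)
  · rw [show z * (z ^ i * c * z ^ (-i)) * z⁻¹ = z ^ (i + 1) * c * z ^ (-(i + 1)) by group]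
    exact h.conj_zpow_mem_windowGroup hy hyw
      ⟨add_le_add_left hi.1 1, add_le_add_left hi.2 1⟩ hc

end IsLeafCharacter

end Window

section Magnus

open scoped Pointwise

variable {ι : Type v} {G : Type u} [Group G] {T : SimpleGraph ι} {B : ι → Subgroup G}
  {w x : ι} {z : G} {ψ : G → ℤ} {d : ι → ℕ} {V : Set ι} {m M : ℤ}

namespace IsLeafCharacter

section StableLetter

variable {E : Type w} [Group E] {f : G → E} {t : E}

theorem conjValue_ker (h : IsLeafCharacter T B w x z ψ)
    (ht : IsStableLetter (h.windowGroup V m (M - 1)) z f t) {c : G} (hc : c ∈ h.ker) (i : ℤ) :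
    conjValue z f t i c = f c := by
  have hmem (k : ℤ) : z ^ k * c * z ^ (-k) ∈ h.windowGroup V m (M - 1) :=
    h.ker_le_windowGroup (h.conj_zpow_mem_ker hc k)
  have hzero : conjValue z f t 0 c = f c := by simp [conjValue]
  rw [← hzero]
  obtain hi | hi := le_total 0 i
  · exact ht.conjValue_eq_of_le hi fun k _ _ => hmem k
  · exact (ht.conjValue_eq_of_le hi fun k _ _ => hmem k).symm

theorem homOn_leaf (h : IsLeafCharacter T B w x z ψ)
    (hf : HomOn (h.windowGroup V m M) f)
    (ht : IsStableLetter (h.windowGroup V m (M - 1)) z f t) :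
    HomOn (B w) fun c => f (c * z ^ (-ψ c)) * t ^ ψ c := by
  intro a ha b hb
  have hker := h.ker_le_windowGroup (V := V) (a := m) (b := M)
  have ha' := h.mul_zpow_mem_ker ha
  have hb' := h.mul_zpow_mem_ker hb
  have hsplit : a * b * z ^ (-(ψ a + ψ b)) =
      a * z ^ (-ψ a) * (z ^ ψ a * (b * z ^ (-ψ b)) * z ^ (-ψ a)) := by group
  have hconj := h.conjValue_ker ht hb' (ψ a)
  simp only
  rw [h.map_mul a ha b hb, hsplit, hf _ (hker ha') _ (hker (h.conj_zpow_mem_ker hb' _)), ← hconj,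
    conjValue]
  group

/-- At the vertices other than the leaf `w` the extension is determined by any one copy. -/
theorem exists_homOn_of_isStableLetter (hT : IsTreeAmalgam T B) (h : IsLeafCharacter T B w x z ψ)
    (hV : IsRootedSubtree T d w V) (hm : m < M) (hf : HomOn (h.windowGroup V m M) f)
    (ht : IsStableLetter (h.windowGroup V m (M - 1)) z f t) :
    ∃ θ : G → E, HomOn (vertexClosure B V) θ ∧
      Set.EqOn θ (fun c => f (c * z ^ (-ψ c)) * t ^ ψ c) (B w) ∧
      ∀ y ∈ V, y ≠ w → Set.EqOn θ (conjValue z f t m) (B y) := by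
  obtain ⟨θ, hθ, hθw, hθV⟩ := hT.exists_homOn_of_leaf hV (fun y _ => h.eq_of_adj)
    (fun y hy hyw => hf.conjValue fun c hc => h.conj_zpow_mem_windowGroup hy hyw ⟨le_rfl, hm.le⟩ hc)
    (h.homOn_leaf hf ht) fun c hc => by
      have hψ := h.map_eq_zero c hc.1 hc.2
      rw [h.conjValue_ker ht (h.mem_ker.2 ⟨hc.1, hψ⟩)]
      simp [hψ]
  exact ⟨θ, hθ, hθw hV.1, hθV⟩

theorem windowGroup_le_vertexClosure (h : IsLeafCharacter T B w x z ψ) (hw : w ∈ V) :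
    h.windowGroup V m M ≤ vertexClosure B V := by
  have hwV := le_vertexClosure B hw
  exact h.windowGroup_le (fun c hc => hwV hc.1) fun y hy _ i _ c hc =>
    mul_mem (mul_mem (hwV (h.zpow_mem i)) (le_vertexClosure B hy hc)) (hwV (h.zpow_mem _))

theorem exists_homOn_eqOn_windowGroup (hT : IsTreeAmalgam T B) (h : IsLeafCharacter T B w x z ψ)
    (hV : IsRootedSubtree T d w V) (hm : m < M) (hf : HomOn (h.windowGroup V m M) f)
    (ht : IsStableLetter (h.windowGroup V m (M - 1)) z f t) :
    ∃ θ : G → E, HomOn (vertexClosure B V) θ ∧ Set.EqOn θ f (h.windowGroup V m M) := by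
  obtain ⟨θ, hθ, hθw, hθy⟩ := h.exists_homOn_of_isStableLetter hT hV hm hf ht
  have hwV := le_vertexClosure B hV.1
  have hz (i : ℤ) : θ (z ^ i) = t ^ i := by
    simp [hθw (h.zpow_mem i), h.map_zpow, hf.map_one]
  refine ⟨θ, hθ, (hθ.mono (h.windowGroup_le_vertexClosure hV.1)).eqOn_closure hf ?_⟩
  refine Set.iUnion₂_subset ?_
  rintro (_ | ⟨y, i⟩) hp c hc
  · change θ c = f c
    simp [hθw hc.1, hc.2]
  · obtain ⟨hy, hyw, hi⟩ := some_mem_window.1 hp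
    obtain ⟨c, rfl⟩ : ∃ c', c = z ^ i * c' * z ^ (-i) := ⟨z ^ (-i) * c * z ^ i, by group⟩
    have hcy : c ∈ B y := by simpa [mul_assoc] using mem_conj_zpow_smul.1 hc
    have hcV := le_vertexClosure B hy hcy
    have hvalue : θ c = conjValue z f t i c := by
      rw [hθy y hy hyw hcy, ← ht.conjValue_eq_of_le hi.1 fun k hmk hki =>
        h.conj_zpow_mem_windowGroup hy hyw ⟨hmk, by linarith [hi.2]⟩ hcy]
    change θ (z ^ i * c * z ^ (-i)) = f (z ^ i * c * z ^ (-i))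
    rw [hθ _ (mul_mem (hwV (h.zpow_mem i)) hcV) _ (hwV (h.zpow_mem _)),
      hθ _ (hwV (h.zpow_mem i)) _ hcV, hz, hz, hvalue, conjValue]
    group

end StableLetter

/-- Magnus' rewriting step: the unfolded group is the kernel of the extension of `ψ`, and the group
itself is recovered as an HNN extension with stable letter `z`. -/
theorem exists_homOn_of_window {P : Type u} [Group P] (hT : IsTreeAmalgam T B)
    (h : IsLeafCharacter T B w x z ψ) (hV : IsRootedSubtree T d w V) (hm : m < M) {f : G → P}
    (hf : HomOn (h.windowGroup V m M) f) (hlow : TrivialKerOn (h.windowGroup V m (M - 1)) f)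
    (hhigh : TrivialKerOn (h.windowGroup V (m + 1) M) f) {s : G} (hs : s ∈ h.windowGroup V m M)
    (hfs : f s = 1) :
    ∃ (E : Type u) (_ : Group E) (θ : G → E), HomOn (vertexClosure B V) θ ∧ θ s = 1 ∧
      TrivialKerOn (vertexClosure B (V \ {w})) θ := by
  have hle : h.windowGroup V m (M - 1) ≤ h.windowGroup V m M :=
    vertexClosure_mono _ (window_mono le_rfl (by omega))
  have hshift : MulAut.conj z • h.windowGroup V m (M - 1) ≤ h.windowGroup V (m + 1) M := by
    simpa using h.conj_smul_windowGroup_le (V := V) (a := m) (b := M - 1)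
  obtain ⟨E, _, o, t, ho, ht⟩ := exists_isStableLetter hf hle
    (hshift.trans (vertexClosure_mono _ (window_mono (by omega) le_rfl))) hlow (hhigh.mono hshift)
  obtain ⟨θ, hθ, hθf⟩ := h.exists_homOn_eqOn_windowGroup hT hV hm (hf.comp o) ht
  have hθo {c : G} (hc : c ∈ h.windowGroup V m M) : θ c = o (f c) := hθf hc
  refine ⟨E, _, θ, hθ, by rw [hθo hs, hfs, o.map_one], fun y hy hθy => ?_⟩
  have hconj : vertexClosure B (V \ {w}) ≤
      MulAut.conj (z ^ (-m)) • h.windowGroup V m (M - 1) :=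
    vertexClosure_le fun y hy c hc => mem_conj_zpow_smul.2 <| by
      simpa using h.conj_zpow_mem_windowGroup hy.1 hy.2 (b := M - 1) ⟨le_rfl, by omega⟩ hc
  have hyw : z ^ m * y * z ^ (-m) ∈ h.windowGroup V m (M - 1) := by
    simpa using mem_conj_zpow_smul.1 (hconj hy)
  have hwV := le_vertexClosure B hV.1
  have hyV := vertexClosure_mono B Set.sdiff_subset hy
  have hone : o (f (z ^ m * y * z ^ (-m))) = 1 := by
    rw [← hθo (hle hyw), hθ _ (mul_mem (hwV (h.zpow_mem m)) hyV) _ (hwV (h.zpow_mem _)),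
      hθ _ (hwV (h.zpow_mem m)) _ hyV, hθy, mul_one, ← hθ _ (hwV (h.zpow_mem m)) _
      (hwV (h.zpow_mem _)), ← zpow_add, add_neg_cancel, zpow_zero, hθ.map_one]
  have htriv := hlow _ hyw (ho (hone.trans o.map_one.symm))
  rwa [zpow_neg, conj_eq_one_iff] at htriv

end IsLeafCharacter

end Magnus

section LeafFreiheitssatz

variable {ι : Type v} {G : Type u} [Group G] {T : SimpleGraph ι} {B : ι → Subgroup G}
  {w w' x : ι} {z s : G} {ψ : G → ℤ} {d : ι → ℕ} {V : Set ι} {N : ℕ} {v : ℕ → ι} {g : ℕ → G}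

/-- The conclusion of the Freiheitssatz at the vertex `w`: the vertex groups at the other vertices
of `V` generate a subgroup which embeds in the quotient by `s`. -/
def HasFreiheitssatz (B : ι → Subgroup G) (V : Set ι) (w : ι) (s : G) : Prop :=
  ∃ (P : Type u) (_ : Group P) (f : G → P), HomOn (vertexClosure B V) f ∧ f s = 1 ∧
    TrivialKerOn (vertexClosure B (V \ {w})) f

/-- The Freiheitssatz at both `w` and `w'`, realised by a single map. -/
def HasFreiheitssatzPair (B : ι → Subgroup G) (V : Set ι) (w w' : ι) (s : G) : Prop :=
  ∃ (P : Type u) (_ : Group P) (f : G → P), HomOn (vertexClosure B V) f ∧ f s = 1 ∧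
    TrivialKerOn (vertexClosure B (V \ {w})) f ∧ TrivialKerOn (vertexClosure B (V \ {w'})) f

theorem HasFreiheitssatz.pair (h : HasFreiheitssatz B V w s) (h' : HasFreiheitssatz B V w' s) :
    HasFreiheitssatzPair B V w w' s := by
  obtain ⟨P, _, f, hf, hfs, hfw⟩ := h
  obtain ⟨P', _, f', hf', hfs', hfw'⟩ := h'
  exact ⟨P × P', inferInstance, fun x => (f x, f' x),
    fun x hx y hy => Prod.ext (hf x hx y hy) (hf' x hx y hy), Prod.ext hfs hfs',
    fun x hx hfx => hfw x hx (congrArg Prod.fst hfx),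
    fun x hx hfx => hfw' x hx (congrArg Prod.snd hfx)⟩

/-- The induction hypothesis: the Freiheitssatz holds at the leaves of all closed walks of length
`N` that visit more than `c` vertices. -/
def FreiheitssatzAbove.{u', v'} (G : Type u') [Group G] (N c : ℕ) : Prop :=
  ∀ {ι : Type v'} {T : SimpleGraph ι} {B : ι → Subgroup G} {v : ℕ → ι} {g : ℕ → G},
    IsTreeAmalgam T B → IsClosedWalk T B N v g → c < (Set.range v).ncard → ∀ w ∈ Set.range v,
    ∀ x, (∀ y ∈ Set.range v, T.Adj w y → y = x) →
      HasFreiheitssatz B (Set.range v) w (rangeProd g N)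

theorem IsRootedSubtree.exists_forall_adj_eq {S : Set ι} {r y : ι} (hS : IsRootedSubtree T d r S)
    (hd : IsHeight T r d) (hy : y ∈ S) (hyr : y ≠ r) (hmax : ∀ c ∈ S, T.Adj y c → d c ≤ d y) :
    ∃ p ∈ S, T.Adj y p ∧ ∀ c ∈ S, T.Adj y c → c = p := by
  obtain ⟨p, hp, hadj, hlt⟩ := hS.2 y hy hyr
  refine ⟨p, hp, hadj, fun c hc hyc => hd.unique hyc hadj ?_ hlt⟩
  have := hmax c hc hyc
  exact (hd.adj hyc).elim (fun h => by omega) fun h => by omega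

/-- In each copy, a vertex of maximal height is a leaf. -/
theorem exists_leaf_of_level {S : Set (Option (ι × ℤ))} (hd : IsHeight T w d)
    (hS : IsRootedSubtree (unfoldGraph T w) (d ∘ unfoldProj w) none S) (hfin : S.Finite) {i : ℤ}
    (hi : ∃ y, some (y, i) ∈ S) :
    ∃ y, some (y, i) ∈ S ∧ ∃ p, ∀ c ∈ S, (unfoldGraph T w).Adj (some (y, i)) c → c = p := by
  have hfin' : {y | some (y, i) ∈ S}.Finite := hfin.preimage fun a _ b _ hab => by simpa using hab
  obtain ⟨y, hy, hmax⟩ := Set.exists_max_image _ d hfin' hi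
  obtain ⟨p, -, -, hp⟩ := hS.exists_forall_adj_eq hd.unfold hy (by simp) fun c hc hyc => by
    obtain _ | ⟨y', j⟩ := c
    · simp [unfoldProj, hd.root]
    · obtain rfl : i = j := hyc.2.2.2 _ rfl _ rfl
      exact hmax y' hc
  exact ⟨y, hy, p, hp⟩

theorem exists_subset_window {S : Set (Option (ι × ℤ))} (hfin : S.Finite)
    (hS : ∀ p, some p ∈ S → p.1 ∈ V ∧ p.1 ≠ w) {i j : ℤ} (hij : i ≠ j) (hi : some (x, i) ∈ S)
    (hj : some (x, j) ∈ S) :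
    ∃ m M, m < M ∧ S ⊆ window V w m M ∧ (∃ y, some (y, m) ∈ S) ∧ ∃ y, some (y, M) ∈ S := by
  have hfin' : (some ⁻¹' S).Finite := hfin.preimage (Option.some_injective _).injOn
  obtain ⟨⟨ym, m⟩, hm, hmin⟩ := Set.exists_min_image _ Prod.snd hfin' ⟨_, hi⟩
  obtain ⟨⟨yM, M⟩, hM, hmax⟩ := Set.exists_max_image _ Prod.snd hfin' ⟨_, hi⟩
  refine ⟨m, M, ?_, fun c hc p hp => ?_, ⟨ym, hm⟩, ⟨yM, hM⟩⟩
  · have := hmin _ hi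
    have := hmin _ hj
    have := hmax _ hi
    have := hmax _ hj
    omega
  · obtain rfl := Option.mem_def.1 hp
    exact ⟨(hS p hc).1, (hS p hc).2, hmin p hc, hmax p hc⟩

namespace IsLeafCharacter

theorem hasFreiheitssatz_of_window {S : Set (Option (ι × ℤ))} {m M : ℤ} {y y' : ι}
    (hT : IsTreeAmalgam T B) (h : IsLeafCharacter T B w x z ψ) (hd : IsHeight T w d)
    (hV : IsRootedSubtree T d w V) (hVfin : V.Finite)
    (hS : IsRootedSubtree (unfoldGraph T w) (d ∘ unfoldProj w) none S) (hm : m < M)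
    (hSw : S ⊆ window V w m M) (hs : s ∈ vertexClosure h.unfoldGroup S)
    (htop : HasFreiheitssatz h.unfoldGroup S (some (y, M)) s)
    (hbot : HasFreiheitssatz h.unfoldGroup S (some (y', m)) s) :
    HasFreiheitssatz B V w s := by
  obtain ⟨P, _, f, hf, hfs, hftop, hfbot⟩ := htop.pair hbot
  have hlow : window V w m (M - 1) ⊆ window V w m M := window_mono le_rfl (by omega)
  have hhigh : window V w (m + 1) M ⊆ window V w m M := window_mono (by omega) le_rfl
  let ℛ : Set (Set (Option (ι × ℤ))) := {window V w m (M - 1), window V w (m + 1) M}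
  have hfaith : IsFaithfulOn h.unfoldGroup ℛ S f := by
    refine ⟨hf, fun c hc => ?_, ?_⟩
    · obtain rfl | hne := eq_or_ne c (some (y, M))
      · exact hfbot.mono (le_vertexClosure _ ⟨hc, by simpa using fun _ => hm.ne'⟩)
      · exact hftop.mono (le_vertexClosure _ ⟨hc, hne⟩)
    · rintro R (rfl | rfl)
      · refine hftop.mono (vertexClosure_mono _ fun c hc => ⟨hc.2, ?_⟩)
        rintro rfl
        exact absurd (some_mem_window.1 hc.1).2.2.2 (by simp)
      · refine hfbot.mono (vertexClosure_mono _ fun c hc => ⟨hc.2, ?_⟩)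
        rintro rfl
        exact absurd (some_mem_window.1 hc.1).2.2.1 (by simp)
  obtain ⟨P', _, F, hF, hFf⟩ := (h.isTreeAmalgam_unfold hT).exists_isFaithfulOn hd.unfold
    (S := window V w m M) hV.window
    (by
      rintro R (rfl | rfl)
      · rw [Set.inter_eq_left.2 hlow]
        exact hV.window.2
      · rw [Set.inter_eq_left.2 hhigh]
        exact hV.window.2) hS hSw (finite_window hVfin).sdiff hfaith
  have hFlow := hF.inter _ (.inl rfl)
  have hFhigh := hF.inter _ (.inr rfl)
  rw [Set.inter_eq_left.2 hlow] at hFlow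
  rw [Set.inter_eq_left.2 hhigh] at hFhigh
  exact h.exists_homOn_of_window hT hV hm hF.homOn hFlow hFhigh (vertexClosure_mono _ hSw hs)
    ((hFf s hs).2 hfs)

theorem hasFreiheitssatz_of_above (hT : IsTreeAmalgam T B) (h : IsLeafCharacter T B w x z ψ)
    (hw : IsClosedWalk T B N v g) (ih : FreiheitssatzAbove.{u, v} G N (Set.range v).ncard)
    (hwv : w ∈ Set.range v) (hN : walkLevel w ψ v g N = 0) (hk : ∃ k, v k = w ∧ ψ (g k) ≠ 0) :
    HasFreiheitssatz B (Set.range v) w (rangeProd g N) := by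
  have hT' := h.isTreeAmalgam_unfold hT
  have hw' := h.isClosedWalk_lift hw hN
  obtain ⟨d, hd⟩ := exists_isHeight hT.isAcyclic w
  have hnone : none ∈ Set.range (liftVertex w ψ v g) :=
    have ⟨k, hk⟩ := hwv
    ⟨k, if_pos hk⟩
  have hS := hw'.isRootedSubtree_range hd.unfold hnone
  obtain ⟨i, j, hij, hi, hj⟩ := h.exists_mem_range_liftVertex hw hk
  obtain ⟨m, M, hm, hSw, hbot, htop⟩ := exists_subset_window (V := Set.range v) (w := w)
    hw'.finite_range (by
      rintro p ⟨k, hk⟩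
      obtain ⟨hkw, rfl⟩ := ne_of_mem_liftVertex hk
      exact ⟨⟨k, rfl⟩, hkw⟩) hij hi hj
  obtain ⟨y, hy, p, hp⟩ := exists_leaf_of_level hd hS hw'.finite_range htop
  obtain ⟨y', hy', p', hp'⟩ := exists_leaf_of_level hd hS hw'.finite_range hbot
  have hcard := h.ncard_range_lt hw hN hk
  have hprod : rangeProd (liftLetter w ψ z v g) N = rangeProd g N := by
    rw [rangeProd_liftLetter, hN, neg_zero, zpow_zero, mul_one]
  rw [← hprod]
  exact h.hasFreiheitssatz_of_window hT hd (hw.isRootedSubtree_range hd hwv) hw.finite_range hS hm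
    hSw (rangeProd_mem fun k _ => le_vertexClosure _ (Set.mem_range_self k) (hw'.mem k))
    (ih hT' hw' hcard _ hy p hp) (ih hT' hw' hcard _ hy' p' hp')

end IsLeafCharacter

end LeafFreiheitssatz

section Nonsingular

variable {ι : Type v} {G : Type u} [Group G] {T : SimpleGraph ι} {B : ι → Subgroup G}
  {H L : Subgroup G} {w x : ι} {u : G} {N : ℕ} {v : ℕ → ι} {g : ℕ → G} {X : Type u}

theorem toAdd_rangeProd {M : Type*} [AddCommMonoid M] (g : ℕ → Multiplicative M) (n : ℕ) :
    (rangeProd g n).toAdd = ∑ k ∈ Finset.range n, (g k).toAdd := by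
  induction n with
  | zero => rfl
  | succ n ih => rw [rangeProd_succ, toAdd_mul, ih, Finset.sum_range_succ]

open Classical in
/-- The relators identifying the two copies of `u`, respectively spelling the given walk, form a
nonsingular system over `H` whose unknowns are the free generators of `FreeGroup X`. -/
theorem exists_homOn_of_nonsingular (hH : RatIndicable H) (e : L →* FreeGroup X)
    (χ : Bool → FreeGroup X →* Multiplicative ℚ) (hu : u ∈ H) (hg : ∀ k, v k ≠ w → g k ∈ H)
    (hχu : ∀ j, χ j (extendByOne e u) = .ofAdd (if false = j then 1 else 0))
    (hχs : ∀ j, walkLevel w (fun b => (χ j (extendByOne e b)).toAdd) v g N =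
      if true = j then 1 else 0) :
    ∃ (P : Type u) (_ : Group P) (φ φ' : G → P), HomOn H φ ∧ TrivialKerOn H φ ∧ HomOn L φ' ∧
      φ u = φ' u ∧ rangeProd (fun k => if v k = w then φ' (g k) else φ (g k)) N = 1 := by
  let ρ : G → Monoid.Coprod H (FreeGroup X) := extendByOne Monoid.Coprod.inl
  let ρ' : G → Monoid.Coprod H (FreeGroup X) := fun b => Monoid.Coprod.inr (extendByOne e b)
  let χ' (j : Bool) := Monoid.Coprod.lift (1 : H →* Multiplicative ℚ) (χ j)
  have hρ (j : Bool) (y) (hy : y ∈ H) : χ' j (ρ y) = 1 := by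
    simp [χ', ρ, extendByOne_apply _ hy]
  have hρ' (j : Bool) (y : G) : χ' j (ρ' y) = χ j (extendByOne e y) := by simp [χ', ρ']
  let s : Bool → Monoid.Coprod H (FreeGroup X)
    | false => (ρ u)⁻¹ * ρ' u
    | true => rangeProd (fun k => if v k = w then ρ' (g k) else ρ (g k)) N
  have hs (i j : Bool) : χ' j (s i) = .ofAdd (if i = j then 1 else 0) := by
    cases i with
    | false => simp only [s, map_mul, map_inv, hρ j u hu, inv_one, one_mul, hρ', hχu]
    | true =>
      rw [← hχs, map_rangeProd]
      refine Multiplicative.toAdd.injective ?_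
      rw [toAdd_rangeProd, toAdd_ofAdd, walkLevel]
      refine Finset.sum_congr rfl fun k _ => ?_
      split_ifs with hk
      · rw [hρ']
      · rw [hρ j _ (hg k hk), toAdd_one]
  obtain ⟨P, _, f, hfs, hf⟩ :=
    exists_injective_killing_of_nonsingular hH (s := s) (e := χ') (by simp [χ']) hs
  refine ⟨P, inferInstance, fun y => f (ρ y), fun y => f (ρ' y), ?_, ?_, ?_, ?_, ?_⟩
  · exact (homOn_extendByOne _).comp f
  · intro y hy hfy
    simp only [ρ, extendByOne_apply _ hy] at hfy
    exact congrArg Subtype.val (hf (a₁ := ⟨y, hy⟩) (a₂ := 1) (by simpa using hfy))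
  · exact (homOn_extendByOne e).comp (f.comp Monoid.Coprod.inr)
  · simpa [s, inv_mul_eq_one] using hfs false
  · rw [← hfs true, map_rangeProd]
    simp only [apply_ite f]

theorem hasFreiheitssatz_of_nonsingular (hG : RatIndicable G) (hT : IsTreeAmalgam T B)
    (hw : IsClosedWalk T B N v g) (hwv : w ∈ Set.range v) (hxv : x ∈ Set.range v) (hxw : x ≠ w)
    (hwx : ∀ y, T.Adj w y → y = x) (hu : B w ⊓ B x = Subgroup.zpowers u)
    (e : B w →* FreeGroup X) (χ : Bool → FreeGroup X →* Multiplicative ℚ)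
    (hχu : ∀ j, χ j (extendByOne e u) = .ofAdd (if false = j then 1 else 0))
    (hχs : ∀ j, walkLevel w (fun b => (χ j (extendByOne e b)).toAdd) v g N =
      if true = j then 1 else 0) :
    HasFreiheitssatz B (Set.range v) w (rangeProd g N) := by
  classical
  set H := vertexClosure B (Set.range v \ {w})
  have hBH {y : ι} (hy : y ∈ Set.range v) (hyw : y ≠ w) : B y ≤ H := le_vertexClosure B ⟨hy, hyw⟩
  have huB : u ∈ B w ⊓ B x := hu ▸ Subgroup.mem_zpowers u
  obtain ⟨P, _, φ, φ', hφ, hφker, hφ', hφu, hφs⟩ := exists_homOn_of_nonsingular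
    (hG.of_injective H.subtype H.subtype_injective) e χ (hBH hxv hxw huB.2)
    (fun k hk => hBH ⟨k, rfl⟩ hk (hw.mem k)) hχu hχs
  have hag : Set.EqOn φ φ' (B w ⊓ B x : Subgroup G) := by
    have hle : Subgroup.closure {u} ≤ B w ⊓ B x := by rw [← Subgroup.zpowers_eq_closure, hu]
    rw [hu, Subgroup.zpowers_eq_closure]
    exact (hφ.mono (hle.trans (inf_le_right.trans (hBH hxv hxw)))).eqOn_closure
      (hφ'.mono (hle.trans inf_le_left)) (by simpa using hφu)
  obtain ⟨d, hd⟩ := exists_isHeight hT.isAcyclic w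
  obtain ⟨F, hF, hFw, hFV⟩ := hT.exists_homOn_of_leaf (hw.isRootedSubtree_range hd hwv)
    (fun y _ => hwx y) (fun y hy hyw => hφ.mono (hBH hy hyw)) hφ' hag
  have hmem (k : ℕ) : v k ∈ Set.range v := ⟨k, rfl⟩
  have hFφ : Set.EqOn F φ H := by
    have hFH : HomOn H F := hF.mono (vertexClosure_mono B Set.sdiff_subset)
    refine hFH.eqOn_closure hφ fun y hy => ?_
    obtain ⟨c, hc, hy⟩ := Set.mem_iUnion₂.1 hy
    exact hFV c hc.1 hc.2 hy
  refine ⟨P, inferInstance, F, hF, ?_, fun y hy hFy => hφker y hy (hFφ hy ▸ hFy)⟩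
  rw [hF.map_rangeProd fun k _ => le_vertexClosure B (hmem k) (hw.mem k), ← hφs]
  congr 1 with k
  split_ifs with hk
  · exact hFw hwv (hk ▸ hw.mem k)
  · exact hFV _ (hmem k) hk (hw.mem k)

end Nonsingular

section LinearAlgebra

theorem exists_hom_int_of_det_eq_zero (a b : ℤ × ℤ) (h : a.1 * b.2 = a.2 * b.1) :
    ∃ f : ℤ × ℤ →+ ℤ, (∃ c, f c = 1) ∧ f a = 0 ∧ f b = 0 := by
  obtain ⟨p, q, hpq, ha, hb⟩ : ∃ p q : ℤ, (p ≠ 0 ∨ q ≠ 0) ∧ p * a.1 + q * a.2 = 0 ∧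
      p * b.1 + q * b.2 = 0 := by
    by_cases ha : a = 0
    · by_cases hb : b = 0
      · exact ⟨1, 0, by simp [ha, hb]⟩
      · refine ⟨b.2, -b.1, ?_, by simp [ha], by ring⟩
        simpa [Prod.ext_iff, or_iff_not_imp_left, imp.swap] using hb
    · refine ⟨a.2, -a.1, ?_, by ring, by linarith⟩
      simpa [Prod.ext_iff, or_iff_not_imp_left, imp.swap] using ha
  obtain ⟨k, p', q', hk, hcop, rfl, rfl⟩ := Int.exists_gcd_one' (Int.gcd_pos_iff.2 hpq)
  have hk : (k : ℤ) ≠ 0 := by exact_mod_cast hk.ne'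
  obtain ⟨m, n, hmn⟩ := Int.isCoprime_iff_gcd_eq_one.2 hcop
  refine ⟨(AddMonoidHom.mulLeft p').coprod (AddMonoidHom.mulLeft q'), ⟨(m, n), ?_⟩, ?_, ?_⟩
  · simpa [mul_comm] using hmn
  · exact mul_right_cancel₀ hk (by simpa [add_mul, mul_right_comm] using ha)
  · exact mul_right_cancel₀ hk (by simpa [add_mul, mul_right_comm] using hb)

theorem exists_dual_hom_rat_of_det_ne_zero (c : Bool → ℤ × ℤ)
    (h : (c false).1 * (c true).2 ≠ (c false).2 * (c true).1) :
    ∃ f : Bool → ℤ × ℤ →+ ℚ, ∀ i j, f j (c i) = if i = j then 1 else 0 := by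
  have hD : ((c false).1 * (c true).2 - (c false).2 * (c true).1 : ℚ) ≠ 0 :=
    sub_ne_zero.2 (by exact_mod_cast h)
  set D : ℚ := (c false).1 * (c true).2 - (c false).2 * (c true).1 with hDdef
  let row (p q : ℚ) : ℤ × ℤ →+ ℚ :=
    ((AddMonoidHom.mulLeft p).comp (Int.castAddHom ℚ)).coprod
      ((AddMonoidHom.mulLeft q).comp (Int.castAddHom ℚ))
  have hrow (p q : ℚ) (a : ℤ × ℤ) : row p q a = p * a.1 + q * a.2 := rfl
  refine ⟨fun j => if j then row (-(c false).2 / D) ((c false).1 / D) else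
    row ((c true).2 / D) (-(c true).1 / D), ?_⟩
  rintro (_ | _) (_ | _) <;> simp only [Bool.false_eq_true, reduceCtorEq, ↓reduceIte, hrow] <;>
    field_simp <;> rw [hDdef] <;> ring

end LinearAlgebra

section Leaf

variable {ι : Type v} {G : Type u} [Group G] {T : SimpleGraph ι} {B : ι → Subgroup G}
  {w x : ι} {u : G} {N : ℕ} {v : ℕ → ι} {g : ℕ → G} {X : Type u}

theorem exists_surjective_hom_int_prod_int {X : Type*} {x₁ x₂ : X} (hx : x₁ ≠ x₂) :
    ∃ ε : FreeGroup X →* Multiplicative (ℤ × ℤ), Function.Surjective ε := by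
  classical
  let ε : FreeGroup X →* Multiplicative (ℤ × ℤ) :=
    FreeGroup.lift (Pi.mulSingle x₁ (.ofAdd (1, 0)) * Pi.mulSingle x₂ (.ofAdd (0, 1)))
  refine ⟨ε, fun y => ⟨.of x₁ ^ y.toAdd.1 * .of x₂ ^ y.toAdd.2, ?_⟩⟩
  simp [ε, hx, hx.symm, ← ofAdd_zsmul, ← ofAdd_add]

theorem IsTreeAmalgam.le_of_isCyclic {i j : ι} (hT : IsTreeAmalgam T B) (hij : T.Adj i j)
    (hcyc : IsCyclic (B i)) : B i ≤ B j := by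
  obtain ⟨⟨c, hc⟩, hgen⟩ := hcyc
  have hpow (b) (hb : b ∈ B i) : ∃ n : ℤ, c ^ n = b := by
    obtain ⟨n, hn⟩ := hgen ⟨b, hb⟩
    exact ⟨n, congrArg Subtype.val hn⟩
  obtain ⟨u, hu1, hu⟩ := hT.exists_inf_eq_zpowers hij
  have huB : u ∈ B i ⊓ B j := hu ▸ Subgroup.mem_zpowers u
  obtain ⟨n, rfl⟩ := hpow u huB.1
  have hcj : c ∈ B j := hT.isolated hij c hc n (by rintro rfl; simp at hu1) huB.2
  intro b hb
  obtain ⟨k, rfl⟩ := hpow b hb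
  exact zpow_mem hcj k

theorem isLeafCharacter_of_hom (hwx : ∀ y, T.Adj w y → y = x)
    (hu : B w ⊓ B x = Subgroup.zpowers u) (χ : B w →* Multiplicative ℤ)
    (hχu : (extendByOne χ u).toAdd = 0) {z : B w} (hz : (χ z).toAdd = 1) :
    IsLeafCharacter T B w x (z : G) fun b => (extendByOne χ b).toAdd where
  eq_of_adj := hwx _
  map_mul a ha b hb := by rw [homOn_extendByOne χ a ha b hb, toAdd_mul]
  map_eq_zero a ha hax := by
    have huw : u ∈ B w := (hu ▸ Subgroup.mem_zpowers u : u ∈ B w ⊓ B x).1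
    obtain ⟨n, rfl⟩ := Subgroup.mem_zpowers_iff.1 (hu ▸ ⟨ha, hax⟩ : a ∈ Subgroup.zpowers u)
    rw [extendByOne_apply χ huw] at hχu
    rw [extendByOne_apply χ ha, show (⟨u ^ n, ha⟩ : B w) = ⟨u, huw⟩ ^ n from rfl, map_zpow,
      toAdd_zpow, hχu, smul_zero]
  mem := z.2
  map_eq_one := by rw [extendByOne_apply χ z.2, hz]

theorem isCyclic_freeGroup {X : Type*} [Subsingleton X] : IsCyclic (FreeGroup X) := by
  obtain _ | ⟨⟨x⟩⟩ := isEmpty_or_nonempty X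
  · infer_instance
  · have : Unique X := ⟨⟨x⟩, fun _ => Subsingleton.elim _ _⟩
    infer_instance

theorem exists_surjective_hom_of_leaf (hT : IsTreeAmalgam T B) (hw : IsClosedWalk T B N v g)
    (hwv : w ∈ Set.range v) (hwx : ∀ y, T.Adj w y → y = x) :
    ∃ (X : Type u) (_ : B w ≃* FreeGroup X) (ε : FreeGroup X →* Multiplicative (ℤ × ℤ)),
      Function.Surjective ε := by
  obtain ⟨k, rfl⟩ := hwv
  obtain ⟨m, hm0, hm1, -, hm2⟩ := hw.exists_visit_of_leaf fun y _ => hwx y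
  have := hT.isFreeGroup (v k)
  let e := IsFreeGroup.toFreeGroup (B (v k))
  obtain hX | ⟨x₁, x₂, hx⟩ := subsingleton_or_nontrivial (IsFreeGroup.Generators (B (v k)))
  · have hcyc : IsCyclic (B (v k)) :=
      have := isCyclic_freeGroup (X := IsFreeGroup.Generators (B (v k)))
      isCyclic_of_surjective e.symm e.symm.surjective
    have hadj : T.Adj (v k) x := hm1 ▸ hm0 ▸ (hw.adj m).symm
    have hle := hT.le_of_isCyclic hadj hcyc (hm1 ▸ hw.mem (m + 1))
    exact absurd (hm0 ▸ hle) (hw.reduced m (hm0.trans hm2.symm))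
  · obtain ⟨ε, hε⟩ := exists_surjective_hom_int_prod_int hx
    exact ⟨_, e, ε, hε⟩

theorem hasFreiheitssatz_of_singular (hT : IsTreeAmalgam T B) (hw : IsClosedWalk T B N v g)
    (ih : FreiheitssatzAbove.{u, v} G N (Set.range v).ncard) (hwv : w ∈ Set.range v)
    (hwx : ∀ y, T.Adj w y → y = x) (hu : B w ⊓ B x = Subgroup.zpowers u)
    (hgen : B w ≤ Subgroup.closure (g '' (v ⁻¹' {w}) ∪ (B w ⊓ B x : Subgroup G)))
    (χ : B w →* Multiplicative ℤ) (hχ : ∃ z, (χ z).toAdd = 1) (hχu : (extendByOne χ u).toAdd = 0)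
    (hχs : walkLevel w (fun b => (extendByOne χ b).toAdd) v g N = 0) :
    HasFreiheitssatz B (Set.range v) w (rangeProd g N) := by
  obtain ⟨z, hz⟩ := hχ
  have h := isLeafCharacter_of_hom hwx hu χ hχu hz
  refine h.hasFreiheitssatz_of_above hT hw ih hwv hχs ?_
  by_contra! hk
  have hle : B w ≤ h.ker := hgen.trans <| (Subgroup.closure_le _).2 <| Set.union_subset
    (by rintro _ ⟨k, hkw, rfl⟩; exact ⟨hkw ▸ hw.mem k, hk k hkw⟩)
    fun b hb => ⟨hb.1, h.map_eq_zero b hb.1 hb.2⟩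
  exact one_ne_zero (h.map_eq_one.symm.trans (hle h.mem).2)

theorem hasFreiheitssatz_of_leaf (hG : RatIndicable G) (hT : IsTreeAmalgam T B)
    (hw : IsClosedWalk T B N v g) (ih : FreiheitssatzAbove.{u, v} G N (Set.range v).ncard)
    (hwv : w ∈ Set.range v) (hxv : x ∈ Set.range v) (hwx : ∀ y, T.Adj w y → y = x)
    (hadj : T.Adj w x)
    (hgen : B w ≤ Subgroup.closure (g '' (v ⁻¹' {w}) ∪ (B w ⊓ B x : Subgroup G))) :
    HasFreiheitssatz B (Set.range v) w (rangeProd g N) := by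
  obtain ⟨X, e, ε, hε⟩ := exists_surjective_hom_of_leaf hT hw hwv hwx
  obtain ⟨u, -, hu⟩ := hT.exists_inf_eq_zpowers hadj
  let α (b : G) : ℤ × ℤ := (ε (extendByOne e.toMonoidHom b)).toAdd
  let c : Bool → ℤ × ℤ
    | false => α u
    | true => walkLevel w α v g N
  by_cases hdet : (c false).1 * (c true).2 = (c false).2 * (c true).1
  · obtain ⟨f, ⟨a, ha⟩, hfu, hfs⟩ := exists_hom_int_of_det_eq_zero _ _ hdet
    obtain ⟨y, hy⟩ := hε (.ofAdd a)
    have hf (b : G) : (extendByOne ((f.toMultiplicative.comp ε).comp e.toMonoidHom) b).toAdd =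
        f (α b) := by rw [extendByOne_comp]; rfl
    refine hasFreiheitssatz_of_singular hT hw ih hwv hwx hu hgen
      ((f.toMultiplicative.comp ε).comp e.toMonoidHom) ⟨e.symm y, ?_⟩ ((hf u).trans hfu) ?_
    · simpa [hy] using ha
    · simpa only [hf, ← map_walkLevel] using hfs
  · obtain ⟨f, hf⟩ := exists_dual_hom_rat_of_det_ne_zero c hdet
    refine hasFreiheitssatz_of_nonsingular hG hT hw hwv hxv hadj.ne' hwx hu e.toMonoidHom
      (fun j => (f j).toMultiplicative.comp ε) (fun j => ?_) fun j => ?_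
    · exact congrArg Multiplicative.ofAdd (hf false j)
    · exact (map_walkLevel (f j) α N).symm.trans (hf true j)

end Leaf

section LeafInduction

variable {ι : Type v} {G : Type u} [Group G] {T T' : SimpleGraph ι} {B B' : ι → Subgroup G}
  {V : Set ι} {d : ι → ℕ} {r w x y p : ι} {s : G} {N : ℕ} {v : ℕ → ι} {g : ℕ → G}

theorem HasFreiheitssatzPair.symm (h : HasFreiheitssatzPair B V w y s) :
    HasFreiheitssatzPair B V y w s :=
  let ⟨P, _, f, hf, hfs, hw, hy⟩ := h
  ⟨P, _, f, hf, hfs, hy, hw⟩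

theorem HasFreiheitssatzPair.of_eq_off (h : HasFreiheitssatzPair B' V w y s)
    (hT : IsTreeAmalgam T B) (hV : IsRootedSubtree T d r V) (hy : y ∈ V) (hyw : y ≠ w)
    (hB : ∀ v, v ≠ y → B' v = B v) (hle : B' y ≤ B y) (hinf : ∀ c, T.Adj y c → B y ⊓ B c ≤ B' y)
    (hs : s ∈ vertexClosure B' V) : HasFreiheitssatzPair B V w y s := by
  obtain ⟨P, _, f, hf, hfs, hfw, hfy⟩ := h
  have hle' (v) : B' v ≤ B v := by
    obtain rfl | hv := eq_or_ne v y
    exacts [hle, (hB v hv).le]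
  have hyV : B' y ≤ vertexClosure B' (V \ {w}) := le_vertexClosure B' ⟨hy, hyw⟩
  obtain ⟨P', _, F, hF⟩ :=
    (hT.extendsPartialHoms_of_eq_off hV hy hB hle hinf).exists_isAmalgamExtension
      (vertexClosure_le fun v hv => (hle' v).trans (le_vertexClosure B hv))
      (le_vertexClosure B hy) (le_vertexClosure B' hy) hle hf (hfw.mono hyV)
  refine ⟨P', _, F, hF.homOn, (hF.eq_one_iff s hs).2 hfs, ?_, ?_⟩
  · refine (hF.trivialKerOn_sup _ (vertexClosure_mono B' Set.sdiff_subset) hyV hfw).mono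
      (vertexClosure_le fun v hv => ?_)
    obtain rfl | hvy := eq_or_ne v y
    · exact le_sup_right
    · exact (hB v hvy ▸ le_vertexClosure B' hv).trans le_sup_left
  · have hVy : vertexClosure B (V \ {y}) ≤ vertexClosure B' (V \ {y}) :=
      vertexClosure_le fun v hv => hB v hv.2 ▸ le_vertexClosure B' hv
    exact fun z hz hz1 => hfy z (hVy hz)
      ((hF.eq_one_iff z (vertexClosure_mono B' Set.sdiff_subset (hVy hz))).1 hz1)

theorem IsClosedWalk.mono (h : IsClosedWalk T B N v g) (hT : ∀ k, T'.Adj (v k) (v (k + 1)))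
    (hB : ∀ i, B' i ≤ B i) (hg : ∀ k, g k ∈ B' (v k)) : IsClosedWalk T' B' N v g :=
  ⟨h.pos, h.periodic_vertex, h.periodic_letter, hT, hg, fun k hk hgk => h.reduced k hk (hB _ hgk)⟩

/-- The part of the vertex group at a leaf `a` with neighbour `b` that the walk uses: it is
generated by the letters at `a` and the edge group. -/
def usedSubgroup (B : ι → Subgroup G) (v : ℕ → ι) (g : ℕ → G) (a b : ι) : Subgroup G :=
  Subgroup.closure (g '' (v ⁻¹' {a}) ∪ (B a ⊓ B b : Subgroup G))

theorem letter_mem_usedSubgroup (B : ι → Subgroup G) (v : ℕ → ι) (g : ℕ → G) (k : ℕ) (b : ι) :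
    g k ∈ usedSubgroup B v g (v k) b :=
  Subgroup.subset_closure (.inl ⟨k, rfl, rfl⟩)

theorem inf_le_usedSubgroup (B : ι → Subgroup G) (v : ℕ → ι) (g : ℕ → G) (a b : ι) :
    B a ⊓ B b ≤ usedSubgroup B v g a b :=
  fun _ hz => Subgroup.subset_closure (.inr hz)

theorem IsClosedWalk.usedSubgroup_le (h : IsClosedWalk T B N v g) (a b : ι) :
    usedSubgroup B v g a b ≤ B a := by
  rw [usedSubgroup, Subgroup.closure_le]
  rintro _ (⟨k, rfl, rfl⟩ | hz)
  exacts [h.mem k, hz.1]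

theorem usedSubgroup_mono {a b : ι} (hab : B a ⊓ B b ≤ B' a ⊓ B' b) :
    usedSubgroup B v g a b ≤ usedSubgroup B' v g a b :=
  Subgroup.closure_mono (Set.union_subset_union_right _ hab)

open Classical in
/-- The vertex groups after replacing the one at the leaf `a` by the part used by the walk. -/
noncomputable def shrinkLeaf (B : ι → Subgroup G) (v : ℕ → ι) (g : ℕ → G) (a b : ι) :
    ι → Subgroup G :=
  Function.update B a (usedSubgroup B v g a b)

open Classical in
theorem shrinkLeaf_self (B : ι → Subgroup G) (v : ℕ → ι) (g : ℕ → G) (a b : ι) :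
    shrinkLeaf B v g a b a = usedSubgroup B v g a b :=
  Function.update_self ..

open Classical in
theorem shrinkLeaf_of_ne (B : ι → Subgroup G) (v : ℕ → ι) (g : ℕ → G) (b : ι) {a c : ι}
    (hc : c ≠ a) : shrinkLeaf B v g a b c = B c :=
  Function.update_of_ne hc ..

theorem IsClosedWalk.shrinkLeaf_le (h : IsClosedWalk T B N v g) (a b c : ι) :
    shrinkLeaf B v g a b c ≤ B c := by
  obtain rfl | hc := eq_or_ne c a
  · exact (shrinkLeaf_self ..).trans_le (h.usedSubgroup_le c b)
  · exact (shrinkLeaf_of_ne _ _ _ _ hc).le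

theorem inf_le_shrinkLeaf {a b : ι} (hab : ∀ c, T.Adj a c → c = b) {i j : ι} (hij : T.Adj i j) :
    B i ⊓ B j ≤ shrinkLeaf B v g a b i := by
  obtain rfl | hi := eq_or_ne i a
  · rw [shrinkLeaf_self, hab j hij]
    exact inf_le_usedSubgroup ..
  · rw [shrinkLeaf_of_ne _ _ _ _ hi]
    exact inf_le_left

theorem inf_le_inf_shrinkLeaf {a b : ι} (hab : ∀ c, T.Adj a c → c = b) {i j : ι}
    (hij : T.Adj i j) : B i ⊓ B j ≤ shrinkLeaf B v g a b i ⊓ shrinkLeaf B v g a b j :=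
  le_inf (inf_le_shrinkLeaf hab hij) (inf_comm (B i) (B j) ▸ inf_le_shrinkLeaf hab hij.symm)

theorem IsTreeAmalgam.shrinkLeaf (hT : IsTreeAmalgam T B) (h : IsClosedWalk T B N v g) {a b : ι}
    (hab : ∀ c, T.Adj a c → c = b) : IsTreeAmalgam T (shrinkLeaf B v g a b) :=
  hT.mono le_rfl (h.shrinkLeaf_le a b) fun _ _ hij => inf_le_shrinkLeaf hab hij

theorem IsClosedWalk.shrinkLeaf (h : IsClosedWalk T B N v g) (a b : ι) :
    IsClosedWalk T (shrinkLeaf B v g a b) N v g := by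
  refine h.mono h.adj (h.shrinkLeaf_le a b) fun k => ?_
  obtain hk | hk := eq_or_ne (v k) a
  · rw [← hk, shrinkLeaf_self]
    exact letter_mem_usedSubgroup B v g k b
  · exact shrinkLeaf_of_ne B v g b hk ▸ h.mem k

theorem IsClosedWalk.rangeProd_mem (h : IsClosedWalk T B N v g) :
    rangeProd g N ∈ vertexClosure B (Set.range v) :=
  Freiheitssatz.rangeProd_mem fun k _ => le_vertexClosure B (Set.mem_range_self k) (h.mem k)

theorem HasFreiheitssatzPair.of_shrinkLeaf (hT : IsTreeAmalgam T B) (h : IsClosedWalk T B N v g)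
    (hy : y ∈ Set.range v) (hyw : y ≠ w) (hyp : ∀ c, T.Adj y c → c = p)
    (hs : HasFreiheitssatzPair (shrinkLeaf B v g y p) (Set.range v) w y (rangeProd g N)) :
    HasFreiheitssatzPair B (Set.range v) w y (rangeProd g N) := by
  obtain ⟨d, hd⟩ := exists_isHeight hT.isAcyclic y
  exact hs.of_eq_off hT (h.isRootedSubtree_range hd hy) hy hyw
    (fun _ hv => shrinkLeaf_of_ne _ _ _ _ hv) (h.shrinkLeaf_le y p y)
    (fun _ hc => inf_le_shrinkLeaf hyp hc) (h.shrinkLeaf y p).rangeProd_mem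

/-- Once the walk uses all of the vertex groups at both leaves, each of them embeds separately. -/
theorem hasFreiheitssatzPair_of_leaves (hG : RatIndicable G) (hT : IsTreeAmalgam T B)
    (h : IsClosedWalk T B N v g) (ih : FreiheitssatzAbove.{u, v} G N (Set.range v).ncard)
    (hw : w ∈ Set.range v) (hwx : ∀ c, T.Adj w c → c = x) (hadj : T.Adj w x)
    (hy : y ∈ Set.range v) (hyp : ∀ c, T.Adj y c → c = p) (hadj' : T.Adj y p) (hyw : y ≠ w) :
    HasFreiheitssatzPair B (Set.range v) w y (rangeProd g N) := by
  have hTw := hT.shrinkLeaf h hwx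
  have hw' := h.shrinkLeaf w x
  set Bw := shrinkLeaf B v g w x with hBw
  have hTy := hTw.shrinkLeaf hw' hyp
  have hy' := hw'.shrinkLeaf y p
  set By := Freiheitssatz.shrinkLeaf Bw v g y p with hBy
  refine (HasFreiheitssatzPair.of_shrinkLeaf hT h hw hyw.symm hwx ?_).symm
  refine (HasFreiheitssatzPair.of_shrinkLeaf hTw hw' hy hyw hyp ?_).symm
  have mem_range {a b : ι} (hab : T.Adj a b) (ha : a ∈ Set.range v) (hu : ∀ c, T.Adj a c → c = b) :
      b ∈ Set.range v := by
    obtain ⟨k, rfl⟩ := ha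
    exact ⟨k + 1, hu _ (h.adj k)⟩
  have hgenw : By w ≤ usedSubgroup By v g w x := by
    rw [hBy, shrinkLeaf_of_ne _ _ _ _ hyw.symm, hBw, shrinkLeaf_self]
    exact usedSubgroup_mono ((inf_le_inf_shrinkLeaf hwx hadj).trans
      (inf_le_inf_shrinkLeaf hyp hadj))
  have hgeny : By y ≤ usedSubgroup By v g y p := by
    rw [hBy, shrinkLeaf_self]
    exact usedSubgroup_mono (inf_le_inf_shrinkLeaf hyp hadj')
  exact (hasFreiheitssatz_of_leaf hG hTy hy' ih hw (mem_range hadj hw hwx) hwx hadj hgenw).pair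
    (hasFreiheitssatz_of_leaf hG hTy hy' ih hy (mem_range hadj' hy hyp) hyp hadj' hgeny)

theorem IsHeight.exists_leaf (hd : IsHeight T r d) (hV : IsRootedSubtree T d r V)
    (hfin : V.Finite) (hne : (V \ {r}).Nonempty) :
    ∃ y ∈ V, y ≠ r ∧ ∃ p, T.Adj y p ∧ ∀ c ∈ V, T.Adj y c → c = p := by
  obtain ⟨y, ⟨hy, hyr⟩, hmax⟩ := Set.exists_max_image _ d (hfin.sdiff (t := {r})) hne
  obtain ⟨p, -, hyp, hp⟩ := hV.exists_forall_adj_eq hd hy hyr fun c hc _ => by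
    obtain rfl | hcr := eq_or_ne c r
    · simp [hd.root]
    · exact hmax c ⟨hc, hcr⟩
  exact ⟨y, hy, hyr, p, hyp, hp⟩

theorem hasFreiheitssatz_of_isClosedWalk (hG : RatIndicable G) (hT : IsTreeAmalgam T B)
    (h : IsClosedWalk T B N v g) (ih : FreiheitssatzAbove.{u, v} G N (Set.range v).ncard)
    (hw : w ∈ Set.range v) (hwx : ∀ c ∈ Set.range v, T.Adj w c → c = x) :
    HasFreiheitssatz B (Set.range v) w (rangeProd g N) := by
  obtain ⟨d, hd⟩ := exists_isHeight hT.isAcyclic w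
  obtain ⟨k, rfl⟩ := hw
  obtain ⟨y, hy, hyw, p, hyp, hp⟩ := hd.exists_leaf (h.isRootedSubtree_range hd ⟨k, rfl⟩)
    h.finite_range ⟨v (k + 1), ⟨k + 1, rfl⟩, (h.adj k).ne'⟩
  obtain rfl := hwx _ ⟨k + 1, rfl⟩ (h.adj k)
  let T' : SimpleGraph ι := (T.induce (Set.range v)).spanningCoe
  have adj_iff {a b : ι} : T'.Adj a b ↔ T.Adj a b ∧ a ∈ Set.range v ∧ b ∈ Set.range v := by
    simp [T', and_comm, and_assoc]
  have hT' : IsTreeAmalgam T' B := hT.mono (fun _ _ hab => (adj_iff.1 hab).1) (fun _ => le_rfl)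
    fun _ _ _ => inf_le_left
  have h' : IsClosedWalk T' B N v g :=
    h.mono (fun k => adj_iff.2 ⟨h.adj k, ⟨k, rfl⟩, ⟨k + 1, rfl⟩⟩) (fun _ => le_rfl) h.mem
  have hpV : p ∈ Set.range v := by
    obtain ⟨m, rfl⟩ := hy
    exact ⟨m + 1, hp _ ⟨m + 1, rfl⟩ (h.adj m)⟩
  obtain ⟨P, _, f, hf, hfs, hfw, -⟩ := hasFreiheitssatzPair_of_leaves hG hT' h' ih ⟨k, rfl⟩
    (fun c hc => hwx c (adj_iff.1 hc).2.2 (adj_iff.1 hc).1) (h'.adj k) hy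
    (fun c hc => hp c (adj_iff.1 hc).2.2 (adj_iff.1 hc).1) (adj_iff.2 ⟨hyp, hy, hpV⟩) hyw
  exact ⟨P, _, f, hf, hfs, hfw⟩

/-- The number of vertices visited never exceeds `N`, so the induction over it descends. -/
theorem freiheitssatzAbove (hG : RatIndicable G) (N c : ℕ) : FreiheitssatzAbove.{u, v} G N c := by
  suffices ∀ n c, N ≤ c + n → FreiheitssatzAbove.{u, v} G N c from
    @this N c (by omega)
  intro n
  induction n with
  | zero =>
    intro c hc ι T B v g _ h hlt
    have := h.ncard_range_le
    omega
  | succ n ih =>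
    intro c hc ι T B v g hT h hlt w hw x hx
    exact hasFreiheitssatz_of_isClosedWalk hG hT h (ih _ (by omega)) hw hx

end LeafInduction

section MinimalWord

variable {G : Type u} [Group G] {ι : Type v} {Z : ι → Subgroup G} {C : G → Prop} {N : ℕ}
  {g : ℕ → G}

theorem isConj_rangeProd_shift (hg : g.Periodic N) (j : ℕ) :
    IsConj (rangeProd g N) (rangeProd (fun k => g (j + k)) N) := by
  refine isConj_iff.2 ⟨(rangeProd g j)⁻¹, ?_⟩
  have h : rangeProd (fun k => g (N + k)) j = rangeProd g j := by simp [Nat.add_comm N, hg _]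
  have h' := rangeProd_add g j N
  rw [add_comm, rangeProd_add, h] at h'
  rw [mul_assoc, inv_inv, h', inv_mul_cancel_left]

theorem exists_list_prod_eq_of_iSup_eq_top (hZ : ⨆ i, Z i = ⊤) (x : G) :
    ∃ l : List G, (∀ y ∈ l, ∃ i, y ∈ Z i) ∧ l.prod = x := by
  refine Subgroup.iSup_induction Z
    (C := fun x => ∃ l : List G, (∀ y ∈ l, ∃ i, y ∈ Z i) ∧ l.prod = x) (hZ ▸ Subgroup.mem_top x)
    (fun i x hx => ⟨[x], by simpa using ⟨i, hx⟩, by simp⟩) ⟨[], by simp⟩ ?_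
  rintro _ _ ⟨l, hl, rfl⟩ ⟨l', hl', rfl⟩
  exact ⟨l ++ l', fun z hz => (List.mem_append.1 hz).elim (hl z) (hl' z), List.prod_append⟩

/-- The letters `g 0, …, g (N - 1)`, extended periodically, form a shortest word over the family
`Z` whose value satisfies `C`. In the applications `C` is invariant under conjugation, so that it
holds for the values of all cyclic rotations. -/
structure IsMinimalWord (Z : ι → Subgroup G) (C : G → Prop) (N : ℕ) (g : ℕ → G) : Prop where
  two_le : 2 ≤ N
  periodic : g.Periodic N
  mem : ∀ k, ∃ i, g k ∈ Z i
  rotate : ∀ j, C (rangeProd (fun k => g (j + k)) N)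
  le_length : ∀ l : List G, (∀ x ∈ l, ∃ i, x ∈ Z i) → C l.prod → N ≤ l.length

theorem IsMinimalWord.shift (h : IsMinimalWord Z C N g) (j : ℕ) :
    IsMinimalWord Z C N fun k => g (j + k) where
  two_le := h.two_le
  periodic k := (congrArg g (add_assoc j k N).symm).trans (h.periodic _)
  mem k := h.mem (j + k)
  rotate i := by simpa only [add_assoc] using h.rotate (j + i)
  le_length := h.le_length

theorem IsMinimalWord.prop_rangeProd (h : IsMinimalWord Z C N g) : C (rangeProd g N) := by
  simpa using h.rotate 0

theorem IsMinimalWord.lt_of_mul (h : IsMinimalWord Z C N g) {i : ι} {x : G} (hx : x ∈ Z i) {j n : ℕ}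
    (hC : C (rangeProd (fun k => g (j + k)) n * x)) : N ≤ n + 1 := by
  have hl := h.le_length ((List.range n).map (fun k => g (j + k)) ++ [x]) ?_
    (by simpa [rangeProd] using hC)
  · simpa using hl
  · simp only [List.mem_append, List.mem_map, List.mem_singleton]
    rintro _ (⟨k, -, rfl⟩ | rfl)
    exacts [h.mem _, ⟨i, hx⟩]

theorem IsMinimalWord.notMem_succ (h : IsMinimalWord Z C N g) {k : ℕ} {i : ι} (hk : g k ∈ Z i) :
    g (k + 1) ∉ Z i := by
  intro hk'
  obtain ⟨n, rfl⟩ : ∃ n, N = n + 2 := ⟨N - 2, by have := h.two_le; omega⟩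
  have hC := h.rotate (k + 2)
  rw [rangeProd_succ, rangeProd_succ, mul_assoc, add_assoc, add_comm 2, h.periodic,
    show k + 2 + (n + 1) = k + 1 + (n + 2) by omega, h.periodic] at hC
  exact absurd (h.lt_of_mul ((Z i).mul_mem hk hk') hC) (by omega)

theorem IsMinimalWord.exists_mem {Z : Bool → Subgroup G} (h : IsMinimalWord Z C N g) (b : Bool) :
    ∃ k, g k ∈ Z b := by
  obtain ⟨c, hc⟩ := h.mem 0
  obtain ⟨d, hd⟩ := h.mem 1
  have hdc : d = !c := Bool.eq_not.2 fun hdc => h.notMem_succ hc (hdc ▸ hd)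
  obtain rfl | rfl : b = c ∨ b = d := hdc ▸ b.eq_or_eq_not c
  exacts [⟨0, hc⟩, ⟨1, hd⟩]

theorem exists_isMinimalWord [Nonempty ι] (hZ : ⨆ i, Z i = ⊤)
    (hconj : ∀ x y, IsConj x y → C x → C y) (hne : ∃ x, C x) (hfac : ∀ i, ∀ x ∈ Z i, ¬ C x) :
    ∃ N g, IsMinimalWord Z C N g := by
  obtain ⟨l, ⟨hl, hlC⟩, hmin⟩ := exists_minimalFor_of_wellFoundedLT
    (fun l : List G => (∀ x ∈ l, ∃ i, x ∈ Z i) ∧ C l.prod) List.length <| by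
      obtain ⟨x, hx⟩ := hne
      obtain ⟨l, hl, rfl⟩ := exists_list_prod_eq_of_iSup_eq_top hZ x
      exact ⟨l, hl, hx⟩
  have hlen : 2 ≤ l.length := by
    by_contra! hlt
    obtain _ | ⟨x, _ | ⟨y, l⟩⟩ := l
    · exact hfac (Classical.arbitrary ι) 1 (one_mem _) (by simpa using hlC)
    · obtain ⟨i, hi⟩ := hl x (by simp)
      exact hfac i x hi (by simpa using hlC)
    · simp at hlt
  have hper : (fun k => l.getD (k % l.length) 1).Periodic l.length := fun k => by simp
  refine ⟨l.length, fun k => l.getD (k % l.length) 1, hlen, hper, fun k => ?_, fun j => ?_,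
    fun l' hl' hC' => ?_⟩
  · have hk : k % l.length < l.length := Nat.mod_lt _ (by omega)
    simpa [hk] using hl _ (List.getElem_mem hk)
  · exact hconj _ _ (isConj_rangeProd_shift hper j) ((rangeProd_getD l).symm ▸ hlC)
  · exact (le_total _ _).elim id (hmin ⟨hl', hC'⟩)

end MinimalWord

section Amalgam

variable {A B G : Type} [Group A] [Group B] [Group G] {iA : A →* G} {iB : B →* G} {p : A} {q : B}

theorem _root_.IsAmalgam.symm (h : IsAmalgam iA iB p q) : IsAmalgam iB iA q p := by
  obtain ⟨hA, hB, hpq, hlift⟩ := h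
  refine ⟨hB, hA, hpq.symm, fun K _ fB fA hf => ?_⟩
  simpa only [and_comm] using hlift K fA fB hf.symm

theorem _root_.IsAmalgam.exists_lift (h : IsAmalgam iA iB p q) {K : Type} [Group K] (fA : A →* K)
    (fB : B →* K) (hf : fA p = fB q) :
    ∃ f : G →* K, (∀ a, f (iA a) = fA a) ∧ ∀ b, f (iB b) = fB b := by
  obtain ⟨f, ⟨hA, hB⟩, -⟩ := h.2.2.2 K fA fB hf
  exact ⟨f, DFunLike.congr_fun hA, DFunLike.congr_fun hB⟩

theorem _root_.IsAmalgam.hom_ext (h : IsAmalgam iA iB p q) {K : Type} [Group K] {f f' : G →* K}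
    (hA : ∀ a, f (iA a) = f' (iA a)) (hB : ∀ b, f (iB b) = f' (iB b)) : f = f' :=
  (h.2.2.2 K (f'.comp iA) (f'.comp iB) (congrArg f' h.2.2.1)).unique
    ⟨MonoidHom.ext hA, MonoidHom.ext hB⟩ ⟨rfl, rfl⟩

/-- The two factors of an amalgam, indexed so that `true` stands for the first one. -/
def factor (iA : A →* G) (iB : B →* G) (b : Bool) : Subgroup G :=
  if b then iA.range else iB.range

theorem _root_.IsAmalgam.iSup_factor (h : IsAmalgam iA iB p q) : ⨆ b, factor iA iB b = ⊤ := by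
  set L := ⨆ b, factor iA iB b
  have hA (a : A) : iA a ∈ L := Subgroup.mem_iSup_of_mem true ⟨a, rfl⟩
  have hB (b : B) : iB b ∈ L := Subgroup.mem_iSup_of_mem false ⟨b, rfl⟩
  obtain ⟨f, hfA, hfB⟩ := h.exists_lift (iA.codRestrict L hA) (iB.codRestrict L hB)
    (Subtype.ext h.2.2.1)
  have hf : L.subtype.comp f = MonoidHom.id G := h.hom_ext (by simp [hfA]) (by simp [hfB])
  refine eq_top_iff.2 fun x _ => ?_
  have hx : (f x : G) = x := DFunLike.congr_fun hf x
  exact hx ▸ (f x).2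

end Amalgam

section Wreath

variable {Γ : Type u} {X : Type v} {M : Type w} [Group Γ] [MulAction Γ X] [Group M]

theorem WreathProduct.mul_left_apply (a b : WreathProduct M X Γ) (x : X) :
    (a * b).left x = a.left x * b.left (a.right⁻¹ • x) :=
  rfl

/-- Free orbits of `a.right` carry no first cohomology: writing `x = a.right ^ n • σ` with `σ` the
chosen representative of its orbit, the coboundary of `x ↦ (a ^ n).left x` is `a.left`. -/
theorem exists_conj_inr_eq {a : WreathProduct M X Γ}
    (ha : ∀ x : X, ∀ n : ℤ, n ≠ 0 → a.right ^ n • x ≠ x) :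
    ∃ c : WreathProduct M X Γ, MulAut.conj c (SemidirectProduct.inr a.right) = a := by
  let s := MulAction.orbitRel (Subgroup.zpowers a.right) X
  let σ (x : X) : X := (Quotient.mk s x).out
  have hσ (x : X) : ∃ n : ℤ, a.right ^ n • σ x = x := by
    obtain ⟨⟨_, n, rfl⟩, hn⟩ := s.symm (Quotient.mk_out x)
    exact ⟨n, hn⟩
  have hσ_smul (x : X) : σ (a.right⁻¹ • x) = σ x :=
    congrArg Quotient.out <| Quotient.sound
      (⟨⟨a.right⁻¹, inv_mem (Subgroup.mem_zpowers _)⟩, rfl⟩ : s.r (a.right⁻¹ • x) x)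
  choose n hn using hσ
  have hn_smul (x : X) : n (a.right⁻¹ • x) = n x - 1 := by
    by_contra hne
    refine ha (σ x) (n (a.right⁻¹ • x) - (n x - 1)) (sub_ne_zero.2 hne) ?_
    have h := hn (a.right⁻¹ • x)
    rw [hσ_smul, eq_inv_smul_iff, smul_smul, ← zpow_one_add] at h
    rw [show n (a.right⁻¹ • x) - (n x - 1) = -n x + (1 + n (a.right⁻¹ • x)) by ring, zpow_add,
      mul_smul, h, zpow_neg, inv_smul_eq_iff, hn]
  refine ⟨SemidirectProduct.inl fun x => (a ^ n x).left x, ?_⟩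
  rw [MulAut.conj_apply, mul_inv_eq_iff_eq_mul]
  refine SemidirectProduct.ext (funext fun x => ?_) (by simp)
  rw [WreathProduct.mul_left_apply, WreathProduct.mul_left_apply]
  simp only [SemidirectProduct.left_inl, SemidirectProduct.left_inr, Pi.one_apply, mul_one, hn_smul]
  rw [← WreathProduct.mul_left_apply, ← zpow_one_add, add_sub_cancel]

theorem WreathProduct.exists_weighted_pullback {Γ' : Type*} {X' : Type*} [Group Γ']
    [MulAction Γ' X'] (ρ : Γ →* Γ') (π : X' → X) (m : X' → ℚ)
    (hπ : ∀ γ x, π (ρ γ • x) = γ • π x) (hm : ∀ γ x, m (ρ γ • x) = m x) :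
    ∃ F : WreathProduct (Multiplicative ℚ) X Γ →* WreathProduct (Multiplicative ℚ) X' Γ',
      ∀ a, F a = ⟨fun x => .ofAdd (m x * (a.left (π x)).toAdd), ρ a.right⟩ := by
  refine ⟨MonoidHom.mk' _ fun a b => SemidirectProduct.ext (funext fun x => ?_) ?_, fun _ => rfl⟩
  · have hπ' : π ((ρ a.right)⁻¹ • x) = a.right⁻¹ • π x := by rw [← map_inv, hπ]
    have hm' : m ((ρ a.right)⁻¹ • x) = m x := by rw [← map_inv, hm]
    simp [WreathProduct.mul_left_apply, hπ', hm', mul_add]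
  · simp

theorem RatIndicable.exists_hom_wreathProduct (hΓ : RatIndicable Γ) {p : Γ} (hp : p ≠ 1) :
    ∃ (Δ : Type u) (_ : Group Δ) (f : Γ →* WreathProduct (Multiplicative ℚ) Δ Δ) (x : Δ),
      RatIndicable Δ ∧ (f p).right = 1 ∧ (f p).left x ≠ 1 := by
  let π := QuotientGroup.mk' (indicableResidual {p})
  have hker : π.ker = indicableResidual {p} := QuotientGroup.ker_mk' _
  have hpk : p ∈ π.ker := hker.ge (subset_indicableResidual rfl)
  obtain ⟨η, hη⟩ := hΓ π.ker fun h => hp (Subgroup.mem_bot.1 (h ▸ hpk))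
  obtain ⟨f, hright, hleft⟩ := exists_hom_wreathProduct_of_ker π η
  have hΔ := ratIndicable_quotient_indicableResidual {p}
  have hfp : f p ≠ 1 := by
    refine fun h => hη (MonoidHom.ext fun y => ?_)
    have hy : f y = 1 := (hker.le y.2) _ _ f (hΔ.wreathProduct ratIndicable_multiplicative_rat)
      (by simpa using h)
    simp [← hleft, hy]
  by_contra! h
  have hfp' : (f p).right = 1 := (hright p).trans hpk
  exact hfp (SemidirectProduct.ext (funext fun x => h _ _ f x hΔ hfp') hfp')

end Wreath

section AmalgamIndicable

variable {A B G : Type} [Group A] [Group B] [Group G] {iA : A →* G} {iB : B →* G} {p : A} {q : B}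

/-- The cocycles detecting `p` and `q` are tensored with the values at `q` and `p` of each other,
so that both products agree on the amalgamated subgroup. -/
theorem _root_.IsAmalgam.notMem_indicableResidual (h : IsAmalgam iA iB p q) (hA : RatIndicable A)
    (hB : RatIndicable B) (hp : p ≠ 1) (hq : q ≠ 1) : iA p ∉ indicableResidual (∅ : Set G) := by
  obtain ⟨Γ, _, f, x, hΓ, hfp, hfx⟩ := hA.exists_hom_wreathProduct hp
  obtain ⟨Δ, _, k, y, hΔ, hkq, hky⟩ := hB.exists_hom_wreathProduct hq
  obtain ⟨FA, hFA⟩ := WreathProduct.exists_weighted_pullback (X := Γ) (X' := Γ × Δ)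
    (MonoidHom.inl Γ Δ) Prod.fst (fun x => ((k q).left x.2).toAdd)
    (fun _ _ => rfl) (fun _ _ => by simp)
  obtain ⟨FB, hFB⟩ := WreathProduct.exists_weighted_pullback (X := Δ) (X' := Γ × Δ)
    (MonoidHom.inr Γ Δ) Prod.snd (fun x => ((f p).left x.1).toAdd)
    (fun _ _ => rfl) (fun _ _ => by simp)
  obtain ⟨F, hF, -⟩ := h.exists_lift (FA.comp f) (FB.comp k) (by
    simp [hFA, hFB, hfp, hkq, mul_comm])
  intro hmem
  have hFp := hmem _ _ F ((hΓ.prod hΔ).wreathProduct ratIndicable_multiplicative_rat) (by simp)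
  have hxy := congrFun (congrArg SemidirectProduct.left ((hF p).symm.trans hFp)) (x, y)
  simp [hFA, hfx, hky] at hxy

theorem _root_.IsAmalgam.eq_one_of_mem_indicableResidual (h : IsAmalgam iA iB p q)
    (hA : RatIndicable A) (hB : RatIndicable B) (hp : p ≠ 1) (hq : q ≠ 1) {a : A}
    (ha : iA a ∈ indicableResidual (∅ : Set G)) : a = 1 := by
  let π := QuotientGroup.mk' (indicableResidual (∅ : Set G))
  have hΓ := ratIndicable_quotient_indicableResidual (∅ : Set G)
  have hπ (x : G) : π x = 1 ↔ x ∈ indicableResidual ∅ := QuotientGroup.eq_one_iff x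
  by_contra ha1
  obtain ⟨η, hη⟩ := hA (π.comp iA).ker fun hbot =>
    ha1 (Subgroup.mem_bot.1 (hbot ▸ (hπ _).2 ha : a ∈ (⊥ : Subgroup A)))
  obtain ⟨f, hright, hleft⟩ := exists_hom_wreathProduct_of_ker (π.comp iA) η
  have hu : π (iA p) ≠ 1 := (hπ _).not.2 (h.notMem_indicableResidual hA hB hp hq)
  obtain ⟨c, hc⟩ := exists_conj_inr_eq (a := f p) fun x n hn hx =>
    hΓ.zpow_ne_one hu hn (by simpa [hright] using hx)
  obtain ⟨F, hF, -⟩ := h.exists_lift f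
    ((MulAut.conj c).toMonoidHom.comp (SemidirectProduct.inr.comp (π.comp iB))) (by
      simpa [hright, h.2.2.1] using hc.symm)
  refine hη (MonoidHom.ext fun y => ?_)
  have hy : F (iA y) = 1 := (hπ _).1 y.2 _ _ F
    (hΓ.wreathProduct ratIndicable_multiplicative_rat) (by simp)
  simp [← hleft, ← hF, hy]

end AmalgamIndicable

section Stabilizer

theorem IsMinimalWord.smul_ne {G : Type u} [Group G] {ι : Type v} {X : Type w} [MulAction G X]
    {Z : ι → Subgroup G} {N : ℕ} {g : ℕ → G}
    (h : IsMinimalWord Z (fun z => z ≠ 1 ∧ ∃ x : X, z • x = x) N g) {w : G} (hw : ∀ i, w ∈ Z i)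
    {k : ℕ} (hk : k ≠ 0) (hkN : k < N) (x : X) : (rangeProd g k * w) • x ≠ x := by
  obtain ⟨k, rfl⟩ := Nat.exists_eq_succ_of_ne_zero hk
  obtain ⟨n, rfl⟩ : ∃ n, N = n + 1 + (k + 1) := ⟨N - k - 2, by omega⟩
  intro hx
  by_cases h1 : rangeProd g (k + 1) * w = 1
  · obtain ⟨i, hi⟩ := h.mem (k + 1 + n)
    have hrot := h.rotate (k + 1)
    have hper : rangeProd (fun j => g (k + 1 + (n + 1 + j))) (k + 1) = w⁻¹ := by
      rw [← eq_inv_of_mul_eq_one_left h1]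
      congr 1 with j
      rw [← h.periodic j]
      congr 1
      omega
    rw [rangeProd_add, rangeProd_succ, hper, mul_assoc] at hrot
    exact absurd (h.lt_of_mul ((Z i).mul_mem hi ((Z i).inv_mem (hw i))) hrot) (by omega)
  · obtain ⟨i, hi⟩ := h.mem k
    rw [rangeProd_succ, mul_assoc] at hx h1
    exact absurd (h.lt_of_mul (j := 0) (n := k) ((Z i).mul_mem hi (hw i))
      ⟨by simpa using h1, x, by simpa using hx⟩) (by omega)

section Cocycle

variable {G : Type u} [Group G] {X : Type v} [MulAction G X] {M : Type w} [Group M]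

theorem left_rangeProd_eq {F : G →* WreathProduct M X G} (hF : ∀ z, (F z).right = z)
    {Z : Bool → Subgroup G} (ht : ∀ z ∈ Z true, ∀ x, (F z).left x = 1) {m : X → M}
    (hf : ∀ z ∈ Z false, ∀ x, (F z).left x = m x * (m (z⁻¹ • x))⁻¹) {g : ℕ → G}
    (hg : ∀ k, ∃ b, g k ∈ Z b) {n : ℕ} (h0 : g 0 ∈ Z false) (hn : g (n + 1) ∉ Z false) {x : X}
    (hm : ∀ k, k < n + 1 → m ((rangeProd g (k + 1))⁻¹ • x) = 1) :
    (F (rangeProd g (n + 2))).left x = m x := by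
  suffices h : ∀ k ≤ n + 1, (F (rangeProd g (k + 1))).left x = m x from h (n + 1) le_rfl
  intro k hk
  induction k with
  | zero => simpa [rangeProd_succ, hf _ h0] using hm 0 (by omega)
  | succ k ih =>
    rw [rangeProd_succ, map_mul, WreathProduct.mul_left_apply, ih (by omega), hF]
    obtain ⟨_ | _, hb⟩ := hg (k + 1)
    · have hkn : k + 1 ≠ n + 1 := fun h => hn (h ▸ hb)
      rw [hf _ hb, hm k (by omega), smul_smul, ← mul_inv_rev, ← rangeProd_succ,
        hm (k + 1) (by omega), inv_one, mul_one, mul_one]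
    · rw [ht _ hb, mul_one]

theorem exists_hom_stabilizer {F : G →* WreathProduct M X G} (hF : ∀ z, (F z).right = z) (x : X) :
    ∃ φ : MulAction.stabilizer G x →* M, ∀ z, φ z = (F z).left x := by
  refine ⟨MonoidHom.mk' _ fun y z => ?_, fun _ => rfl⟩
  have hy : (y : G)⁻¹ • x = x := inv_smul_eq_iff.2 y.2.symm
  change (F (y * z)).left x = (F y).left x * (F z).left x
  rw [map_mul, WreathProduct.mul_left_apply, hF, hy]

end Cocycle

variable {A B G : Type} [Group A] [Group B] [Group G] {iA : A →* G} {iB : B →* G} {p : A} {q : B}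
  {X : Type} [MulAction G X]

theorem _root_.IsAmalgam.exists_hom_wreathProduct (h : IsAmalgam iA iB p q) {M : Type} [Group M]
    {m : X → M} (hm : ∀ x, m ((iA p)⁻¹ • x) = m x) :
    ∃ F : G →* WreathProduct M X G, (∀ z, (F z).right = z) ∧
      (∀ a x, (F (iA a)).left x = 1) ∧
      ∀ b x, (F (iB b)).left x = m x * (m ((iB b)⁻¹ • x))⁻¹ := by
  let FA : A →* WreathProduct M X G := SemidirectProduct.inr.comp iA
  let FB : B →* WreathProduct M X G :=
    (MulAut.conj (SemidirectProduct.inl m)).toMonoidHom.comp (SemidirectProduct.inr.comp iB)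
  have hleft (b : B) (x : X) : (FB b).left x = m x * (m ((iB b)⁻¹ • x))⁻¹ := by
    simp [FB, WreathProduct.mul_left_apply, ← map_inv]
  obtain ⟨F, hFA, hFB⟩ := h.exists_lift FA FB
    (SemidirectProduct.ext (funext fun x => by rw [hleft, ← h.2.2.1, hm, mul_inv_cancel]; rfl)
      (by simp [FA, FB, h.2.2.1]))
  have hF : SemidirectProduct.rightHom.comp F = MonoidHom.id G :=
    h.hom_ext (by simp [hFA, FA]) (by simp [hFB, FB])
  exact ⟨F, DFunLike.congr_fun hF, fun a x => by rw [hFA]; rfl, fun b x => by rw [hFB, hleft]⟩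

theorem _root_.IsAmalgam.exists_isMinimalWord_fixed (h : IsAmalgam iA iB p q)
    (hfree : ∀ b, ∀ z ∈ factor iA iB b, ∀ x : X, z • x = x → z = 1)
    (hfix : ∃ z : G, z ≠ 1 ∧ ∃ x : X, z • x = x) :
    ∃ n g, IsMinimalWord (factor iA iB) (fun z => z ≠ 1 ∧ ∃ x : X, z • x = x) (n + 2) g ∧
      g 0 ∈ factor iA iB false := by
  have hconj (y z : G) (hyz : IsConj y z) : (y ≠ 1 ∧ ∃ x : X, y • x = x) →
      z ≠ 1 ∧ ∃ x : X, z • x = x := by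
    rintro ⟨hy, x, hx⟩
    obtain ⟨c, rfl⟩ := isConj_iff.1 hyz
    exact ⟨fun h1 => hy (by simpa using h1), c • x, by simp [mul_smul, hx]⟩
  obtain ⟨N, g, hg⟩ := exists_isMinimalWord h.iSup_factor hconj hfix
    fun b z hz ⟨hz1, x, hx⟩ => hz1 (hfree b z hz x hx)
  obtain ⟨n, rfl⟩ : ∃ n, N = n + 2 := ⟨N - 2, by have := hg.two_le; omega⟩
  obtain ⟨k, hk⟩ := hg.exists_mem false
  exact ⟨n, _, hg.shift k, hk⟩

theorem _root_.IsAmalgam.mem_factor_of_mem_zpowers (h : IsAmalgam iA iB p q) {x : G}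
    (hx : x ∈ Subgroup.zpowers (iA p)) (b : Bool) : x ∈ factor iA iB b := by
  refine Subgroup.zpowers_le.2 ?_ hx
  cases b
  exacts [⟨q, h.2.2.1.symm⟩, ⟨p, rfl⟩]

open Classical in
/-- A shortest word with a fixed point `x` visits the `zpowers (iA p)`-orbit of `x` only at its
ends, so the cocycle given by the indicator of that orbit does not vanish on it. -/
theorem _root_.IsAmalgam.exists_hom_stabilizer_ne_one (h : IsAmalgam iA iB p q)
    (hfree : ∀ b, ∀ z ∈ factor iA iB b, ∀ x : X, z • x = x → z = 1)
    (hfix : ∃ z : G, z ≠ 1 ∧ ∃ x : X, z • x = x) :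
    ∃ (x : X) (φ : MulAction.stabilizer G x →* Multiplicative ℚ), φ ≠ 1 := by
  obtain ⟨n, g, hg, hg0⟩ := h.exists_isMinimalWord_fixed hfree hfix
  obtain ⟨-, x, hx⟩ := hg.prop_rangeProd
  have hlast : g (n + 1) ∉ factor iA iB false := fun hn =>
    hg.notMem_succ hn ((hg.periodic.eq.symm ▸ hg0 :))
  let U := Subgroup.zpowers (iA p)
  let m : X → Multiplicative ℚ := (MulAction.orbit U x).mulIndicator fun _ => .ofAdd 1
  have hmx : m x = .ofAdd 1 := Set.mulIndicator_of_mem (MulAction.mem_orbit_self x) _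
  have hmg (k : ℕ) (hk : k < n + 1) : m ((rangeProd g (k + 1))⁻¹ • x) = 1 := by
    refine Set.mulIndicator_of_notMem ?_ _
    rintro ⟨w, hw⟩
    refine hg.smul_ne (h.mem_factor_of_mem_zpowers w.2) k.succ_ne_zero (Nat.succ_lt_succ hk) x ?_
    rw [mul_smul]
    exact eq_inv_smul_iff.1 hw
  have hmU (y : X) : m ((iA p)⁻¹ • y) = m y := by
    let u : U := ⟨(iA p)⁻¹, inv_mem (Subgroup.mem_zpowers _)⟩
    have hy : u • y ∈ MulAction.orbit U x ↔ y ∈ MulAction.orbit U x :=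
      by rw [← MulAction.orbit_eq_iff, MulAction.orbit_smul, MulAction.orbit_eq_iff]
    exact if_congr hy rfl rfl
  obtain ⟨F, hF, hFA, hFB⟩ := h.exists_hom_wreathProduct hmU
  obtain ⟨φ, hφ⟩ := exists_hom_stabilizer hF x
  refine ⟨x, φ, fun h1 => ?_⟩
  have hφm := (hφ ⟨_, hx⟩).symm.trans (DFunLike.congr_fun h1 _)
  rw [left_rangeProd_eq (Z := factor iA iB) hF (by rintro _ ⟨a, rfl⟩; exact hFA a)
    (by rintro _ ⟨b, rfl⟩; exact hFB b) hg.mem hg0 hlast hmg, hmx] at hφm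
  exact one_ne_zero (α := ℚ) hφm

theorem RatIndicable.of_isAmalgam (h : IsAmalgam iA iB p q) (hA : RatIndicable A)
    (hB : RatIndicable B) (hp : p ≠ 1) (hq : q ≠ 1) : RatIndicable G := by
  intro S hS
  by_cases hSD : S ≤ indicableResidual ∅
  · have hfree (b : Bool) (z : G) (hz : z ∈ factor iA iB b) (x : G ⧸ S) (hx : z • x = x) :
        z = 1 := by
      obtain ⟨c, rfl⟩ := QuotientGroup.mk_surjective x
      have hzD : z ∈ indicableResidual (∅ : Set G) := by
        have hc : c⁻¹ * z * c ∈ S := by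
          simpa [mul_assoc] using S.inv_mem (QuotientGroup.eq.1 hx)
        simpa [mul_assoc] using Subgroup.Normal.conj_mem inferInstance _ (hSD hc) c
      obtain _ | _ := b <;> obtain ⟨z, rfl⟩ := hz
      · rw [h.symm.eq_one_of_mem_indicableResidual hB hA hq hp hzD, map_one]
      · rw [h.eq_one_of_mem_indicableResidual hA hB hp hq hzD, map_one]
    obtain ⟨s, hs, hs1⟩ := S.bot_or_exists_ne_one.resolve_left hS
    obtain ⟨x, φ, hφ⟩ := h.exists_hom_stabilizer_ne_one hfree
      ⟨s, hs1, QuotientGroup.mk 1, QuotientGroup.eq.2 (by simpa using S.inv_mem hs)⟩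
    obtain ⟨c, rfl⟩ := QuotientGroup.mk_surjective x
    let e : S ≃* MulAction.stabilizer G (c : G ⧸ S) :=
      (MulEquiv.subgroupCongr (MulAction.stabilizer_quotient S).symm).trans
        (MulAction.stabilizerEquivStabilizer (g := c) (by simp))
    exact ⟨φ.comp e.toMonoidHom, fun h1 => hφ ((MonoidHom.cancel_right e.surjective).1 h1)⟩
  · obtain ⟨s, hs, hsD⟩ := SetLike.not_le_iff_exists.1 hSD
    exact (ratIndicable_quotient_indicableResidual (∅ : Set G)).exists_hom_ne_one
      (f := (QuotientGroup.mk' _).comp S.subtype) fun h1 =>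
        hsD ((QuotientGroup.eq_one_iff s).1 (DFunLike.congr_fun h1 ⟨s, hs⟩))

end Stabilizer

section MaximalCyclic

/-- Otherwise `x` and `y` would generate a free group of rank at least two, although their images
in a quotient `ℤ × ℤ` of it are proportional. -/
theorem isCyclic_closure_pair_of_zpow_eq_zpow {F : Type u} [Group F] [IsFreeGroup F] {x y : F}
    {m n : ℤ} (hn : n ≠ 0) (h : x ^ n = y ^ m) : IsCyclic (Subgroup.closure {x, y}) := by
  let e := IsFreeGroup.toFreeGroup (Subgroup.closure {x, y})
  by_cases hX : Subsingleton (IsFreeGroup.Generators (Subgroup.closure {x, y}))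
  · exact e.isCyclic.2 isCyclic_freeGroup
  obtain ⟨i, j, hij⟩ := not_subsingleton_iff_nontrivial.1 hX
  obtain ⟨ε, hε⟩ := exists_surjective_hom_int_prod_int hij
  let a : Subgroup.closure {x, y} := ⟨x, Subgroup.subset_closure (by simp)⟩
  let b : Subgroup.closure {x, y} := ⟨y, Subgroup.subset_closure (by simp)⟩
  have hab : n • (ε (e a)).toAdd = m • (ε (e b)).toAdd := by
    rw [← toAdd_zpow, ← toAdd_zpow, ← map_zpow, ← map_zpow, ← map_zpow, ← map_zpow]
    exact congrArg (fun z => (ε (e z)).toAdd) (Subtype.ext h)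
  have hdet : (ε (e a)).toAdd.1 * (ε (e b)).toAdd.2 = (ε (e a)).toAdd.2 * (ε (e b)).toAdd.1 := by
    have h₁ : n * (ε (e a)).toAdd.1 = m * (ε (e b)).toAdd.1 := congrArg Prod.fst hab
    have h₂ : n * (ε (e a)).toAdd.2 = m * (ε (e b)).toAdd.2 := congrArg Prod.snd hab
    refine mul_left_cancel₀ hn ?_
    linear_combination (ε (e b)).toAdd.2 * h₁ - (ε (e b)).toAdd.1 * h₂
  obtain ⟨f, ⟨c, hc⟩, hfa, hfb⟩ := exists_hom_int_of_det_eq_zero _ _ hdet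
  have hφ : (f.toMultiplicative.comp ε).comp e.toMonoidHom = 1 := by
    refine MonoidHom.eq_of_eqOn_dense Subgroup.closure_closure_coe_preimage ?_
    rintro z (hz | hz)
    · obtain rfl : z = a := Subtype.ext hz
      exact hfa
    · obtain rfl : z = b := Subtype.ext hz
      exact hfb
  obtain ⟨z, hz⟩ := (hε.comp e.surjective) (.ofAdd c)
  have hfc : f c = 0 := by
    have hfz : f (ε (e z)).toAdd = 0 := DFunLike.congr_fun hφ z
    rwa [show ε (e z) = .ofAdd c from hz] at hfz
  exact absurd (hfc.symm.trans hc) zero_ne_one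

theorem _root_.IsMaximalCyclic.mem_of_zpow_mem {H : Type} [Group H] [IsFreeGroup H] {p : H}
    (hp : IsMaximalCyclic (Subgroup.zpowers p)) {x : H} {n : ℤ} (hn : n ≠ 0)
    (hx : x ^ n ∈ Subgroup.zpowers p) : x ∈ Subgroup.zpowers p := by
  obtain ⟨m, hm⟩ := hx
  obtain ⟨c, hc⟩ := (Subgroup.isCyclic_iff_exists_zpowers_eq_top _).1
    (isCyclic_closure_pair_of_zpow_eq_zpow hn hm.symm)
  have hxp : Subgroup.closure {x, p} ≤ Subgroup.zpowers p := by
    rw [← hc]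
    refine (hp.2.2 c (Subgroup.zpowers_le.2 ?_)).ge
    exact hc ▸ Subgroup.subset_closure (by simp)
  exact hxp (Subgroup.subset_closure (by simp))

theorem _root_.IsMaximalCyclic.not_isOfFinOrder {H : Type} [Group H] {p : H}
    (hp : IsMaximalCyclic (Subgroup.zpowers p)) : ¬ IsOfFinOrder p :=
  infinite_zpowers.1 hp.2.1

end MaximalCyclic

section NormalForms

variable {A B G : Type} [Group A] [Group B] [Group G] {iA : A →* G} {iB : B →* G} {p : A} {q : B}

theorem _root_.IsAmalgam.exists_hom_hasNormalForms (h : IsAmalgam iA iB p q)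
    (hp : ¬ IsOfFinOrder p) (hq : ¬ IsOfFinOrder q) :
    ∃ (P : Type) (_ : Group P) (i : A →* P) (j : B →* P) (F : G →* P), (∀ a, F (iA a) = i a) ∧
      (∀ b, F (iB b) = j b) ∧ (∀ a b, i a = j b → ∃ n : ℤ, p ^ n = a ∧ q ^ n = b) ∧
      HasNormalForms (factor i j) := by
  obtain ⟨P, _, i, j, -, -, hij, hpq, hnf⟩ := exists_pushout
    (f := zpowersHom A p) (g := zpowersHom B q)
    (injective_zpow_iff_not_isOfFinOrder.2 hp) (injective_zpow_iff_not_isOfFinOrder.2 hq)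
  obtain ⟨F, hFA, hFB⟩ := h.exists_lift i j (by simpa using hij (.ofAdd 1))
  exact ⟨P, inferInstance, i, j, F, hFA, hFB, hpq, hnf⟩

theorem _root_.IsAmalgam.exists_zpow_eq (h : IsAmalgam iA iB p q) (hp : ¬ IsOfFinOrder p)
    (hq : ¬ IsOfFinOrder q) {a : A} {b : B} (hab : iA a = iB b) :
    ∃ n : ℤ, p ^ n = a ∧ q ^ n = b := by
  obtain ⟨P, _, i, j, F, hFA, hFB, hpq, -⟩ := h.exists_hom_hasNormalForms hp hq
  exact hpq a b (by rw [← hFA, hab, hFB])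

theorem _root_.IsAmalgam.hasNormalForms (h : IsAmalgam iA iB p q) (hp : ¬ IsOfFinOrder p)
    (hq : ¬ IsOfFinOrder q) : HasNormalForms (factor iA iB) := by
  obtain ⟨P, _, i, j, F, hFA, hFB, hpq, hnf⟩ := h.exists_hom_hasNormalForms hp hq
  have hU (n : ℤ) : iA (p ^ n) = iB (q ^ n) := by rw [map_zpow, map_zpow, h.2.2.1]
  have hmem : ∀ b, ∀ x ∈ factor iA iB b, F x ∈ factor i j b := by
    rintro (_ | _) _ ⟨x, rfl⟩
    exacts [⟨x, (hFB x).symm⟩, ⟨x, (hFA x).symm⟩]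
  have hnot : ∀ b, ∀ x ∈ factor iA iB b, F x ∈ factor i j (!b) → x ∈ factor iA iB !b := by
    rintro (_ | _) _ ⟨x, rfl⟩ ⟨y, hy⟩
    · obtain ⟨n, -, rfl⟩ := hpq y x (hy.trans (hFB x))
      exact ⟨p ^ n, hU n⟩
    · obtain ⟨n, rfl, -⟩ := hpq x y ((hy.trans (hFA x)).symm)
      exact ⟨q ^ n, (hU n).symm⟩
  intro b l hl hne h1
  refine hnf b (l.map F) (hl.map hmem hnot) (by simpa using hne) ?_
  rw [← map_list_prod, h1, map_one]

theorem _root_.IsAmalgam.factor_inf (h : IsAmalgam iA iB p q) (hp : ¬ IsOfFinOrder p)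
    (hq : ¬ IsOfFinOrder q) : factor iA iB true ⊓ factor iA iB false = Subgroup.zpowers (iA p) := by
  refine le_antisymm ?_ fun x hx => ⟨h.mem_factor_of_mem_zpowers hx _,
    h.mem_factor_of_mem_zpowers hx _⟩
  rintro _ ⟨⟨a, rfl⟩, ⟨b, hb⟩⟩
  obtain ⟨n, rfl, -⟩ := h.exists_zpow_eq hp hq hb.symm
  exact ⟨n, (map_zpow iA p n).symm⟩

theorem _root_.IsAmalgam.mem_factor_not_of_zpow_mem [IsFreeGroup A] [IsFreeGroup B]
    (h : IsAmalgam iA iB p q) (hp : IsMaximalCyclic (Subgroup.zpowers p))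
    (hq : IsMaximalCyclic (Subgroup.zpowers q)) {b : Bool} {x : G} (hx : x ∈ factor iA iB b) {n : ℤ}
    (hn : n ≠ 0) (hxn : x ^ n ∈ factor iA iB (!b)) : x ∈ factor iA iB (!b) := by
  have hzpow {a : A} {b : B} (hab : iA a = iB b) :=
    h.exists_zpow_eq hp.not_isOfFinOrder hq.not_isOfFinOrder hab
  refine h.mem_factor_of_mem_zpowers ?_ _
  obtain _ | _ := b <;> obtain ⟨x, rfl⟩ := hx <;> obtain ⟨y, hy⟩ := hxn
  · obtain ⟨m, -, hm⟩ := hzpow (hy.trans (map_zpow iB x n).symm)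
    obtain ⟨k, rfl⟩ := hq.mem_of_zpow_mem hn ⟨m, hm⟩
    exact ⟨k, by simp [h.2.2.1]⟩
  · obtain ⟨m, hm, -⟩ := hzpow ((map_zpow iA x n).trans hy.symm)
    obtain ⟨k, rfl⟩ := hp.mem_of_zpow_mem hn ⟨m, hm⟩
    exact ⟨k, by simp⟩

end NormalForms

section TwoVertices

variable {G : Type u} [Group G] {Z : Bool → Subgroup G} {v : ℕ → Bool} {g : ℕ → G}

theorem HasNormalForms.prod_notMem (h : HasNormalForms Z) {b : Bool} {l : List G}
    (hl : IsAlternating Z (!b) l) (hne : l ≠ []) : l.prod ∉ Z b := by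
  intro hx
  by_cases hx' : l.prod ∈ Z !b
  · obtain _ | ⟨y, l⟩ := l
    · exact hne rfl
    have hy : (y :: l).prod⁻¹ * y ∉ Z !!b := by
      rw [b.not_not, (Z b).mul_mem_cancel_left (inv_mem hx)]
      simpa using hl.2.1
    refine h (!b) (((y :: l).prod⁻¹ * y) :: l) ⟨mul_mem (inv_mem hx') hl.1, hy, hl.2.2⟩ (by simp) ?_
    rw [List.prod_cons, mul_assoc, ← List.prod_cons, inv_mul_cancel]
  · refine h b (l.prod⁻¹ :: l) ⟨inv_mem hx, by rwa [inv_mem_iff], hl⟩ (by simp) ?_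
    rw [List.prod_cons, inv_mul_cancel]

theorem isAlternating_map_range {n : ℕ}
    (h : ∀ k < n, g k ∈ Z (v k) ∧ g k ∉ Z (!v k) ∧ v (k + 1) = !v k) :
    IsAlternating Z (v 0) ((List.range n).map g) := by
  induction n generalizing v g with
  | zero => trivial
  | succ n ih =>
    obtain ⟨h1, h2, h3⟩ := h 0 n.succ_pos
    rw [List.range_succ_eq_map, List.map_cons, List.map_map]
    exact ⟨h1, h2, h3 ▸ ih (v := fun k => v (k + 1)) fun k hk => h (k + 1) (by omega)⟩

theorem HasNormalForms.rangeProd_notMem (h : HasNormalForms Z) {n : ℕ} (hn : 1 ≤ n)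
    (hv : ∀ k < n, v (k + 1) = !v k) (hg : ∀ k < n, g k ∈ Z (v k))
    (hred : ∀ k, k + 2 ≤ n → g (k + 1) ∉ Z (v k)) (hclosed : v n = v 0) :
    rangeProd g n ∉ Z (v 0) := by
  obtain _ | _ | n := n
  · omega
  · simp [hv] at hclosed
  have halt := isAlternating_map_range (Z := Z) (v := fun k => v (k + 1)) (g := fun k => g (k + 1))
    (n := n + 1) fun k hk => ⟨hg _ (by omega), by
      simpa [hv k (by omega)] using hred k (by omega), hv _ (by omega)⟩
  have hprod : rangeProd g (n + 2) = g 0 * ((List.range (n + 1)).map fun k => g (k + 1)).prod := by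
    rw [rangeProd, List.range_succ_eq_map, List.map_cons, List.prod_cons, List.map_map]
    rfl
  rw [hprod, (Z (v 0)).mul_mem_cancel_left (hg 0 (by omega))]
  exact h.prod_notMem (hv 0 (by omega) ▸ halt) (by simp)

theorem isTreeAmalgam_top_bool (hnf : HasNormalForms Z) (hfree : ∀ b, IsFreeGroup (Z b)) {u : G}
    (hu : u ≠ 1) (hinf : Z true ⊓ Z false = Subgroup.zpowers u)
    (hisol : ∀ b, ∀ x ∈ Z b, ∀ n : ℤ, n ≠ 0 → x ^ n ∈ Z (!b) → x ∈ Z !b) :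
    IsTreeAmalgam ⊤ Z where
  isAcyclic := .of_card_le_two (by simp)
  prod_notMem n v g hn hv hg hred hclosed := by
    have hv' (k : ℕ) (hk : k < n) : v (k + 1) = !v k := Bool.eq_not.2 (hv k hk).symm
    exact hnf.rangeProd_notMem hn hv' hg (fun k hk => hred k hk (by
      rw [hv' (k + 1) (by omega), hv' k (by omega), Bool.not_not])) hclosed
  isFreeGroup := hfree
  exists_inf_eq_zpowers {i j} hij := by
    obtain rfl := Bool.eq_not.2 (Ne.symm hij)
    exact ⟨u, hu, by cases i <;> simpa [inf_comm] using hinf⟩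
  isolated {i j} hij := by
    obtain rfl := Bool.eq_not.2 (Ne.symm hij)
    exact hisol i

end TwoVertices

section Freiheitssatz

theorem IsMinimalWord.exists_isClosedWalk {G : Type u} [Group G] {Z : Bool → Subgroup G}
    {C : G → Prop} {N : ℕ} {g : ℕ → G} (h : IsMinimalWord Z C N g) :
    ∃ v : ℕ → Bool, IsClosedWalk ⊤ Z N v g ∧ Set.range v = Set.univ := by
  choose v hv using h.mem
  have hadj {k : ℕ} {b : Bool} (hb : g k ∈ Z b) : v (k + 1) = !b :=
    Bool.eq_not.2 fun hvk => h.notMem_succ hb (hvk ▸ hv (k + 1))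
  have huniq {k : ℕ} {b : Bool} (hb : g k ∈ Z b) : v k = b :=
    Bool.not_inj ((hadj (hv k)).symm.trans (hadj hb))
  refine ⟨v, ⟨by have := h.two_le; omega, fun k => huniq (h.periodic k ▸ hv k), h.periodic,
    fun k => ?_, hv, fun k _ => h.notMem_succ (hv k)⟩, Set.eq_univ_of_forall fun b => ?_⟩
  · simp [hadj (hv k)]
  · obtain ⟨k, hk⟩ := h.exists_mem b
    exact ⟨k, huniq hk⟩

variable {A B G : Type} [Group A] [Group B] [Group G] {iA : A →* G} {iB : B →* G} {p : A} {q : B}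

theorem _root_.IsAmalgam.isTreeAmalgam [IsFreeGroup A] [IsFreeGroup B] (h : IsAmalgam iA iB p q)
    (hp : IsMaximalCyclic (Subgroup.zpowers p)) (hq : IsMaximalCyclic (Subgroup.zpowers q)) :
    IsTreeAmalgam ⊤ (factor iA iB) := by
  have hp' := hp.not_isOfFinOrder
  have hq' := hq.not_isOfFinOrder
  refine isTreeAmalgam_top_bool (h.hasNormalForms hp' hq') ?_ (u := iA p) ?_
    (h.factor_inf hp' hq') fun b x hx n hn => h.mem_factor_not_of_zpow_mem hp hq hx hn
  · rintro (_ | _)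
    exacts [.ofMulEquiv (MonoidHom.ofInjective h.2.1), .ofMulEquiv (MonoidHom.ofInjective h.1)]
  · exact fun h1 => hp' ((map_eq_one_iff iA h.1).1 h1 ▸ IsOfFinOrder.one)

theorem _root_.IsAmalgam.eq_one_of_mem_normalClosure [IsFreeGroup A] [IsFreeGroup B]
    (h : IsAmalgam iA iB p q) (hp : IsMaximalCyclic (Subgroup.zpowers p))
    (hq : IsMaximalCyclic (Subgroup.zpowers q)) {r : G}
    (hr : ∀ b, ∀ z ∈ factor iA iB b, ¬ IsConj z r) {b : Bool} {x : G} (hx : x ∈ factor iA iB b)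
    (hxr : x ∈ Subgroup.normalClosure {r}) : x = 1 := by
  have hG : RatIndicable G := .of_isAmalgam h ratIndicable_of_isFreeGroup
    ratIndicable_of_isFreeGroup (fun hp1 => hp.not_isOfFinOrder (hp1 ▸ IsOfFinOrder.one))
    fun hq1 => hq.not_isOfFinOrder (hq1 ▸ IsOfFinOrder.one)
  obtain ⟨N, g, hg⟩ := exists_isMinimalWord h.iSup_factor (fun y z hyz => hyz.symm.trans)
    ⟨r, IsConj.refl r⟩ hr
  obtain ⟨v, hv, hrange⟩ := hg.exists_isClosedWalk
  obtain ⟨P, _, f, hf, hfg, hker⟩ := freiheitssatzAbove hG N 0 (h.isTreeAmalgam hp hq) hv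
    (by simp [hrange]) (!b) (hrange ▸ Set.mem_univ _) b
    fun y _ hy => by simpa using Bool.eq_not.2 (Ne.symm hy)
  have hsub : ⊤ ≤ vertexClosure (factor iA iB) (Set.range v) :=
    h.iSup_factor ▸ iSup_le fun b => le_vertexClosure _ (hrange ▸ Set.mem_univ b)
  let F : G →* P := (hf.mono hsub).toMonoidHom.comp Subgroup.topEquiv.symm.toMonoidHom
  have hFr : F r = 1 := by
    have hgr := F.map_isConj hg.prop_rangeProd
    rwa [show F (rangeProd g N) = 1 from hfg, isConj_one_right] at hgr
  have hle : Subgroup.normalClosure {r} ≤ F.ker :=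
    Subgroup.normalClosure_le_normal (Set.singleton_subset_iff.2 hFr)
  have hb : b ∈ Set.range v \ {!b} := ⟨hrange ▸ Set.mem_univ b, by simp⟩
  exact hker x (le_vertexClosure _ hb hx) (hle hxr)

end Freiheitssatz

end Freiheitssatz

/-- **Main Theorem (Freiheitssatz for amalgams of free groups over maximal cyclic
subgroups).** If `r ∈ G = A ∗_U B` is not conjugate to an element of `A` nor of `B`,
then `A` and `B` embed canonically into `G/⟨⟨r⟩⟩`. -/
theorem freiheitssatz_amalgam_free_maximal_cyclic {α β G : Type} [Group G]
    (iA : FreeGroup α →* G) (iB : FreeGroup β →* G)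
    (p : FreeGroup α) (q : FreeGroup β)
    (hG : IsAmalgam iA iB p q)
    (hp : IsMaximalCyclic (Subgroup.zpowers p))
    (hq : IsMaximalCyclic (Subgroup.zpowers q))
    (r : G)
    (hrA : ¬ ∃ a : FreeGroup α, IsConj (iA a) r)
    (hrB : ¬ ∃ b : FreeGroup β, IsConj (iB b) r) :
    Function.Injective ((QuotientGroup.mk' (Subgroup.normalClosure {r})).comp iA) ∧
    Function.Injective ((QuotientGroup.mk' (Subgroup.normalClosure {r})).comp iB) := by
  have hr : ∀ b, ∀ z ∈ Freiheitssatz.factor iA iB b, ¬ IsConj z r := by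
    rintro (_ | _) _ ⟨y, rfl⟩ hy
    exacts [hrB ⟨y, hy⟩, hrA ⟨y, hy⟩]
  simp only [injective_iff_map_eq_one, MonoidHom.comp_apply, QuotientGroup.mk'_apply,
    QuotientGroup.eq_one_iff]
  exact ⟨fun a ha => (map_eq_one_iff iA hG.1).1
      (hG.eq_one_of_mem_normalClosure hp hq hr (b := true) ⟨a, rfl⟩ ha),
    fun b hb => (map_eq_one_iff iB hG.2.1).1
      (hG.eq_one_of_mem_normalClosure hp hq hr (b := false) ⟨b, rfl⟩ hb)⟩
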